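/- Let q = p^f be a power of a prime p, let 2m ≥ 4 and suppose GSp_{2m}(q) is not solvable. Let π be a set of primes with 2 ∈ π, 3 ∈ π and p ∉ π, and let H be a solvable Hall π-subgroup of GSp_{2m}(q). Set G = H·Sp_{2m}(q). Then there exist x, y, z ∈ G such that H ∩ H^x ∩ H^y ∩ H^z is contained in the center Z(GSp_{2m}(q)), i.e. consists of scalar matrices. -/

import Mathlib

open Matrix Pointwise

/-- `H^x = x⁻¹ H x`. -/
def conjBy {G : Type*} [Group G] (H : Subgroup G) (x : G) : Subgroup G :=
  Subgroup.map ((MulAut.conj x⁻¹).toMonoidHom) H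

/-- Hall π-subgroup of the whole group. -/
def IsHallSubgroup {G : Type*} [Group G] (π : Set ℕ) (H : Subgroup G) : Prop :=
  (∀ r : ℕ, r.Prime → r ∣ Nat.card H → r ∈ π) ∧ ∀ r ∈ π, ¬ r ∣ H.index

/-- Hall π-subgroup of the subgroup `K`. -/
def IsHallSubgroupIn {G : Type*} [Group G] (π : Set ℕ) (K H : Subgroup G) : Prop :=
  H ≤ K ∧ (∀ r : ℕ, r.Prime → r ∣ Nat.card H → r ∈ π) ∧ ∀ r ∈ π, ¬ r ∣ H.relIndex K

/-- The subgroup `SL_n` of `GL_n`. -/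
def SLsub (n : ℕ) (F : Type*) [Field F] : Subgroup (GL (Fin n) F) where
  carrier := {g | Matrix.det (g : Matrix (Fin n) (Fin n) F) = 1}
  one_mem' := by simp
  mul_mem' := by
    intro a b ha hb
    simp only [Set.mem_setOf_eq, Units.val_mul, Matrix.det_mul] at *
    rw [ha, hb, one_mul]
  inv_mem' := by
    intro g hg
    simp only [Set.mem_setOf_eq] at *
    have h1 : ((g⁻¹ : GL (Fin n) F) : Matrix (Fin n) (Fin n) F) *
        (g : Matrix (Fin n) (Fin n) F) = 1 := g.inv_mul
    have := congrArg Matrix.det h1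
    rw [Matrix.det_mul, Matrix.det_one, hg, mul_one] at this
    exact this

/-- The group of similitudes of the bilinear form `B` (acting on row vectors). -/
def similitudeGroup {n : ℕ} {F : Type*} [Field F]
    (B : (Fin n → F) → (Fin n → F) → F) : Subgroup (GL (Fin n) F) where
  carrier := {g | ∃ c : Fˣ, ∀ u v : Fin n → F,
    B (Matrix.vecMul u (g : Matrix (Fin n) (Fin n) F))
      (Matrix.vecMul v (g : Matrix (Fin n) (Fin n) F)) = (c : F) * B u v}
  one_mem' := ⟨1, by simp⟩
  mul_mem' := by
    rintro a b ⟨c, hc⟩ ⟨d, hd⟩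
    refine ⟨c * d, fun u v => ?_⟩
    simp only [Units.val_mul, ← Matrix.vecMul_vecMul, hd, hc]
    ring
  inv_mem' := by
    rintro g ⟨c, hc⟩
    refine ⟨c⁻¹, fun u v => ?_⟩
    have h1 : ∀ w : Fin n → F, Matrix.vecMul
        (Matrix.vecMul w ((g⁻¹ : GL (Fin n) F) : Matrix (Fin n) (Fin n) F))
        (g : Matrix (Fin n) (Fin n) F) = w := by
      intro w
      rw [Matrix.vecMul_vecMul, g.inv_mul, Matrix.vecMul_one]
    have h2 := hc (Matrix.vecMul u ((g⁻¹ : GL (Fin n) F) : Matrix (Fin n) (Fin n) F))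
      (Matrix.vecMul v ((g⁻¹ : GL (Fin n) F) : Matrix (Fin n) (Fin n) F))
    rw [h1, h1] at h2
    rw [h2, Units.val_inv_eq_inv_val, inv_mul_cancel_left₀ (by exact_mod_cast c.ne_zero)]

/-- The isometry group of the bilinear form `B` (acting on row vectors). -/
def isometryGroup {n : ℕ} {F : Type*} [Field F]
    (B : (Fin n → F) → (Fin n → F) → F) : Subgroup (GL (Fin n) F) where
  carrier := {g | ∀ u v : Fin n → F,
    B (Matrix.vecMul u (g : Matrix (Fin n) (Fin n) F))
      (Matrix.vecMul v (g : Matrix (Fin n) (Fin n) F)) = B u v}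
  one_mem' := by simp
  mul_mem' := by
    intro a b ha hb u v
    simp only [Set.mem_setOf_eq] at ha hb
    simp only [Units.val_mul, ← Matrix.vecMul_vecMul]
    rw [hb, ha]
  inv_mem' := by
    intro g hg u v
    have h1 : ∀ w : Fin n → F, Matrix.vecMul
        (Matrix.vecMul w ((g⁻¹ : GL (Fin n) F) : Matrix (Fin n) (Fin n) F))
        (g : Matrix (Fin n) (Fin n) F) = w := by
      intro w
      rw [Matrix.vecMul_vecMul, g.inv_mul, Matrix.vecMul_one]
    have h2 := hg (Matrix.vecMul u ((g⁻¹ : GL (Fin n) F) : Matrix (Fin n) (Fin n) F))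
      (Matrix.vecMul v ((g⁻¹ : GL (Fin n) F) : Matrix (Fin n) (Fin n) F))
    rw [h1, h1] at h2
    exact h2.symm

/-- The group of similitudes of the quadratic form `Q` (acting on row vectors). -/
def qSimilitudeGroup {n : ℕ} {F : Type*} [Field F]
    (Q : (Fin n → F) → F) : Subgroup (GL (Fin n) F) where
  carrier := {g | ∃ c : Fˣ, ∀ v : Fin n → F,
    Q (Matrix.vecMul v (g : Matrix (Fin n) (Fin n) F)) = (c : F) * Q v}
  one_mem' := ⟨1, by simp⟩
  mul_mem' := by
    rintro a b ⟨c, hc⟩ ⟨d, hd⟩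
    refine ⟨c * d, fun v => ?_⟩
    simp only [Units.val_mul, ← Matrix.vecMul_vecMul, hd, hc]
    ring
  inv_mem' := by
    rintro g ⟨c, hc⟩
    refine ⟨c⁻¹, fun v => ?_⟩
    have h1 : ∀ w : Fin n → F, Matrix.vecMul
        (Matrix.vecMul w ((g⁻¹ : GL (Fin n) F) : Matrix (Fin n) (Fin n) F))
        (g : Matrix (Fin n) (Fin n) F) = w := by
      intro w
      rw [Matrix.vecMul_vecMul, g.inv_mul, Matrix.vecMul_one]
    have h2 := hc (Matrix.vecMul v ((g⁻¹ : GL (Fin n) F) : Matrix (Fin n) (Fin n) F))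
    rw [h1] at h2
    rw [h2, Units.val_inv_eq_inv_val, inv_mul_cancel_left₀ (by exact_mod_cast c.ne_zero)]

/-- The unitary group `GU_n` with respect to the field automorphism `φ`. -/
def GUgrp (n : ℕ) {K : Type*} [Field K] (φ : K →+* K) : Subgroup (GL (Fin n) K) where
  carrier := {g | ((g : Matrix (Fin n) (Fin n) K).map φ)ᵀ * (g : Matrix (Fin n) (Fin n) K) = 1}
  one_mem' := by
    simp [Matrix.map_one φ φ.map_zero φ.map_one]
  mul_mem' := by
    intro a b ha hb
    simp only [Set.mem_setOf_eq, Units.val_mul, Matrix.map_mul, Matrix.transpose_mul] at *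
    calc ((b : Matrix (Fin n) (Fin n) K).map φ)ᵀ * ((a : Matrix (Fin n) (Fin n) K).map φ)ᵀ *
          ((a : Matrix (Fin n) (Fin n) K) * (b : Matrix (Fin n) (Fin n) K))
        = ((b : Matrix (Fin n) (Fin n) K).map φ)ᵀ *
          (((a : Matrix (Fin n) (Fin n) K).map φ)ᵀ * (a : Matrix (Fin n) (Fin n) K)) *
          (b : Matrix (Fin n) (Fin n) K) := by noncomm_ring
      _ = 1 := by rw [ha, mul_one, hb]
  inv_mem' := by
    intro g hg
    simp only [Set.mem_setOf_eq] at *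
    have hcomm : (g : Matrix (Fin n) (Fin n) K) * ((g : Matrix (Fin n) (Fin n) K).map φ)ᵀ = 1 :=
      mul_eq_one_comm.mp hg
    have h1 : ((g : Matrix (Fin n) (Fin n) K) * ((g⁻¹ : GL (Fin n) K) : Matrix (Fin n) (Fin n) K)).map φ = 1 := by
      rw [g.mul_inv]
      exact Matrix.map_one φ φ.map_zero φ.map_one
    rw [Matrix.map_mul] at h1
    have h2 := congrArg Matrix.transpose h1
    rw [Matrix.transpose_mul, Matrix.transpose_one] at h2
    calc (((g⁻¹ : GL (Fin n) K) : Matrix (Fin n) (Fin n) K).map φ)ᵀ *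
          ((g⁻¹ : GL (Fin n) K) : Matrix (Fin n) (Fin n) K)
        = (((g⁻¹ : GL (Fin n) K) : Matrix (Fin n) (Fin n) K).map φ)ᵀ *
          (((g : Matrix (Fin n) (Fin n) K).map φ)ᵀ * (g : Matrix (Fin n) (Fin n) K)) *
          ((g⁻¹ : GL (Fin n) K) : Matrix (Fin n) (Fin n) K) := by rw [hg, mul_one]
      _ = ((((g⁻¹ : GL (Fin n) K) : Matrix (Fin n) (Fin n) K).map φ)ᵀ *
          ((g : Matrix (Fin n) (Fin n) K).map φ)ᵀ) *
          ((g : Matrix (Fin n) (Fin n) K) * ((g⁻¹ : GL (Fin n) K) : Matrix (Fin n) (Fin n) K)) := by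
            noncomm_ring
      _ = 1 := by rw [h2, g.mul_inv, mul_one]

/-!
As `2, 3 ∈ π`, the group `H` contains, up to conjugacy, any direct product over the planes of a
symplectic basis of quaternion subgroups of `SL₂(q)`, and likewise of cyclic subgroups of order
three. The first product forces every element of the solvable group `H` to permute the planes:
over an algebraic closure, two planes carrying quaternion groups coincide or are orthogonal. This is
proved by induction on the dimension. A minimal normal subgroup of `H` modulo scalars is either
commutative, so that its weight spaces reduce the dimension, or of extraspecial type, which is
excluded because a quaternion group or an element of order three on a single plane has too few
nontrivial eigenvectors. In the first case, comparing weights shows that the plane of a quaternion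
group lies in one weight space or is the sum of a weight space and its dual. In a self-dual weight
space the induction applies, the elements of order three having their planes inside it or fixing it
pointwise.

It remains to choose isometries `x, y, z` for which only scalars preserve the corresponding four
plane decompositions. For a symplectic basis `a, b` these come from two shears,
`b k ↦ b k + ∑ l, a l` and `a k ↦ a k + ∑ l, b l`, which make an element of the intersection
monomial, and from the change of basis `a k ↦ ∑ l ≤ k, a l`, which makes its permutation monotone
and its coefficients constant.
-/

section HyperbolicPairs

variable {K V : Type*} [Field K] [AddCommGroup V] [Module K V]

theorem mem_of_smul_sub_mem {P : Submodule K V} {μ : K} (hμ : μ ≠ 1) {v : V}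
    (h : μ • v - v ∈ P) : v ∈ P := by
  rw [← one_smul K v, smul_smul, mul_one, ← sub_smul] at h
  exact (P.smul_mem_iff (sub_ne_zero.mpr hμ)).mp h

variable {B : LinearMap.BilinForm K V} {u w u' w' : V}

theorem exists_eq_smul_add_smul_add (hB : B.IsAlt) (huw : B u w ≠ 0) (v : V) :
    ∃ (a b : K) (v₀ : V), v = a • u + b • w + v₀ ∧ B u v₀ = 0 ∧ B w v₀ = 0 := by
  refine ⟨-(B w v) / B u w, B u v / B u w,
    v - ((-(B w v) / B u w) • u + (B u v / B u w) • w), by abel, ?_, ?_⟩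
  · simp only [map_sub, map_add, map_smul, hB.self_eq_zero, smul_eq_mul]
    field_simp
    ring
  · simp only [map_sub, map_add, map_smul, hB.self_eq_zero, smul_eq_mul, ← hB.neg_eq u w]
    field_simp
    ring

theorem eq_zero_of_mem_span_pair (hB : B.IsAlt) (huw : B u w ≠ 0) {x : V}
    (hx : x ∈ Submodule.span K {u, w}) (hux : B u x = 0) (hwx : B w x = 0) : x = 0 := by
  obtain ⟨a, b, rfl⟩ := Submodule.mem_span_pair.mp hx
  simp only [map_add, map_smul, hB.self_eq_zero, smul_eq_mul, mul_zero, zero_add, add_zero,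
    ← hB.neg_eq u w, mul_neg, neg_eq_zero, mul_eq_zero, huw, or_false] at hux hwx
  rw [hux, hwx, zero_smul, zero_smul, add_zero]

theorem linearIndependent_pair (hB : B.IsAlt) (huw : B u w ≠ 0) :
    LinearIndependent K ![u, w] := by
  refine LinearIndependent.pair_iff.mpr fun s t hst => ?_
  have hu := congrArg (B u) hst
  have hw := congrArg (B w) hst
  simp only [map_add, map_smul, hB.self_eq_zero, smul_eq_mul, mul_zero, zero_add, add_zero,
    map_zero, ← hB.neg_eq u w, mul_neg, neg_eq_zero, mul_eq_zero, huw, or_false] at hu hw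
  exact ⟨hw, hu⟩

theorem finrank_span_pair (hB : B.IsAlt) (huw : B u w ≠ 0) :
    Module.finrank K (Submodule.span K {u, w}) = 2 := by
  rw [← Matrix.range_cons_cons_empty u w ![], finrank_span_eq_card (linearIndependent_pair hB huw),
    Fintype.card_fin]

theorem span_pair_eq_of_mem (hB : B.IsAlt) (huw : B u w ≠ 0) (huw' : B u' w' ≠ 0)
    (hu' : u' ∈ Submodule.span K {u, w}) (hw' : w' ∈ Submodule.span K {u, w}) :
    Submodule.span K {u', w'} = Submodule.span K {u, w} := by
  have : FiniteDimensional K (Submodule.span K {u, w}) :=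
    FiniteDimensional.span_of_finite K (Set.toFinite _)
  refine Submodule.eq_of_le_of_finrank_eq (Submodule.span_le.mpr (Set.pair_subset hu' hw')) ?_
  rw [finrank_span_pair hB huw, finrank_span_pair hB huw']

theorem apply_ne_zero_of_linearIndependent (hB : B.IsAlt) (huw : B u w ≠ 0)
    (hu' : u' ∈ Submodule.span K {u, w}) (hw' : w' ∈ Submodule.span K {u, w})
    (hli : LinearIndependent K ![u', w']) : B u' w' ≠ 0 := by
  have : FiniteDimensional K (Submodule.span K {u, w}) :=
    FiniteDimensional.span_of_finite K (Set.toFinite _)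
  have hspan : Submodule.span K {u', w'} = Submodule.span K {u, w} := by
    refine Submodule.eq_of_le_of_finrank_eq (Submodule.span_le.mpr (Set.pair_subset hu' hw')) ?_
    rw [finrank_span_pair hB huw, ← Matrix.range_cons_cons_empty u' w' ![],
      finrank_span_eq_card hli, Fintype.card_fin]
  intro h0
  have hle : Submodule.span K {u, w} ≤ LinearMap.ker (B u') :=
    hspan ▸ Submodule.span_le.mpr (Set.pair_subset (hB.self_eq_zero u') h0)
  refine hli.ne_zero 0 (eq_zero_of_mem_span_pair hB huw hu' (hB.isRefl _ _ ?_) (hB.isRefl _ _ ?_))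
  · exact hle (Submodule.subset_span (Set.mem_insert u _))
  · exact hle (Submodule.subset_span (Set.mem_insert_of_mem u rfl))

theorem plucker_of_mem_span_pair (hB : B.IsAlt) {v₁ v₂ v₃ v₄ : V}
    (h₁ : v₁ ∈ Submodule.span K {u, w}) (h₂ : v₂ ∈ Submodule.span K {u, w})
    (h₃ : v₃ ∈ Submodule.span K {u, w}) (h₄ : v₄ ∈ Submodule.span K {u, w}) :
    B v₁ v₂ * B v₃ v₄ - B v₁ v₃ * B v₂ v₄ + B v₁ v₄ * B v₂ v₃ = 0 := by
  obtain ⟨a₁, b₁, rfl⟩ := Submodule.mem_span_pair.mp h₁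
  obtain ⟨a₂, b₂, rfl⟩ := Submodule.mem_span_pair.mp h₂
  obtain ⟨a₃, b₃, rfl⟩ := Submodule.mem_span_pair.mp h₃
  obtain ⟨a₄, b₄, rfl⟩ := Submodule.mem_span_pair.mp h₄
  simp only [map_add, map_smul, LinearMap.add_apply, LinearMap.smul_apply, smul_eq_mul,
    hB.self_eq_zero, ← hB.neg_eq u w]
  ring

/-- The pairs `(u, w)` and `(u', w')` span mutually orthogonal subspaces. -/
structure PairsOrthogonal (B : LinearMap.BilinForm K V) (u w u' w' : V) : Prop where
  left_left : B u u' = 0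
  left_right : B u w' = 0
  right_left : B w u' = 0
  right_right : B w w' = 0

namespace PairsOrthogonal

theorem symm (hB : B.IsAlt) (h : PairsOrthogonal B u w u' w') : PairsOrthogonal B u' w' u w :=
  ⟨hB.isRefl _ _ h.1, hB.isRefl _ _ h.3, hB.isRefl _ _ h.2, hB.isRefl _ _ h.4⟩

theorem apply_eq_zero (h : PairsOrthogonal B u w u' w') {x : V}
    (hx : x ∈ Submodule.span K {u', w'}) : B u x = 0 ∧ B w x = 0 := by
  obtain ⟨a, b, rfl⟩ := Submodule.mem_span_pair.mp hx
  simp [h.left_left, h.left_right, h.right_left, h.right_right]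

theorem finrank_sup (hB : B.IsAlt) (huw : B u w ≠ 0) (huw' : B u' w' ≠ 0)
    (h : PairsOrthogonal B u w u' w') :
    Module.finrank K ↥(Submodule.span K {u, w} ⊔ Submodule.span K {u', w'}) = 4 := by
  have hinf : Submodule.span K {u, w} ⊓ Submodule.span K {u', w'} = ⊥ := by
    refine (Submodule.eq_bot_iff _).mpr fun x hx => ?_
    exact eq_zero_of_mem_span_pair hB huw hx.1 (h.apply_eq_zero hx.2).1 (h.apply_eq_zero hx.2).2
  have := FiniteDimensional.span_of_finite K (Set.toFinite {u, w})
  have := FiniteDimensional.span_of_finite K (Set.toFinite {u', w'})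
  have := Submodule.finrank_sup_add_finrank_inf_eq (Submodule.span K {u, w})
    (Submodule.span K {u', w'})
  rwa [hinf, finrank_bot, add_zero, finrank_span_pair hB huw, finrank_span_pair hB huw'] at this

end PairsOrthogonal

end HyperbolicPairs

section PlaneDiagonal

variable {K V : Type*} [Field K] [AddCommGroup V] [Module K V]

/-- `T` acts as `diag(α, β)` on the nondegenerate plane with basis `u, w` and trivially on its
orthogonal complement. -/
structure IsPlaneDiagonal (B : LinearMap.BilinForm K V) (T : Module.End K V) (u w : V)
    (α β : K) : Prop where
  pairing_ne_zero : B u w ≠ 0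
  apply_left : T u = α • u
  apply_right : T w = β • w
  apply_of_orthogonal : ∀ v, B u v = 0 → B w v = 0 → T v = v

variable {B : LinearMap.BilinForm K V} {T T' : Module.End K V} {u w u' w' : V} {α β α' β' : K}

namespace IsPlaneDiagonal

theorem mul (h : IsPlaneDiagonal B T u w α β) (h' : IsPlaneDiagonal B T' u w α' β') :
    IsPlaneDiagonal B (T * T') u w (α * α') (β * β') where
  pairing_ne_zero := h.pairing_ne_zero
  apply_left := by
    rw [Module.End.mul_apply, h'.apply_left, map_smul, h.apply_left, smul_smul, mul_comm]
  apply_right := by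
    rw [Module.End.mul_apply, h'.apply_right, map_smul, h.apply_right, smul_smul, mul_comm]
  apply_of_orthogonal v hu hw := by
    rw [Module.End.mul_apply, h'.apply_of_orthogonal v hu hw, h.apply_of_orthogonal v hu hw]

theorem eq_one (hB : B.IsAlt) (h : IsPlaneDiagonal B T u w 1 1) : T = 1 := by
  ext v
  obtain ⟨a, b, v₀, rfl, hu, hw⟩ := exists_eq_smul_add_smul_add hB h.pairing_ne_zero v
  simp [h.apply_left, h.apply_right, h.apply_of_orthogonal v₀ hu hw]

theorem mul_self_eq_one (hB : B.IsAlt) (h : IsPlaneDiagonal B T u w (-1) (-1)) : T * T = 1 :=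
  eq_one hB (by simpa using h.mul h)

theorem apply_sub_mem_span (hB : B.IsAlt) (h : IsPlaneDiagonal B T u w α β) (v : V) :
    T v - v ∈ Submodule.span K {u, w} := by
  obtain ⟨a, b, v₀, rfl, hu, hw⟩ := exists_eq_smul_add_smul_add hB h.pairing_ne_zero v
  refine Submodule.mem_span_pair.mpr ⟨a * (α - 1), b * (β - 1), ?_⟩
  simp only [map_add, map_smul, h.apply_left, h.apply_right, h.apply_of_orthogonal v₀ hu hw]
  module

theorem eigenspace_le_span (hB : B.IsAlt) (h : IsPlaneDiagonal B T u w α β) {μ : K} (hμ : μ ≠ 1) :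
    Module.End.eigenspace T μ ≤ Submodule.span K {u, w} := by
  intro v hv
  have hmem := h.apply_sub_mem_span hB v
  rw [Module.End.mem_eigenspace_iff.mp hv] at hmem
  exact mem_of_smul_sub_mem hμ hmem

theorem eigenspace_eq_span (hB : B.IsAlt) (h : IsPlaneDiagonal B T u w α α) (hα : α ≠ 1) :
    Module.End.eigenspace T α = Submodule.span K {u, w} := by
  refine (h.eigenspace_le_span hB hα).antisymm (Submodule.span_le.mpr ?_)
  rintro x (rfl | rfl)
  · exact Module.End.mem_eigenspace_iff.mpr h.apply_left
  · exact Module.End.mem_eigenspace_iff.mpr h.apply_right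

theorem exists_eigenspace_le_span_singleton (hB : B.IsAlt) (h : IsPlaneDiagonal B T u w α β)
    (hαβ : α ≠ β) {μ : K} (hμ : μ ≠ 1) : ∃ x, Module.End.eigenspace T μ ≤ K ∙ x := by
  have huw := LinearIndependent.pair_iff.mp (linearIndependent_pair hB h.pairing_ne_zero)
  have key : ∀ v ∈ Module.End.eigenspace T μ, ∃ a b : K, a • u + b • w = v ∧
      a * (α - μ) = 0 ∧ b * (β - μ) = 0 := by
    intro v hv
    obtain ⟨a, b, rfl⟩ := Submodule.mem_span_pair.mp (h.eigenspace_le_span hB hμ hv)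
    refine ⟨a, b, rfl, huw _ _ ?_⟩
    rw [Module.End.mem_eigenspace_iff, map_add, map_smul, map_smul, h.apply_left, h.apply_right,
      ← sub_eq_zero] at hv
    rw [← hv]
    module
  by_cases hα : α = μ
  · refine ⟨u, fun v hv => ?_⟩
    obtain ⟨a, b, rfl, -, hb⟩ := key v hv
    have hb0 : b = 0 := (mul_eq_zero.mp hb).resolve_right (sub_ne_zero.mpr (hα ▸ hαβ.symm))
    exact Submodule.mem_span_singleton.mpr ⟨a, by simp [hb0]⟩
  · refine ⟨w, fun v hv => ?_⟩
    obtain ⟨a, b, rfl, ha, -⟩ := key v hv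
    have ha0 : a = 0 := (mul_eq_zero.mp ha).resolve_right (sub_ne_zero.mpr hα)
    exact Submodule.mem_span_singleton.mpr ⟨b, by simp [ha0]⟩

theorem left_ne_zero (h : IsPlaneDiagonal B T u w α β) : u ≠ 0 := by
  rintro rfl
  exact h.pairing_ne_zero (by rw [map_zero, LinearMap.zero_apply])

theorem eigenspace_eq_span_singleton (hB : B.IsAlt) (h : IsPlaneDiagonal B T u w α β)
    (hαβ : α ≠ β) (hα : α ≠ 1) : Module.End.eigenspace T α = K ∙ u := by
  have hu : u ∈ Module.End.eigenspace T α := Module.End.mem_eigenspace_iff.mpr h.apply_left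
  refine le_antisymm ?_ ((Submodule.span_singleton_le_iff_mem _ _).mpr hu)
  obtain ⟨x, hx⟩ := h.exists_eigenspace_le_span_singleton hB hαβ hα
  obtain ⟨a, rfl⟩ := Submodule.mem_span_singleton.mp (hx hu)
  have ha : a ≠ 0 := fun ha => h.left_ne_zero (by rw [ha, zero_smul])
  rwa [Submodule.span_singleton_smul_eq ha.isUnit]

theorem mul_eq_of_similitude (h : IsPlaneDiagonal B T u w α β) {c : K}
    (hT : ∀ x y, B (T x) (T y) = c * B x y) : α * β = c := by
  have := hT u w
  rw [h.apply_left, h.apply_right] at this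
  simp only [map_smul, LinearMap.smul_apply, smul_eq_mul] at this
  exact mul_right_cancel₀ h.pairing_ne_zero (by rw [← this]; ring)

theorem apply_of_mem_span_orthogonal (h : IsPlaneDiagonal B T u w α β)
    (ho : PairsOrthogonal B u w u' w') {x : V} (hx : x ∈ Submodule.span K {u', w'}) : T x = x :=
  h.apply_of_orthogonal x (ho.apply_eq_zero hx).1 (ho.apply_eq_zero hx).2

theorem commute_of_orthogonal (hB : B.IsAlt) (h : IsPlaneDiagonal B T u w α β)
    (h' : IsPlaneDiagonal B T' u' w' α' β') (ho : PairsOrthogonal B u w u' w') : Commute T T' := by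
  ext v
  have hT : T (T' v - v) = T' v - v :=
    h.apply_of_mem_span_orthogonal ho (h'.apply_sub_mem_span hB v)
  have hT' : T' (T v - v) = T v - v :=
    h'.apply_of_mem_span_orthogonal (ho.symm hB) (h.apply_sub_mem_span hB v)
  simp only [map_sub, Module.End.mul_apply] at *
  rw [sub_eq_iff_eq_add.mp hT, sub_eq_iff_eq_add.mp hT']
  abel

theorem eigenspace_mul_eq_sup (hB : B.IsAlt) (h : IsPlaneDiagonal B T u w α α)
    (h' : IsPlaneDiagonal B T' u' w' α α) (hα : α ≠ 1) (ho : PairsOrthogonal B u w u' w') :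
    Module.End.eigenspace (T * T') α = Submodule.span K {u, w} ⊔ Submodule.span K {u', w'} := by
  refine le_antisymm (fun v hv => ?_) (sup_le (fun v hv => ?_) fun v hv => ?_)
  · have hmem : T (T' v) - v ∈ Submodule.span K {u, w} ⊔ Submodule.span K {u', w'} := by
      rw [← sub_add_sub_cancel _ (T' v)]
      exact Submodule.add_mem_sup (h.apply_sub_mem_span hB _) (h'.apply_sub_mem_span hB _)
    rw [← Module.End.mul_apply, Module.End.mem_eigenspace_iff.mp hv] at hmem
    exact mem_of_smul_sub_mem hα hmem
  · rw [Module.End.mem_eigenspace_iff, Module.End.mul_apply,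
      h'.apply_of_mem_span_orthogonal (ho.symm hB) hv]
    exact Module.End.mem_eigenspace_iff.mp ((h.eigenspace_eq_span hB hα).ge hv)
  · rw [← h'.eigenspace_eq_span hB hα] at hv
    rw [Module.End.mem_eigenspace_iff, Module.End.mul_apply, Module.End.mem_eigenspace_iff.mp hv,
      map_smul, h.apply_of_mem_span_orthogonal ho ((h'.eigenspace_eq_span hB hα).le hv)]

theorem exists_add_of_mapsTo (hB : B.IsAlt) (h : IsPlaneDiagonal B T u w α α) (hα : α ≠ 1)
    {W : Submodule K V} (hW : ∀ x ∈ W, T x ∈ W) {v : V} (hv : v ∈ W) :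
    ∃ p ∈ Submodule.span K {u, w}, p ∈ W ∧ ∃ v₀ ∈ W, v = p + v₀ ∧ B u v₀ = 0 ∧ B w v₀ = 0 := by
  obtain ⟨a, b, v₀, rfl, hu, hw⟩ := exists_eq_smul_add_smul_add hB h.pairing_ne_zero v
  have hp : a • u + b • w ∈ W := by
    rw [← W.smul_mem_iff (sub_ne_zero.mpr hα)]
    convert W.sub_mem (hW _ hv) hv using 1
    simp only [map_add, map_smul, h.apply_left, h.apply_right, h.apply_of_orthogonal v₀ hu hw]
    module
  exact ⟨_, Submodule.mem_span_pair.mpr ⟨a, b, rfl⟩, hp, v₀, (W.add_mem_iff_right hp).mp hv, rfl,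
    hu, hw⟩

theorem mem_of_mapsTo (hB : B.IsAlt) (h : IsPlaneDiagonal B T u w α β) (hα : α ≠ 1)
    (hβ : β ≠ 1) (hαβ : α ≠ β) {W : Submodule K V} (hW : ∀ x ∈ W, T x ∈ W) {v : V} (hv : v ∈ W) :
    (B w v ≠ 0 → u ∈ W) ∧ (B u v ≠ 0 → w ∈ W) := by
  obtain ⟨a, b, v₀, rfl, hu, hw⟩ := exists_eq_smul_add_smul_add hB h.pairing_ne_zero v
  have hT : (a * (α - 1)) • u + (b * (β - 1)) • w ∈ W := by
    convert W.sub_mem (hW _ hv) hv using 1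
    simp only [map_add, map_smul, h.apply_left, h.apply_right, h.apply_of_orthogonal v₀ hu hw]
    module
  have hTT := hW _ hT
  simp only [map_add, map_smul, h.apply_left, h.apply_right] at hTT
  constructor <;> intro hne
  · have ha : a ≠ 0 := fun ha => hne (by simp [ha, hw, hB.self_eq_zero])
    rw [← W.smul_mem_iff (mul_ne_zero ha (mul_ne_zero (sub_ne_zero.mpr hα) (sub_ne_zero.mpr hαβ)))]
    convert W.sub_mem hTT (W.smul_mem β hT) using 1
    module
  · have hb : b ≠ 0 := fun hb => hne (by simp [hb, hu, hB.self_eq_zero])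
    rw [← W.smul_mem_iff
      (mul_ne_zero hb (mul_ne_zero (sub_ne_zero.mpr hβ) (sub_ne_zero.mpr hαβ.symm)))]
    convert W.sub_mem hTT (W.smul_mem α hT) using 1
    module

end IsPlaneDiagonal

/-- `I` and `J` act on the nondegenerate plane with basis `u, w` as the quaternion matrices
`diag(ι, -ι)` and `!![0, -1; 1, 0]`, where `ι ^ 2 = -1`, and trivially on its orthogonal
complement. -/
structure IsQuaternionPair (B : LinearMap.BilinForm K V) (ι : K) (I J : Module.End K V)
    (u w : V) : Prop where
  sq_eq_neg_one : ι * ι = -1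
  diagonal : IsPlaneDiagonal B I u w ι (-ι)
  apply_left : J u = w
  apply_right : J w = -u
  apply_of_orthogonal : ∀ v, B u v = 0 → B w v = 0 → J v = v

namespace IsQuaternionPair

variable {ι : K} {I J : Module.End K V}

theorem sq_diagonal (h : IsQuaternionPair B ι I J u w) :
    IsPlaneDiagonal B (I * I) u w (-1) (-1) := by
  simpa [h.sq_eq_neg_one] using h.diagonal.mul h.diagonal

theorem ne_neg (h : IsQuaternionPair B ι I J u w) (h2 : (2 : K) ≠ 0) : ι ≠ -ι := fun hι =>
  h2 (by linear_combination 2 * h.sq_eq_neg_one - ι * hι)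

theorem ne_one (h : IsQuaternionPair B ι I J u w) (h2 : (2 : K) ≠ 0) : ι ≠ 1 := by
  rintro rfl
  exact h2 (by linear_combination h.sq_eq_neg_one)

theorem isPlaneDiagonal_right (hB : B.IsAlt) (h2 : (2 : K) ≠ 0) (h : IsQuaternionPair B ι I J u w) :
    IsPlaneDiagonal B J (u - ι • w) (u + ι • w) ι (-ι) where
  pairing_ne_zero := by
    have hι : ι ≠ 0 := fun hι => h.ne_neg h2 (by rw [hι, neg_zero])
    have : B (u - ι • w) (u + ι • w) = 2 * ι * B u w := by
      simp only [map_add, map_sub, map_smul, LinearMap.sub_apply, LinearMap.smul_apply,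
        hB.self_eq_zero, smul_eq_mul, ← hB.neg_eq u w]
      ring
    rw [this]
    exact mul_ne_zero (mul_ne_zero h2 hι) h.diagonal.pairing_ne_zero
  apply_left := by
    rw [map_sub, map_smul, h.apply_left, h.apply_right, smul_sub, smul_smul, h.sq_eq_neg_one]
    module
  apply_right := by
    rw [map_add, map_smul, h.apply_left, h.apply_right, smul_add, smul_smul, neg_mul,
      h.sq_eq_neg_one]
    module
  apply_of_orthogonal v hu hw := by
    simp only [map_sub, map_add, map_smul, LinearMap.sub_apply, LinearMap.add_apply,
      LinearMap.smul_apply, smul_eq_mul] at hu hw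
    have hι := h.sq_eq_neg_one
    refine h.apply_of_orthogonal v ((mul_eq_zero.mp ?_).resolve_left h2)
      ((mul_eq_zero.mp ?_).resolve_left h2)
    · linear_combination hu + hw
    · linear_combination ι * hu - ι * hw + 2 * B w v * hι

theorem exists_smul_of_commute (hB : B.IsAlt) (h2 : (2 : K) ≠ 0) (h : IsQuaternionPair B ι I J u w)
    {Z : Module.End K V} (hI : Commute I Z) (hJ : Commute J Z) :
    ∃ α : K, Z u = α • u ∧ Z w = α • w := by
  have hmem : Z u ∈ K ∙ u := by
    rw [← h.diagonal.eigenspace_eq_span_singleton hB (h.ne_neg h2) (h.ne_one h2)]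
    refine Module.End.mem_eigenspace_iff.mpr ?_
    rw [← Module.End.mul_apply, hI.eq, Module.End.mul_apply, h.diagonal.apply_left, map_smul]
  obtain ⟨α, hα⟩ := Submodule.mem_span_singleton.mp hmem
  refine ⟨α, hα.symm, ?_⟩
  rw [← h.apply_left, ← Module.End.mul_apply, ← hJ.eq, Module.End.mul_apply, ← hα, map_smul]

end IsQuaternionPair

end PlaneDiagonal

/-- `X` and `Y` commute up to the scalar `ζ`. -/
def CommuteUpTo {R A : Type*} [CommSemiring R] [Semiring A] [Algebra R A] (ζ : R) (X Y : A) :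
    Prop :=
  X * Y = ζ • (Y * X)

namespace CommuteUpTo

section Semiring

variable {R A : Type*} [CommSemiring R] [Semiring A] [Algebra R A] {ζ ξ : R} {X Y Z : A}

theorem one_iff : CommuteUpTo (1 : R) X Y ↔ Commute X Y := by
  rw [CommuteUpTo, one_smul, Commute, SemiconjBy]

theorem mul_left (h₁ : CommuteUpTo ζ X Z) (h₂ : CommuteUpTo ξ Y Z) :
    CommuteUpTo (ζ * ξ) (X * Y) Z := by
  unfold CommuteUpTo at *
  rw [mul_assoc, h₂, mul_smul_comm, ← mul_assoc, h₁, smul_mul_assoc, smul_smul, mul_assoc,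
    mul_comm ξ]

theorem mul_right (h₁ : CommuteUpTo ζ X Y) (h₂ : CommuteUpTo ξ X Z) :
    CommuteUpTo (ζ * ξ) X (Y * Z) := by
  unfold CommuteUpTo at *
  rw [← mul_assoc, h₁, smul_mul_assoc, mul_assoc, h₂, mul_smul_comm, smul_smul, mul_assoc]

theorem pow_left (h : CommuteUpTo ζ X Z) (n : ℕ) : CommuteUpTo (ζ ^ n) (X ^ n) Z := by
  induction n with
  | zero => simp [CommuteUpTo]
  | succ n ih => rw [pow_succ, pow_succ]; exact ih.mul_left h

theorem pow_right (h : CommuteUpTo ζ X Z) (n : ℕ) : CommuteUpTo (ζ ^ n) X (Z ^ n) := by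
  induction n with
  | zero => simp [CommuteUpTo]
  | succ n ih => rw [pow_succ, pow_succ]; exact ih.mul_right h

end Semiring

variable {K A : Type*} [Field K] [Ring A] [Algebra K A] {ζ : K} {X Y : A}

theorem eq_one (h : CommuteUpTo ζ X Y) (hc : Commute X Y) (hne : Y * X ≠ 0) : ζ = 1 := by
  rw [CommuteUpTo, hc.eq] at h
  exact (smul_left_injective K hne (h.symm.trans (one_smul K _).symm))

end CommuteUpTo

section EndomorphismsCommutingUpToScalars

variable {K V : Type*} [Field K] [AddCommGroup V] [Module K V] [FiniteDimensional K V]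
  {ζ : K} {X Y E : Module.End K V}

theorem CommuteUpTo.pow_finrank_eq_one (h : CommuteUpTo ζ X Y) (hX : Function.Injective X)
    (hY : Function.Injective Y) : ζ ^ Module.finrank K V = 1 := by
  have hdet := congrArg LinearMap.det h
  rw [LinearMap.det_smul, map_mul, map_mul, mul_comm (LinearMap.det Y)] at hdet
  have hne : ∀ {Z : Module.End K V}, Function.Injective Z → LinearMap.det Z ≠ 0 := fun hZ =>
    ((LinearMap.isUnit_iff_ker_eq_bot _).mpr (LinearMap.ker_eq_bot.mpr hZ)).map
      LinearMap.det |>.ne_zero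
  exact mul_right_cancel₀ (mul_ne_zero (hne hX) (hne hY)) (hdet.symm.trans (one_mul _).symm)

theorem CommuteUpTo.pow_finrank_eigenspace_eq_one (h : CommuteUpTo ζ X Y) (hX : Commute X E)
    (hY : Commute Y E) (hXi : Function.Injective X) (hYi : Function.Injective Y) (μ : K) :
    ζ ^ Module.finrank K (Module.End.eigenspace E μ) = 1 := by
  have hXE := Module.End.mapsTo_genEigenspace_of_comm hX.symm μ 1
  have hYE := Module.End.mapsTo_genEigenspace_of_comm hY.symm μ 1
  have hres : CommuteUpTo ζ (X.restrict hXE) (Y.restrict hYE) :=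
    LinearMap.ext fun v => Subtype.ext (LinearMap.congr_fun h v)
  refine hres.pow_finrank_eq_one (fun a b hab => ?_) fun a b hab => ?_
  · exact Subtype.ext (hXi (congrArg Subtype.val hab))
  · exact Subtype.ext (hYi (congrArg Subtype.val hab))

end EndomorphismsCommutingUpToScalars

theorem eq_one_of_pow_eq_one_of_coprime {M : Type*} [Monoid M] {x : M} {m n : ℕ}
    (hmn : m.Coprime n) (hm : x ^ m = 1) (hn : x ^ n = 1) : x = 1 := by
  simpa [hmn.gcd_eq_one] using pow_gcd_eq_one.mpr ⟨hm, hn⟩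

section Representations

open scoped commutatorElement

variable {K V G : Type*} [Field K] [AddCommGroup V] [Module K V] [Group G]

theorem representation_injective (ρ : Representation K G V) (g : G) : Function.Injective (ρ g) :=
  Function.LeftInverse.injective (ρ.inv_self_apply g)

theorem representation_ne_zero [Nontrivial V] (ρ : Representation K G V) (g : G) : ρ g ≠ 0 := by
  obtain ⟨v, hv⟩ := exists_ne (0 : V)
  intro h
  exact hv (representation_injective ρ g (by rw [h, LinearMap.zero_apply, LinearMap.zero_apply]))

/-- The normal subgroup of elements acting as scalars. -/
def scalarSubgroup (ρ : Representation K G V) : Subgroup G where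
  carrier := {g | ∃ c : K, ρ g = c • 1}
  one_mem' := ⟨1, by simp⟩
  mul_mem' := by
    rintro g h ⟨c, hc⟩ ⟨d, hd⟩
    exact ⟨c * d, by rw [map_mul, hc, hd, smul_mul_smul_comm, one_mul]⟩
  inv_mem' := by
    rintro g ⟨c, hc⟩
    rcases subsingleton_or_nontrivial V with hV | hV
    · exact ⟨1, Subsingleton.elim _ _⟩
    · have hc₀ : c ≠ 0 := by
        rintro rfl
        exact representation_ne_zero ρ g (hc.trans (zero_smul _ _))
      refine ⟨c⁻¹, LinearMap.ext fun v => representation_injective ρ g ?_⟩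
      rw [ρ.self_inv_apply, hc]
      simp [smul_smul, hc₀]

variable {ρ : Representation K G V} {a b g : G} {ζ : K}

instance scalarSubgroup_normal : (scalarSubgroup ρ).Normal where
  conj_mem := by
    rintro a ⟨c, hc⟩ g
    refine ⟨c, ?_⟩
    rw [map_mul, map_mul, hc, mul_smul_comm, mul_one, smul_mul_assoc, ← map_mul, mul_inv_cancel,
      map_one]

theorem apply_mul_inv_of_apply_eq_one (hb : ρ b = 1) (a : G) : ρ (a * b⁻¹) = ρ a := by
  rw [← mul_one (ρ (a * b⁻¹)), ← hb, ← map_mul, inv_mul_cancel_right]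

theorem commute_of_mem_scalarSubgroup (h : a ∈ scalarSubgroup ρ) (X : Module.End K V) :
    Commute (ρ a) X := by
  obtain ⟨c, hc⟩ := h
  rw [hc]
  exact (Commute.one_left X).smul_left c

theorem exists_commuteUpTo (h : ⁅a, b⁆ ∈ scalarSubgroup ρ) :
    ∃ ζ : K, CommuteUpTo ζ (ρ a) (ρ b) := by
  obtain ⟨ζ, hζ⟩ := h
  refine ⟨ζ, ?_⟩
  calc ρ a * ρ b = ρ ⁅a, b⁆ * (ρ b * ρ a) := by
        simp only [← map_mul]; congr 1; rw [commutatorElement_def]; group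
    _ = ζ • (ρ b * ρ a) := by rw [hζ, smul_mul_assoc, one_mul]

variable [Nontrivial V]

theorem CommuteUpTo.eq_one_of_commute (h : CommuteUpTo ζ (ρ a) (ρ b))
    (hc : Commute (ρ a) (ρ b)) : ζ = 1 :=
  h.eq_one hc (by rw [← map_mul]; exact representation_ne_zero ρ _)

theorem CommuteUpTo.pow_eq_one_left (h : CommuteUpTo ζ (ρ a) (ρ b)) {n : ℕ}
    (ha : a ^ n ∈ scalarSubgroup ρ) : ζ ^ n = 1 := by
  have hn := h.pow_left n
  rw [← map_pow] at hn
  exact hn.eq_one_of_commute (commute_of_mem_scalarSubgroup ha _)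

theorem CommuteUpTo.pow_eq_one_right (h : CommuteUpTo ζ (ρ a) (ρ b)) {n : ℕ}
    (hb : b ^ n ∈ scalarSubgroup ρ) : ζ ^ n = 1 := by
  have hn := h.pow_right n
  rw [← map_pow] at hn
  exact hn.eq_one_of_commute (commute_of_mem_scalarSubgroup hb _).symm

end Representations

section Extraspecial

open scoped commutatorElement

variable {K V G : Type*} [Field K] [AddCommGroup V] [Module K V] [Group G]

/-- Modulo scalars, the normal subgroup `A` is elementary abelian of exponent `r` and nontrivial,
and the commutator pairing on it is nondegenerate; this is the analogue in `G` of an extraspecial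
normal `r`-subgroup. -/
structure IsExtraspecial (ρ : Representation K G V) (A : Subgroup G) (r : ℕ) : Prop where
  normal : A.Normal
  pow_mem : ∀ a ∈ A, a ^ r ∈ scalarSubgroup ρ
  commutator_mem : ∀ a ∈ A, ∀ b ∈ A, ⁅a, b⁆ ∈ scalarSubgroup ρ
  exists_notMem : ∃ a ∈ A, a ∉ scalarSubgroup ρ
  exists_not_commute : ∀ a ∈ A, a ∉ scalarSubgroup ρ → ∃ b ∈ A, ¬ Commute (ρ a) (ρ b)

variable {ρ : Representation K G V} {A : Subgroup G} {r : ℕ} {a b e e' : G}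

namespace IsExtraspecial

theorem exists_commuteUpTo [Nontrivial V] (hA : IsExtraspecial ρ A r) (ha : a ∈ A) (hb : b ∈ A) :
    ∃ ζ : K, ζ ^ r = 1 ∧ CommuteUpTo ζ (ρ a) (ρ b) := by
  obtain ⟨ζ, hζ⟩ := _root_.exists_commuteUpTo (hA.commutator_mem a ha b hb)
  exact ⟨ζ, hζ.pow_eq_one_left (hA.pow_mem a ha), hζ⟩

theorem commute_of_finrank_eigenspace [FiniteDimensional K V] [Nontrivial V]
    (hA : IsExtraspecial ρ A r) (ha : a ∈ A) (hb : b ∈ A) {E : Module.End K V} {μ : K}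
    (haE : Commute (ρ a) E) (hbE : Commute (ρ b) E)
    (hr : r.Coprime (Module.finrank K (Module.End.eigenspace E μ))) :
    Commute (ρ a) (ρ b) := by
  obtain ⟨ζ, hζ, hab⟩ := hA.exists_commuteUpTo ha hb
  have hpow := hab.pow_finrank_eigenspace_eq_one haE hbE (representation_injective ρ a)
    (representation_injective ρ b) μ
  rw [eq_one_of_pow_eq_one_of_coprime hr hζ hpow] at hab
  exact CommuteUpTo.one_iff.mp hab

theorem mul_pow_mul_pow_inv_mem (hA : IsExtraspecial ρ A r) (ha : a ∈ A) (e : G) (n : ℕ) :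
    (a * e) ^ n * (e ^ n)⁻¹ ∈ A := by
  have := hA.normal
  rw [← QuotientGroup.eq_one_iff]
  simp [(QuotientGroup.eq_one_iff a).mpr ha]

/-- Since `e ^ n` acts trivially, `e` and `a⁻¹` conjugate `(a * e) ^ n` in the same way; the
resulting scalar is an `r`-th and an `n`-th root of unity. -/
theorem commute_norm [Nontrivial V] (hA : IsExtraspecial ρ A r) {n : ℕ} (hrn : r.Coprime n)
    (he : ρ (e ^ n) = 1) (ha : a ∈ A) : Commute (ρ ((a * e) ^ n * (e ^ n)⁻¹)) (ρ e) := by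
  set b := (a * e) ^ n * (e ^ n)⁻¹
  have hρb : ρ b = ρ ((a * e) ^ n) := apply_mul_inv_of_apply_eq_one he _
  obtain ⟨ζ, hζ, hba⟩ := hA.exists_commuteUpTo (hA.mul_pow_mul_pow_inv_mem ha e n) ha
  have heb : CommuteUpTo ζ (ρ e) (ρ b) := by
    refine ((Group.isUnit a).map ρ).mul_left_cancel ?_
    calc ρ a * (ρ e * ρ b) = ρ ((a * e) ^ n) * ρ a * ρ e := by
          rw [hρb]
          simp only [← map_mul]
          rw [← mul_assoc, mul_assoc _ a e, ← pow_succ', ← pow_succ]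
      _ = ρ a * (ζ • (ρ b * ρ e)) := by
          rw [← hρb, hba, smul_mul_assoc, mul_assoc, mul_smul_comm]
  have hζn := heb.pow_eq_one_left (n := n) ⟨1, by rw [he, one_smul]⟩
  rw [eq_one_of_pow_eq_one_of_coprime hrn hζ hζn] at heb
  exact (CommuteUpTo.one_iff.mp heb).symm

theorem norm_mem_scalarSubgroup [FiniteDimensional K V] [Nontrivial V]
    (hA : IsExtraspecial ρ A r) {n : ℕ} {μ : K} (he : ρ (e ^ n) = 1)
    (hrn : r.Coprime n) (hrd : r.Coprime (Module.finrank K (Module.End.eigenspace (ρ e) μ)))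
    (ha : a ∈ A) : (a * e) ^ n * (e ^ n)⁻¹ ∈ scalarSubgroup ρ := by
  by_contra hns
  have hbA := hA.mul_pow_mul_pow_inv_mem ha e n
  have hbe := hA.commute_norm hrn he ha
  set b := (a * e) ^ n * (e ^ n)⁻¹
  obtain ⟨d, hd, hne⟩ := hA.exists_not_commute b hbA hns
  obtain ⟨ζ, hζ, hbd⟩ := hA.exists_commuteUpTo hbA hd
  have hnorm : CommuteUpTo (ζ ^ n) (ρ b) (ρ ((d * e) ^ n * (e ^ n)⁻¹)) := by
    have h := (hbd.mul_right (CommuteUpTo.one_iff.mpr hbe)).pow_right n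
    rwa [mul_one, ← map_mul, ← map_pow, ← apply_mul_inv_of_apply_eq_one he ((d * e) ^ n)] at h
  have hpow := hnorm.pow_finrank_eigenspace_eq_one hbe (hA.commute_norm hrn he hd)
    (representation_injective ρ _) (representation_injective ρ _) μ
  rw [← pow_mul] at hpow
  rw [eq_one_of_pow_eq_one_of_coprime (hrn.mul_right hrd) hζ hpow] at hbd
  exact hne (CommuteUpTo.one_iff.mp hbd)

theorem commute_mul_of_mul_conj_mem [Nontrivial V] (hr : Odd r) (hA : IsExtraspecial ρ A r)
    (he : ∀ a ∈ A, a * (e * a * e⁻¹) ∈ scalarSubgroup ρ)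
    (he' : ∀ a ∈ A, a * (e' * a * e'⁻¹) ∈ scalarSubgroup ρ)
    (hee' : (e * e') ^ 2 ∈ scalarSubgroup ρ) (ha : a ∈ A) : Commute (ρ a) (ρ (e * e')) := by
  set a' := e' * a * e'⁻¹ with ha'
  have hcomm : ⁅e * e', a⁆ ∈ scalarSubgroup ρ := by
    have hconj : a'⁻¹ * (a' * (e * a' * e⁻¹)) * a'⁻¹⁻¹ ∈ scalarSubgroup ρ :=
      scalarSubgroup_normal.conj_mem _ (he a' (hA.normal.conj_mem a ha e')) _
    convert Subgroup.mul_mem _ hconj (Subgroup.inv_mem _ (he' a ha)) using 1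
    rw [commutatorElement_def, ha']
    group
  obtain ⟨ζ, hζ⟩ := _root_.exists_commuteUpTo hcomm
  rw [eq_one_of_pow_eq_one_of_coprime (Nat.coprime_two_right.mpr hr)
    (hζ.pow_eq_one_right (hA.pow_mem a ha)) (hζ.pow_eq_one_left hee')] at hζ
  exact (CommuteUpTo.one_iff.mp hζ).symm

/-- For odd `r` each of the two involutions inverts `A` modulo scalars, so their product
centralises `A`, which then acts on its `-1`-eigenspace, of dimension four. -/
theorem not_odd_of_orthogonal [FiniteDimensional K V] [Nontrivial V]
    {B : LinearMap.BilinForm K V} {u w u' w' : V} (hB : B.IsAlt) (h2 : (2 : K) ≠ 0)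
    (hA : IsExtraspecial ρ A r) (he : IsPlaneDiagonal B (ρ e) u w (-1) (-1))
    (he' : IsPlaneDiagonal B (ρ e') u' w' (-1) (-1)) (ho : PairsOrthogonal B u w u' w') :
    ¬ Odd r := by
  intro hr
  have hneg : (-1 : K) ≠ 1 := fun h => h2 (by linear_combination -h)
  have hr2 : r.Coprime 2 := Nat.coprime_two_right.mpr hr
  have hinv : ∀ {e : G} {u w : V}, IsPlaneDiagonal B (ρ e) u w (-1) (-1) →
      ∀ a ∈ A, a * (e * a * e⁻¹) ∈ scalarSubgroup ρ := fun {e u w} he a ha => by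
    have hsq : ρ (e ^ 2) = 1 := by rw [pow_two, map_mul, he.mul_self_eq_one hB]
    have hdim : Module.finrank K (Module.End.eigenspace (ρ e) (-1)) = 2 := by
      rw [he.eigenspace_eq_span hB hneg, finrank_span_pair hB he.pairing_ne_zero]
    convert hA.norm_mem_scalarSubgroup hsq hr2 (hdim ▸ hr2) ha using 1
    rw [pow_two, pow_two]
    group
  have hee' : (e * e') ^ 2 ∈ scalarSubgroup ρ := ⟨1, by
    rw [map_pow, map_mul, (he.commute_of_orthogonal hB he' ho).mul_pow, pow_two, pow_two,
      he.mul_self_eq_one hB, he'.mul_self_eq_one hB, one_mul, one_smul]⟩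
  have hcomm : ∀ a ∈ A, Commute (ρ a) (ρ (e * e')) := fun a ha =>
    hA.commute_mul_of_mul_conj_mem hr (hinv he) (hinv he') hee' ha
  obtain ⟨a, ha, hns⟩ := hA.exists_notMem
  obtain ⟨b, hb, hab⟩ := hA.exists_not_commute a ha hns
  refine hab (hA.commute_of_finrank_eigenspace (μ := -1) ha hb (hcomm a ha) (hcomm b hb) ?_)
  rw [map_mul, he.eigenspace_mul_eq_sup hB he' hneg ho,
    ho.finrank_sup hB he.pairing_ne_zero he'.pairing_ne_zero]
  exact hr2.pow_right 2

end IsExtraspecial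

end Extraspecial

section KleinTriples

/-- `e₁, e₂, e₃` are the nontrivial elements of (a quotient of) a Klein four group, permuted
cyclically under conjugation by an element `T` of order dividing three. -/
structure IsCyclicKleinTriple {R : Type*} [Ring R] (T e₁ e₂ e₃ : R) : Prop where
  cube : T ^ 3 = 1
  sq₁ : e₁ * e₁ = 1
  sq₂ : e₂ * e₂ = 1
  mul_eq : e₁ * e₂ = e₃
  mul_comm_eq : e₂ * e₁ = e₃
  shift₁ : T * e₁ = e₂ * T
  shift₂ : T * e₂ = e₃ * T
  shift₃ : T * e₃ = e₁ * T

/-- Four times the projection onto the simultaneous eigenspace with eigenvalues `(1, -1, -1)` of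
an `IsCyclicKleinTriple`. -/
def kleinWeight {R : Type*} [Ring R] (e₁ e₂ e₃ : R) : R :=
  1 + e₁ - e₂ - e₃

namespace IsCyclicKleinTriple

variable {R : Type*} [Ring R] {T e₁ e₂ e₃ : R}

theorem mul_kleinWeight₁ (h : IsCyclicKleinTriple T e₁ e₂ e₃) :
    e₁ * kleinWeight e₁ e₂ e₃ = kleinWeight e₁ e₂ e₃ := by
  have h₁₃ : e₁ * e₃ = e₂ := by rw [← h.mul_eq, ← mul_assoc, h.sq₁, one_mul]
  simp only [kleinWeight, mul_sub, mul_add, mul_one, h.sq₁, h.mul_eq, h₁₃]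
  abel

theorem mul_kleinWeight₂ (h : IsCyclicKleinTriple T e₁ e₂ e₃) :
    e₂ * kleinWeight e₁ e₂ e₃ = -kleinWeight e₁ e₂ e₃ := by
  have h₂₃ : e₂ * e₃ = e₁ := by rw [← h.mul_comm_eq, ← mul_assoc, h.sq₂, one_mul]
  simp only [kleinWeight, mul_sub, mul_add, mul_one, h.sq₂, h.mul_comm_eq, h₂₃]
  abel

theorem mul_kleinWeight₃ (h : IsCyclicKleinTriple T e₁ e₂ e₃) :
    e₃ * kleinWeight e₁ e₂ e₃ = -kleinWeight e₁ e₂ e₃ := by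
  nth_rw 1 [← h.mul_comm_eq]
  rw [mul_assoc, h.mul_kleinWeight₁, h.mul_kleinWeight₂]

theorem mul_kleinWeight (h : IsCyclicKleinTriple T e₁ e₂ e₃) :
    T * kleinWeight e₁ e₂ e₃ = kleinWeight e₂ e₃ e₁ * T := by
  simp only [kleinWeight, mul_sub, mul_add, sub_mul, add_mul, mul_one, one_mul, h.shift₁,
    h.shift₂, h.shift₃]

variable {K A : Type*} [Field K] [Ring A] [Algebra K A] {T e₁ e₂ e₃ : A}

theorem kleinWeight_mul_self (h : IsCyclicKleinTriple T e₁ e₂ e₃) :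
    kleinWeight e₁ e₂ e₃ * kleinWeight e₁ e₂ e₃ = (4 : K) • kleinWeight e₁ e₂ e₃ := by
  nth_rw 1 [kleinWeight]
  rw [sub_mul, sub_mul, add_mul, h.mul_kleinWeight₁, h.mul_kleinWeight₂, h.mul_kleinWeight₃,
    one_mul]
  module

theorem eq_one_of_kleinWeight_eq_zero (h : IsCyclicKleinTriple T e₁ e₂ e₃) (h2 : (2 : K) ≠ 0)
    (h₀ : kleinWeight e₁ e₂ e₃ = 0) : e₁ = 1 := by
  have hu : IsUnit T := IsUnit.of_pow_eq_one h.cube three_ne_zero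
  have h₀' := h.mul_kleinWeight
  rw [h₀, mul_zero, eq_comm, hu.mul_left_eq_zero] at h₀'
  have h₃ : e₃ = 1 := by
    have hsum : (2 : K) • e₃ = (2 : K) • (1 : A) :=
      calc (2 : K) • e₃ = (2 : K) • (1 : A) - (kleinWeight e₁ e₂ e₃ + kleinWeight e₂ e₃ e₁) := by
            simp only [kleinWeight]; module
        _ = (2 : K) • (1 : A) := by rw [h₀, h₀', add_zero, sub_zero]
    exact smul_right_injective A h2 hsum
  exact hu.mul_right_cancel (by rw [← h.shift₃, h₃, mul_one, one_mul])

theorem two_smul_kleinWeight (h : IsCyclicKleinTriple T e₁ e₂ e₃) (a b : K) :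
    (e₁ + 1) * ((1 + a • T + b • T ^ 2) * kleinWeight e₁ e₂ e₃) =
      (2 : K) • kleinWeight e₁ e₂ e₃ := by
  have h₁ : e₁ * (T * kleinWeight e₁ e₂ e₃) = -(T * kleinWeight e₁ e₂ e₃) := by
    rw [← mul_assoc, ← h.shift₃, mul_assoc, h.mul_kleinWeight₃, mul_neg]
  have h₂ : e₁ * (T ^ 2 * kleinWeight e₁ e₂ e₃) = -(T ^ 2 * kleinWeight e₁ e₂ e₃) := by
    rw [pow_two, mul_assoc, ← mul_assoc, ← h.shift₃, mul_assoc, ← mul_assoc e₃, ← h.shift₂,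
      mul_assoc, h.mul_kleinWeight₂, mul_neg, mul_neg]
  simp only [add_mul, mul_add, one_mul, smul_mul_assoc, mul_smul_comm, h₁, h₂,
    h.mul_kleinWeight₁]
  module

end IsCyclicKleinTriple

theorem conj_mul_self {M : Type*} [Monoid M] {T X : M} (hT : T ^ 3 = 1) (hX : X * X = 1) :
    T * X * T ^ 2 * (T * X * T ^ 2) = 1 :=
  calc T * X * T ^ 2 * (T * X * T ^ 2) = T * X * T ^ 3 * X * T ^ 2 := by
        simp only [pow_succ, pow_zero, one_mul, mul_assoc]
    _ = 1 := by rw [hT, mul_one, mul_assoc T, hX, mul_one, ← pow_succ', hT]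

theorem isCyclicKleinTriple_smul {K A : Type*} [CommRing K] [Ring A] [Algebra K A] {T y : A}
    {ν : K} (hT : T ^ 3 = 1) (hyy : y * y = 1)
    (hprod : y * (T * y * T ^ 2) * (T * (T * y * T ^ 2) * T ^ 2) = ν • 1)
    (hprod' : T * (T * y * T ^ 2) * T ^ 2 * (T * y * T ^ 2 * y) = ν • 1) :
    IsCyclicKleinTriple T (ν • y) (ν • (T * y * T ^ 2)) (ν • (T * (T * y * T ^ 2) * T ^ 2)) := by
  have hshift : ∀ X : A, T * X = T * X * T ^ 2 * T := fun X => by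
    rw [mul_assoc (T * X), ← pow_succ, hT, mul_one]
  have hyy₂ := conj_mul_self hT hyy
  have hyy₃ := conj_mul_self hT hyy₂
  set y₂ := T * y * T ^ 2 with hy₂
  set y₃ := T * y₂ * T ^ 2 with hy₃
  have h₁₂ : y * y₂ = ν • y₃ := by
    rw [← mul_one (y * y₂), ← hyy₃, ← mul_assoc, hprod, smul_mul_assoc, one_mul]
  have h₂₁ : y₂ * y = ν • y₃ := by
    rw [← one_mul (y₂ * y), ← hyy₃, mul_assoc, hprod', mul_smul_comm, mul_one]
  have hν : (ν * ν) • (1 : A) = 1 :=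
    calc (ν * ν) • (1 : A) = y₂ * y * (y * y₂) := by
          rw [h₁₂, h₂₁, smul_mul_smul_comm, hyy₃]
      _ = 1 := by rw [mul_assoc, ← mul_assoc y, hyy, one_mul, hyy₂]
  have hν' : ∀ X : A, (ν * ν) • X = X := fun X => by
    rw [← one_mul X, ← smul_mul_assoc, hν]
  exact
    { cube := hT
      sq₁ := by rw [smul_mul_smul_comm, hyy, hν]
      sq₂ := by rw [smul_mul_smul_comm, hyy₂, hν]
      mul_eq := by rw [smul_mul_smul_comm, h₁₂, hν']
      mul_comm_eq := by rw [smul_mul_smul_comm, h₂₁, hν']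
      shift₁ := by rw [mul_smul_comm, smul_mul_assoc, hy₂, ← hshift]
      shift₂ := by rw [mul_smul_comm, smul_mul_assoc, hy₃, ← hshift]
      shift₃ := by
        rw [mul_smul_comm, smul_mul_assoc, hshift y₃, hy₃, hy₂]
        congr 2
        calc T * (T * (T * y * T ^ 2) * T ^ 2) * T ^ 2 = T ^ 3 * y * T ^ 3 * T ^ 3 := by
              noncomm_ring
          _ = y := by rw [hT, one_mul, mul_one, mul_one] }

end KleinTriples

section SelfAdjointKleinTriples

variable {K V : Type*} [Field K] [AddCommGroup V] [Module K V] {B : LinearMap.BilinForm K V}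
  {T e₁ e₂ e₃ y : Module.End K V} {ω ν : K}

theorem eq_of_forall_apply_eq (hB : B.IsAlt) (hs : B.SeparatingLeft) {v w : V}
    (h : ∀ x, B x v = B x w) : v = w := by
  refine sub_eq_zero.mp (hs _ fun x => hB.isRefl _ _ ?_)
  rw [map_sub, h, sub_self]

theorem eq_of_isAdjointPair (hB : B.IsAlt) (hs : B.SeparatingLeft) {X Y Z : Module.End K V}
    (hY : B.IsAdjointPair B X Y) (hZ : B.IsAdjointPair B X Z) : Y = Z :=
  LinearMap.ext fun v => eq_of_forall_apply_eq hB hs fun x => by rw [← hY, hZ]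

theorem apply_mem_eigenspace_of_cube (hT : T ^ 3 = 1) (hω : ω * ω + ω + 1 = 0) (v : V) :
    (1 + (ω * ω) • T + ω • T ^ 2 : Module.End K V) v ∈ Module.End.eigenspace T ω := by
  have hω3 : ω ^ 3 = 1 := by linear_combination (ω - 1) * hω
  rw [Module.End.mem_eigenspace_iff, ← Module.End.mul_apply, ← LinearMap.smul_apply]
  congr 1
  rw [mul_add, mul_add, mul_one, mul_smul_comm, mul_smul_comm, ← pow_succ', hT, ← pow_two,
    smul_add, smul_add, smul_smul, smul_smul, ← pow_two ω, ← pow_succ', hω3, one_smul, pow_two T]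
  abel

namespace IsCyclicKleinTriple

theorem exists_two_smul_kleinWeight_apply (h : IsCyclicKleinTriple T e₁ e₂ e₃)
    (hω : ω * ω + ω + 1 = 0) {x : V} (hx : Module.End.eigenspace T ω ≤ K ∙ x) (v : V) :
    ∃ a : K, (2 : K) • kleinWeight e₁ e₂ e₃ v = a • (e₁ + 1) x := by
  obtain ⟨a, ha⟩ := Submodule.mem_span_singleton.mp
    (hx (apply_mem_eigenspace_of_cube h.cube hω (kleinWeight e₁ e₂ e₃ v)))
  refine ⟨a, ?_⟩
  rw [← map_smul (e₁ + 1), ha, ← Module.End.mul_apply, ← Module.End.mul_apply, mul_assoc,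
    h.two_smul_kleinWeight, LinearMap.smul_apply]

theorem isSelfAdjoint_kleinWeight (h : IsCyclicKleinTriple T e₁ e₂ e₃) (h₁ : B.IsSelfAdjoint e₁)
    (h₂ : B.IsSelfAdjoint e₂) : B.IsSelfAdjoint (kleinWeight e₁ e₂ e₃ : Module.End K V) := by
  have h₃ : B.IsAdjointPair B e₃ e₃ := by
    have := h₁.mul h₂
    rwa [h.mul_eq, h.mul_comm_eq] at this
  exact ((LinearMap.isAdjointPair_one.add h₁).sub h₂).sub h₃

/-- The projection of the weight space to an eigenspace of `T` is injective, so the weight space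
is at most one-dimensional; but the form restricted to it is nondegenerate and alternating. -/
theorem eq_one (hB : B.IsAlt) (hs : B.SeparatingLeft) (h2 : (2 : K) ≠ 0)
    (hω : ω * ω + ω + 1 = 0) (h : IsCyclicKleinTriple T e₁ e₂ e₃) (h₁ : B.IsSelfAdjoint e₁)
    (h₂ : B.IsSelfAdjoint e₂) {x : V} (hx : Module.End.eigenspace T ω ≤ K ∙ x) : e₁ = 1 := by
  refine h.eq_one_of_kleinWeight_eq_zero h2 (LinearMap.ext fun v => hs _ fun v' => ?_)
  obtain ⟨a, ha⟩ := h.exists_two_smul_kleinWeight_apply hω hx v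
  obtain ⟨b, hb⟩ := h.exists_two_smul_kleinWeight_apply hω hx v'
  have hisotropic :
      B ((2 : K) • kleinWeight e₁ e₂ e₃ v) ((2 : K) • kleinWeight e₁ e₂ e₃ v') = 0 := by
    rw [ha, hb, map_smul, map_smul, LinearMap.smul_apply, hB.self_eq_zero, smul_zero, smul_zero]
  have hidem : B (kleinWeight e₁ e₂ e₃ v) (kleinWeight e₁ e₂ e₃ v') =
      4 * B (kleinWeight e₁ e₂ e₃ v) v' := by
    rw [← h.isSelfAdjoint_kleinWeight h₁ h₂, ← Module.End.mul_apply,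
      h.kleinWeight_mul_self (K := K)]
    simp
  have h4 : (4 : K) ≠ 0 := by convert mul_ne_zero h2 h2 using 1; norm_num
  simpa [hidem, h2, h4] using hisotropic

end IsCyclicKleinTriple

theorem isSelfAdjoint_conj (hT : T ^ 3 = 1) (hTB : ∀ x y, B (T x) (T y) = B x y)
    (hy : B.IsSelfAdjoint y) : B.IsSelfAdjoint (T * y * T ^ 2) := by
  have hadj : B.IsAdjointPair B T ⇑(T ^ 2) := fun x v => by
    rw [← hTB x, ← Module.End.mul_apply, ← pow_succ', hT, Module.End.one_apply]
  have hadj' : B.IsAdjointPair B ⇑(T ^ 2) T := fun x v => by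
    rw [← hTB, ← Module.End.mul_apply, ← pow_succ', hT, Module.End.one_apply]
  exact (hadj.mul hy).mul hadj'

theorem isCyclicKleinTriple_of_cube (hB : B.IsAlt) (hs : B.SeparatingLeft) (hT : T ^ 3 = 1)
    (hTB : ∀ x y, B (T x) (T y) = B x y) (hy : B.IsSelfAdjoint y) (hyy : y * y = 1)
    (hyT : (y * T) ^ 3 = ν • 1) :
    IsCyclicKleinTriple T (ν • y) (ν • (T * y * T ^ 2)) (ν • (T * (T * y * T ^ 2) * T ^ 2)) := by
  have hprod : y * (T * y * T ^ 2) * (T * (T * y * T ^ 2) * T ^ 2) = ν • 1 := by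
    calc y * (T * y * T ^ 2) * (T * (T * y * T ^ 2) * T ^ 2)
        = y * T * y * (T ^ 3 * T) * y * (T ^ 3 * T) := by noncomm_ring
      _ = ν • 1 := by
          rw [hT, one_mul, ← hyT]
          noncomm_ring
  have hadj₂ := isSelfAdjoint_conj hT hTB hy
  have hadj := (LinearMap.IsAdjointPair.mul hy hadj₂).mul (isSelfAdjoint_conj hT hTB hadj₂)
  rw [hprod] at hadj
  exact isCyclicKleinTriple_smul hT hyy hprod
    (eq_of_isAdjointPair hB hs hadj (LinearMap.isAdjointPair_one.smul ν))

theorem eq_smul_one_of_cube (hB : B.IsAlt) (hs : B.SeparatingLeft) (h2 : (2 : K) ≠ 0)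
    (hω : ω * ω + ω + 1 = 0) (hT : T ^ 3 = 1) (hTB : ∀ x y, B (T x) (T y) = B x y)
    (hy : B.IsSelfAdjoint y) (hyy : y * y = 1) (hyT : (y * T) ^ 3 = ν • 1) {x : V}
    (hx : Module.End.eigenspace T ω ≤ K ∙ x) : y = ν • 1 := by
  have h := isCyclicKleinTriple_of_cube hB hs hT hTB hy hyy hyT
  have hone : ν • y = 1 := h.eq_one hB hs h2 hω (LinearMap.IsAdjointPair.smul ν hy)
    (LinearMap.IsAdjointPair.smul ν (isSelfAdjoint_conj hT hTB hy)) hx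
  calc y = y * ν • y := by rw [hone, mul_one]
    _ = ν • 1 := by rw [mul_smul_comm, hyy]

end SelfAdjointKleinTriples

section SimilitudeActions

open scoped commutatorElement

theorem exists_notMem_forall_commutator_mem {G : Type*} [Group G] [Finite G] {p : ℕ}
    [Fact p.Prime] {N A S : Subgroup G} [N.Normal] [A.Normal] (hpow : ∀ a ∈ A, a ^ p ∈ N)
    (hA : ∃ a ∈ A, a ∉ N) (hS : IsPGroup p S) : ∃ z ∈ A, z ∉ N ∧ ∀ s ∈ S, ⁅s, z⁆ ∈ N := by
  let X := A.map (QuotientGroup.mk' N)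
  have : X.Normal := ‹A.Normal›.map _ (QuotientGroup.mk'_surjective N)
  let _ : MulAction S X := MulAction.compHom X
    ((MulAut.conjNormal (H := X)).comp ((QuotientGroup.mk' N).comp S.subtype))
  have hdvd : p ∣ Nat.card X := by
    obtain ⟨a, ha, haN⟩ := hA
    have horder : orderOf (⟨a, Subgroup.mem_map_of_mem _ ha⟩ : X) = p := by
      refine orderOf_eq_prime (Subtype.ext ?_) fun h => haN ?_
      · exact (QuotientGroup.eq_one_iff (a ^ p)).mpr (hpow a ha)
      · exact (QuotientGroup.eq_one_iff a).mp (congrArg Subtype.val h)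
    rw [← horder]
    exact orderOf_dvd_natCard _
  obtain ⟨⟨_, z, hz, rfl⟩, hfix, hne⟩ := hS.exists_fixed_point_of_prime_dvd_card_of_fixed_point X
    hdvd (a := 1) fun s =>
      map_one ((MulAut.conjNormal (H := X)) (QuotientGroup.mk' N s))
  refine ⟨z, hz, fun h => hne (Subtype.ext ((QuotientGroup.eq_one_iff z).mpr h).symm),
    fun s hs => ?_⟩
  have hconj : (s : G ⧸ N) * z * (s : G ⧸ N)⁻¹ = z := congrArg Subtype.val (hfix ⟨s, hs⟩)
  rw [← QuotientGroup.eq_one_iff, commutatorElement_def]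
  exact mul_inv_eq_one.mpr hconj

variable {K V G : Type*} [Field K] [AddCommGroup V] [Module K V] [Group G]

/-- `ρ` acts by similitudes of `B`, the multiplier of `g` being `c g`. -/
def ActsBySimilitudes (B : LinearMap.BilinForm K V) (ρ : Representation K G V) (c : G → K) :
    Prop :=
  ∀ g x y, B (ρ g x) (ρ g y) = c g * B x y

variable {B : LinearMap.BilinForm K V} {ρ : Representation K G V} {c : G → K}
  {A S : Subgroup G} {T Y Z : Module.End K V} {u w v₁ v₂ : V} {α β χ ω : K}

theorem ActsBySimilitudes.multiplier_ne_zero (hρ : ActsBySimilitudes B ρ c) (huw : B u w ≠ 0)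
    (g : G) : c g ≠ 0 := by
  intro h
  have := hρ g (ρ g⁻¹ u) (ρ g⁻¹ w)
  rw [ρ.self_inv_apply, ρ.self_inv_apply, h, zero_mul] at this
  exact huw this

theorem ne_one_of_mul_self_add_self (h3 : (3 : K) ≠ 0) (hω : ω * ω + ω + 1 = 0) : ω ≠ 1 := by
  rintro rfl
  exact h3 (by linear_combination hω)

theorem ne_mul_self_of_mul_self_add_self (h3 : (3 : K) ≠ 0) (hω : ω * ω + ω + 1 = 0) :
    ω ≠ ω * ω :=
  fun h => h3 (by linear_combination 4 * hω - (2 * ω + 1) * (hω + h))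

theorem isSelfAdjoint_of_isometry (hY : ∀ x y, B (Y x) (Y y) = B x y) (hYY : Y * Y = 1) :
    B.IsSelfAdjoint Y := fun x v => by
  rw [← hY, ← Module.End.mul_apply, hYY, Module.End.one_apply]

namespace IsPlaneDiagonal

theorem eq_one_of_commuteUpTo (hB : B.IsAlt) (h : IsPlaneDiagonal B T u w α β) (hαβ : α ≠ β)
    {d : K} (hd : d ≠ 0) (hZ : ∀ x y, B (Z x) (Z y) = d * B x y) (hTZ : CommuteUpTo χ T Z)
    (ho : PairsOrthogonal B u w v₁ v₂) (hv : B v₁ v₂ ≠ 0) : χ = 1 := by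
  by_contra hχ
  obtain ⟨x, hx⟩ := h.exists_eigenspace_le_span_singleton hB hαβ hχ
  have hmem : ∀ v, B u v = 0 → B w v = 0 → Z v ∈ K ∙ x := fun v hu hw => by
    refine hx (Module.End.mem_eigenspace_iff.mpr ?_)
    rw [← Module.End.mul_apply, hTZ, LinearMap.smul_apply, Module.End.mul_apply,
      h.apply_of_orthogonal v hu hw]
  obtain ⟨a, ha⟩ := Submodule.mem_span_singleton.mp (hmem v₁ ho.left_left ho.right_left)
  obtain ⟨b, hb⟩ := Submodule.mem_span_singleton.mp (hmem v₂ ho.left_right ho.right_right)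
  refine mul_ne_zero hd hv ?_
  rw [← hZ, ← ha, ← hb]
  simp [hB.self_eq_zero]

theorem pow_three_eq_one (hB : B.IsAlt) (h : IsPlaneDiagonal B T u w ω (ω * ω))
    (hω : ω * ω + ω + 1 = 0) : T ^ 3 = 1 := by
  rw [pow_succ, pow_two]
  refine eq_one hB (u := u) (w := w) ?_
  convert (h.mul h).mul h using 1
  · linear_combination (1 - ω) * hω
  · linear_combination (1 - ω) * (1 + ω ^ 3) * hω

end IsPlaneDiagonal

namespace IsQuaternionPair

variable {ι : K} {I J : Module.End K V}

theorem exists_smul_isometry (hB : B.IsAlt) (h2 : (2 : K) ≠ 0)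
    (h : IsQuaternionPair B ι I J u w) (hI : Commute I Z) (hJ : Commute J Z) {d e : K}
    (he : e ≠ 0) (hZ : ∀ x y, B (Z x) (Z y) = e * B x y) (hZZ : Z * Z = d • 1) :
    ∃ α : K, α ≠ 0 ∧ (α • Z) * (α • Z) = 1 ∧ ∀ x y, B ((α • Z) x) ((α • Z) y) = B x y := by
  obtain ⟨α, hu, hw⟩ := h.exists_smul_of_commute hB h2 hI hJ
  have hαe : α * α = e := by
    refine mul_right_cancel₀ h.diagonal.pairing_ne_zero ?_
    rw [← hZ, hu, hw, map_smul, map_smul, LinearMap.smul_apply, smul_eq_mul, smul_eq_mul, mul_assoc]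
  have hαd : α * α = d := by
    refine smul_left_injective K h.diagonal.left_ne_zero ?_
    have := LinearMap.congr_fun hZZ u
    rwa [Module.End.mul_apply, hu, map_smul, hu, smul_smul] at this
  have hα : α ≠ 0 := by
    rintro rfl
    exact he (by rw [← hαe, mul_zero])
  refine ⟨α⁻¹, inv_ne_zero hα, ?_, fun x y => ?_⟩
  · rw [smul_mul_smul_comm, hZZ, smul_smul, ← hαd, ← mul_inv, inv_mul_cancel₀, one_smul]
    exact mul_ne_zero hα hα
  · simp only [LinearMap.smul_apply, map_smul, smul_eq_mul, hZ, ← hαe]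
    field_simp

end IsQuaternionPair

namespace IsExtraspecial

/-- Modulo scalars `S` fixes a nontrivial element `z` of `A`, so `ρ z` commutes with `ρ s` up to a
scalar, which is `1` because `ρ s` fixes a nondegenerate plane pointwise. -/
theorem exists_forall_commute [Finite G] (hB : B.IsAlt) (hρ : ActsBySimilitudes B ρ c)
    {p : ℕ} [Fact p.Prime] (hA : IsExtraspecial ρ A p) (hS : IsPGroup p S) :
    ∃ z ∈ A, z ∉ scalarSubgroup ρ ∧ ∀ s ∈ S, ∀ {u w v₁ v₂ : V} {α β : K},
      IsPlaneDiagonal B (ρ s) u w α β → α ≠ β → PairsOrthogonal B u w v₁ v₂ → B v₁ v₂ ≠ 0 →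
        Commute (ρ s) (ρ z) := by
  have := hA.normal
  obtain ⟨z, hzA, hz, hfix⟩ := exists_notMem_forall_commutator_mem hA.pow_mem hA.exists_notMem hS
  refine ⟨z, hzA, hz, fun s hs {u w v₁ v₂ α β} h hαβ ho hv => ?_⟩
  obtain ⟨χ, hχ⟩ := _root_.exists_commuteUpTo (hfix s hs)
  rw [h.eq_one_of_commuteUpTo hB hαβ (hρ.multiplier_ne_zero hv z) (hρ z) hχ ho hv] at hχ
  exact CommuteUpTo.one_iff.mp hχ

variable [FiniteDimensional K V] [Nontrivial V]

theorem exists_mul_pow_three_eq (hB : B.IsAlt) (hA : IsExtraspecial ρ A 2)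
    (hω : ω * ω + ω + 1 = 0) (h3 : (3 : K) ≠ 0) {t z : G} (hz : z ∈ A)
    (ht : IsPlaneDiagonal B (ρ t) u w ω (ω * ω)) : ∃ ν : K, (ρ z * ρ t) ^ 3 = ν • 1 := by
  have ht3 : ρ (t ^ 3) = 1 := by rw [map_pow, ht.pow_three_eq_one hB hω]
  have hrank : Module.finrank K (Module.End.eigenspace (ρ t) ω) = 1 := by
    rw [ht.eigenspace_eq_span_singleton hB
      (ne_mul_self_of_mul_self_add_self h3 hω) (ne_one_of_mul_self_add_self h3 hω),
      finrank_span_singleton ht.left_ne_zero]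
  obtain ⟨ν, hν⟩ := hA.norm_mem_scalarSubgroup ht3 (by norm_num)
    (hrank ▸ Nat.coprime_one_right 2) hz
  exact ⟨ν, by rw [← hν, apply_mul_inv_of_apply_eq_one ht3, map_pow, map_mul]⟩

end IsExtraspecial

theorem not_isExtraspecial_two [Finite G] [FiniteDimensional K V] [Nontrivial V] (hB : B.IsAlt)
    (hs : B.SeparatingLeft) (h2 : (2 : K) ≠ 0) (h3 : (3 : K) ≠ 0) (hω : ω * ω + ω + 1 = 0)
    (hρ : ActsBySimilitudes B ρ c) (hS : IsPGroup 2 S) {i j t : G} {ι : K} (hi : i ∈ S)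
    (hj : j ∈ S) (hq : IsQuaternionPair B ι (ρ i) (ρ j) u w) (ho : PairsOrthogonal B u w v₁ v₂)
    (hv : B v₁ v₂ ≠ 0) {u' w' : V} (ht : IsPlaneDiagonal B (ρ t) u' w' ω (ω * ω)) :
    ¬ IsExtraspecial ρ A 2 := by
  intro hA
  obtain ⟨z, hzA, hz, hcomm⟩ := hA.exists_forall_commute hB hρ hS
  have hoJ : PairsOrthogonal B (u - ι • w) (u + ι • w) v₁ v₂ := by
    constructor <;> simp [ho.left_left, ho.left_right, ho.right_left, ho.right_right]
  have hzi := hcomm i hi hq.diagonal (hq.ne_neg h2) ho hv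
  have hzj := hcomm j hj (hq.isPlaneDiagonal_right hB h2) (hq.ne_neg h2) hoJ hv
  obtain ⟨d, hd⟩ := hA.pow_mem z hzA
  obtain ⟨α, hα, hsq, hiso⟩ := hq.exists_smul_isometry hB h2 hzi hzj
    (hρ.multiplier_ne_zero hv z) (hρ z) (by rw [← hd, map_pow, pow_two])
  have hω3 : c t = 1 := by
    rw [← ht.mul_eq_of_similitude (hρ t)]
    linear_combination (ω - 1) * hω
  obtain ⟨ν, hν⟩ := hA.exists_mul_pow_three_eq hB hω h3 hzA ht
  obtain ⟨x, hx⟩ := ht.exists_eigenspace_le_span_singleton hB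
    (ne_mul_self_of_mul_self_add_self h3 hω) (ne_one_of_mul_self_add_self h3 hω)
  have hscalar := eq_smul_one_of_cube hB hs h2 hω (ht.pow_three_eq_one hB hω)
    (fun x y => by rw [hρ, hω3, one_mul]) (isSelfAdjoint_of_isometry hiso hsq) hsq
    (ν := α ^ 3 * ν) (by rw [smul_mul_assoc, smul_pow, hν, smul_smul]) hx
  refine hz ⟨α⁻¹ * (α ^ 3 * ν), ?_⟩
  rw [mul_smul, ← hscalar, inv_smul_smul₀ hα]

end SimilitudeActions

section SolvableGroups

open scoped commutatorElement

theorem exists_normal_le_centralizer {Q : Type*} [Group Q] [Group.IsSolvable Q] [Nontrivial Q] :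
    ∃ D : Subgroup Q, D.Normal ∧ D ≠ ⊥ ∧ D ≤ Subgroup.centralizer D := by
  classical
  have hex : ∃ n, derivedSeries Q n = ⊥ := Group.IsSolvable.solvable
  obtain ⟨k, hk⟩ : ∃ k, Nat.find hex = k + 1 := Nat.exists_eq_succ_of_ne_zero fun h => by
    have hspec := Nat.find_spec hex
    rw [h, derivedSeries_zero] at hspec
    exact top_ne_bot hspec
  refine ⟨derivedSeries Q k, derivedSeries_normal Q k, Nat.find_min hex (by lia), ?_⟩
  rw [← Subgroup.commutator_eq_bot_iff_le_centralizer, ← derivedSeries_succ, ← hk]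
  exact Nat.find_spec hex

/-- The subgroup of elements of order dividing `n` of a commutative subgroup `D`. -/
def powTorsion {Q : Type*} [Group Q] (D : Subgroup Q) (hD : D ≤ Subgroup.centralizer D) (n : ℕ) :
    Subgroup Q where
  carrier := {g | g ∈ D ∧ g ^ n = 1}
  one_mem' := ⟨D.one_mem, one_pow n⟩
  mul_mem' {a b} ha hb := ⟨D.mul_mem ha.1 hb.1, by
    rw [Commute.mul_pow (hD hb.1 a ha.1), ha.2, hb.2, one_mul]⟩
  inv_mem' ha := ⟨D.inv_mem ha.1, by rw [inv_pow, ha.2, inv_one]⟩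

theorem exists_normal_pow_eq_one {Q : Type*} [Group Q] [Finite Q] [Group.IsSolvable Q]
    [Nontrivial Q] : ∃ (X : Subgroup Q) (r : ℕ), r.Prime ∧ X.Normal ∧ X ≠ ⊥ ∧
      X ≤ Subgroup.centralizer X ∧ ∀ x ∈ X, x ^ r = 1 := by
  obtain ⟨D, hDn, hD, hDc⟩ := exists_normal_le_centralizer (Q := Q)
  obtain ⟨r, hr, hdvd⟩ := Nat.exists_prime_and_dvd fun h => hD (D.card_eq_one.mp h)
  have := Fact.mk hr
  obtain ⟨x, hx⟩ := exists_prime_orderOf_dvd_card' r hdvd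
  refine ⟨powTorsion D hDc r, r, hr, ⟨fun a ha g => ⟨hDn.conj_mem a ha.1 g, ?_⟩⟩, fun h => ?_,
    fun a ha b hb => hDc ha.1 b hb.1, fun a ha => ha.2⟩
  · rw [conj_pow, ha.2, mul_one, mul_inv_cancel]
  · have hmem : (x : Q) ∈ powTorsion D hDc r :=
      ⟨x.2, by rw [← hx, ← Subgroup.orderOf_coe, pow_orderOf_eq_one]⟩
    rw [h, Subgroup.mem_bot, ← orderOf_eq_one_iff, Subgroup.orderOf_coe, hx] at hmem
    exact hr.ne_one hmem

variable {K V G : Type*} [Field K] [AddCommGroup V] [Module K V] [Group G]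
  {ρ : Representation K G V}

theorem exists_normal_elementary_mod_scalars [Finite G] [Group.IsSolvable G]
    (hns : ∃ g, g ∉ scalarSubgroup ρ) : ∃ (A : Subgroup G) (r : ℕ), r.Prime ∧ A.Normal ∧
      (∃ a ∈ A, a ∉ scalarSubgroup ρ) ∧
      (∀ a ∈ A, ∀ b ∈ A, ⁅a, b⁆ ∈ scalarSubgroup ρ) ∧ ∀ a ∈ A, a ^ r ∈ scalarSubgroup ρ := by
  obtain ⟨g, hg⟩ := hns
  have : Nontrivial (G ⧸ scalarSubgroup ρ) :=
    ⟨g, 1, fun h => hg ((QuotientGroup.eq_one_iff g).mp h)⟩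
  obtain ⟨X, r, hr, hXn, hX, hXc, hXr⟩ :=
    exists_normal_pow_eq_one (Q := G ⧸ scalarSubgroup ρ)
  refine ⟨X.comap (QuotientGroup.mk' _), r, hr, hXn.comap _, ?_, fun a ha b hb => ?_,
    fun a ha => (QuotientGroup.eq_one_iff _).mp (hXr _ ha)⟩
  · obtain ⟨x, hx, hx1⟩ := X.bot_or_exists_ne_one.resolve_left hX
    obtain ⟨a, rfl⟩ := QuotientGroup.mk'_surjective _ x
    exact ⟨a, hx, fun h => hx1 ((QuotientGroup.eq_one_iff a).mpr h)⟩
  · rw [← QuotientGroup.eq_one_iff, ← QuotientGroup.mk'_apply, map_commutatorElement,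
      commutatorElement_eq_one_iff_mul_comm]
    exact hXc hb _ ha

theorem commute_iff_commute_mk {a b : G} :
    Commute (ρ a) (ρ b) ↔ Commute (a : G ⧸ ρ.ker) (b : G ⧸ ρ.ker) := by
  rw [commute_iff_eq, commute_iff_eq, ← map_mul, ← map_mul, ← QuotientGroup.mk_mul,
    ← QuotientGroup.mk_mul, eq_comm, MonoidHom.eq_iff, QuotientGroup.eq]

theorem exists_normal_commute_or_isExtraspecial [Finite G] [Group.IsSolvable G]
    (hns : ∃ g, g ∉ scalarSubgroup ρ) :
    (∃ A : Subgroup G, A.Normal ∧ (∃ a ∈ A, a ∉ scalarSubgroup ρ) ∧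
      ∀ a ∈ A, ∀ b ∈ A, Commute (ρ a) (ρ b)) ∨
    ∃ (A : Subgroup G) (r : ℕ), r.Prime ∧ IsExtraspecial ρ A r := by
  obtain ⟨A, r, hr, hA, hmem, hcomm, hpow⟩ := exists_normal_elementary_mod_scalars hns
  by_cases hnc : ∀ a ∈ A, a ∉ scalarSubgroup ρ → ∃ b ∈ A, ¬ Commute (ρ a) (ρ b)
  · exact Or.inr ⟨A, r, hr, hA, hpow, hcomm, hmem, hnc⟩
  · push Not at hnc
    obtain ⟨a, ha, hna, hac⟩ := hnc
    have := hA.map (QuotientGroup.mk' ρ.ker) (QuotientGroup.mk'_surjective _)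
    let C := (Subgroup.centralizer (A.map (QuotientGroup.mk' ρ.ker))).comap
      (QuotientGroup.mk' ρ.ker)
    have hC : ∀ x, x ∈ C ↔ ∀ b ∈ A, Commute (ρ x) (ρ b) := fun x => by
      simp only [C, Subgroup.mem_comap, Subgroup.mem_centralizer_iff, commute_iff_commute_mk]
      exact ⟨fun h b hb => (h _ (Subgroup.mem_map_of_mem _ hb)).symm, by
        rintro h _ ⟨b, hb, rfl⟩
        exact (h b hb).symm⟩
    exact Or.inl ⟨A ⊓ C, inferInstance, ⟨a, ⟨ha, (hC a).mpr hac⟩, hna⟩,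
      fun x hx y hy => (hC x).mp hx.2 y hy.1⟩

end SolvableGroups

section WeightSpaces

variable {K V G : Type*} [Field K] [AddCommGroup V] [Module K V] [Group G]

/-- The simultaneous eigenspace of the operators `ρ a`, `a ∈ A`, for the eigenvalues `χ a`. -/
def weightSpace (ρ : Representation K G V) (A : Subgroup G) (χ : A → K) : Submodule K V :=
  ⨅ a : A, Module.End.eigenspace (ρ a) (χ a)

variable {ρ : Representation K G V} {A : Subgroup G} {χ ψ : A → K} {v x y : V} {g : G}

theorem mem_weightSpace : v ∈ weightSpace ρ A χ ↔ ∀ a : A, ρ a v = χ a • v := by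
  simp only [weightSpace, Submodule.mem_iInf, Module.End.mem_eigenspace_iff]

theorem weight_unique (hχ : v ∈ weightSpace ρ A χ) (hψ : v ∈ weightSpace ρ A ψ) (hv : v ≠ 0) :
    χ = ψ :=
  funext fun a => smul_left_injective K hv
    ((mem_weightSpace.mp hχ a).symm.trans (mem_weightSpace.mp hψ a))

theorem isSemisimple_of_card_ne_zero [Finite G] (hG : (Nat.card G : K) ≠ 0)
    (ρ : Representation K G V) (g : G) : Module.End.IsSemisimple (ρ g) := by
  have hsq : Squarefree (Polynomial.X ^ Nat.card G - 1 : Polynomial K) :=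
    (Polynomial.separable_X_pow_sub_C (1 : K) hG one_ne_zero).squarefree
  refine Module.End.isSemisimple_of_squarefree_aeval_eq_zero hsq ?_
  rw [map_sub, map_pow, Polynomial.aeval_X, map_one, ← map_pow, pow_card_eq_one', map_one, sub_self]

theorem weightSpace_eq_iInf_maxGenEigenspace [Finite G] (hG : (Nat.card G : K) ≠ 0) :
    weightSpace ρ A = fun χ => ⨅ a : A, Module.End.maxGenEigenspace (ρ a) (χ a) :=
  funext fun _ => iInf_congr fun a =>
    ((isSemisimple_of_card_ne_zero hG ρ a).isFinitelySemisimple.maxGenEigenspace_eq_eigenspace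
      _).symm

theorem iSup_weightSpace_eq_top [IsAlgClosed K] [FiniteDimensional K V] [Finite G]
    (hG : (Nat.card G : K) ≠ 0) (hA : ∀ a ∈ A, ∀ b ∈ A, Commute (ρ a) (ρ b)) :
    ⨆ χ, weightSpace ρ A χ = ⊤ := by
  rw [weightSpace_eq_iInf_maxGenEigenspace hG]
  exact Module.End.iSup_iInf_maxGenEigenspace_eq_top_of_iSup_maxGenEigenspace_eq_top_of_commute
    (fun a : A => ρ a) (fun a b _ => hA a a.2 b b.2)
    fun a => Module.End.iSup_maxGenEigenspace_eq_top _

theorem iSupIndep_weightSpace [Finite G]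
    (hG : (Nat.card G : K) ≠ 0) (hA : ∀ a ∈ A, ∀ b ∈ A, Commute (ρ a) (ρ b)) :
    iSupIndep (weightSpace ρ A) := by
  rw [weightSpace_eq_iInf_maxGenEigenspace hG]
  exact Module.End.independent_iInf_maxGenEigenspace_of_forall_mapsTo (fun a : A => ρ a)
    fun a b => Module.End.mapsTo_maxGenEigenspace_of_comm (hA b b.2 a a.2)

theorem linearIndependent_pair_of_mem_weightSpace (hx : x ∈ weightSpace ρ A χ)
    (hy : y ∈ weightSpace ρ A ψ) (hx0 : x ≠ 0) (hy0 : y ≠ 0) (hne : χ ≠ ψ) :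
    LinearIndependent K ![x, y] := by
  refine (LinearIndependent.pair_iff' hx0).mpr fun a ha => hne (weight_unique ?_ hy hy0)
  exact ha ▸ Submodule.smul_mem _ a hx

/-- The action of `G` on the weights of a normal subgroup by conjugation,
`(g • χ) a = χ (g⁻¹ * a * g)`. -/
@[reducible] def weightAction (A : Subgroup G) [A.Normal] (K : Type*) : MulAction G (A → K) :=
  letI := MulAction.compHom A (MulAut.conjNormal : G →* MulAut A)
  arrowAction

attribute [local instance] weightAction

variable [A.Normal]

theorem apply_mem_weightSpace_smul (g : G) (hv : v ∈ weightSpace ρ A χ) :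
    ρ g v ∈ weightSpace ρ A (g • χ) := by
  refine mem_weightSpace.mpr fun a => ?_
  have key := mem_weightSpace.mp hv (MulAut.conjNormal g⁻¹ a)
  have hconj : ρ a (ρ g v) = ρ g (ρ (g⁻¹ * a * g) v) := by
    simp only [← Module.End.mul_apply, ← map_mul, mul_assoc, mul_inv_cancel_left]
  rw [MulAut.conjNormal_apply, inv_inv] at key
  rw [hconj, key, map_smul]
  rfl

theorem smul_weight_eq_of_apply_mem (hv : v ∈ weightSpace ρ A χ) (hv0 : v ≠ 0)
    (h : ρ g v ∈ weightSpace ρ A χ) : g • χ = χ :=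
  weight_unique (apply_mem_weightSpace_smul g hv) h
    ((map_ne_zero_iff _ (representation_injective ρ g)).mpr hv0)

theorem smul_weight_eq_of_apply_eq (hv : v ∈ weightSpace ρ A χ) (hv0 : v ≠ 0)
    (h : ρ g v = v) : g • χ = χ :=
  smul_weight_eq_of_apply_mem hv hv0 (h.symm ▸ hv)

theorem apply_mem_weightSpace (h : g • χ = χ) (hv : v ∈ weightSpace ρ A χ) :
    ρ g v ∈ weightSpace ρ A χ := by
  simpa only [h] using apply_mem_weightSpace_smul g hv

end WeightSpaces

section DualWeights

variable {K V G : Type*} [Field K] [AddCommGroup V] [Module K V] [Group G]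
  {B : LinearMap.BilinForm K V} {ρ : Representation K G V} {c : G → K} {A : Subgroup G}
  {χ ψ φ : A → K} {v x y : V} {g : G}

/-- The only weight whose weight space can fail to be orthogonal to that of `χ`, for a group
acting by similitudes with multiplier `c`. -/
def dualWeight (c : G → K) (χ : A → K) : A → K := fun a => c a / χ a

theorem dualWeight_dualWeight (hc : ∀ g, c g ≠ 0) (χ : A → K) :
    dualWeight c (dualWeight c χ) = χ :=
  funext fun _ => div_div_cancel₀ (hc _)

theorem eq_dualWeight (hρ : ActsBySimilitudes B ρ c) (hx : x ∈ weightSpace ρ A χ)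
    (hy : y ∈ weightSpace ρ A ψ) (hxy : B x y ≠ 0) : ψ = dualWeight c χ := by
  funext a
  have hmul : χ a * ψ a = c a := by
    refine mul_right_cancel₀ hxy ?_
    rw [← hρ, mem_weightSpace.mp hx, mem_weightSpace.mp hy]
    simp only [map_smul, LinearMap.smul_apply, smul_eq_mul]
    ring
  exact eq_div_of_mul_eq (left_ne_zero_of_mul (hmul ▸ hρ.multiplier_ne_zero hxy a))
    (mul_comm (ψ a) _ ▸ hmul)

theorem eq_zero_of_ne_dualWeight (hρ : ActsBySimilitudes B ρ c) (hx : x ∈ weightSpace ρ A χ)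
    (hy : y ∈ weightSpace ρ A ψ) (hne : ψ ≠ dualWeight c χ) : B x y = 0 :=
  not_not.mp fun h => hne (eq_dualWeight hρ hx hy h)

theorem dualWeight_eq_self (hρ : ActsBySimilitudes B ρ c) (hx : x ∈ weightSpace ρ A χ)
    (hy : y ∈ weightSpace ρ A χ) (hxy : B x y ≠ 0) : dualWeight c χ = χ :=
  (eq_dualWeight hρ hx hy hxy).symm

theorem exists_weight_apply_ne_zero (hA : ⨆ χ, weightSpace ρ A χ = ⊤) {f : Module.Dual K V}
    (hf : f ≠ 0) : ∃ χ, ∃ v ∈ weightSpace ρ A χ, f v ≠ 0 := by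
  by_contra! h
  refine hf (LinearMap.ker_eq_top.mp (top_le_iff.mp ?_))
  exact hA ▸ iSup_le h

theorem exists_mem_weightSpace_apply_ne_zero (hs : B.SeparatingLeft)
    (hρ : ActsBySimilitudes B ρ c) (hA : ⨆ χ, weightSpace ρ A χ = ⊤) (hφ : dualWeight c φ = φ)
    (hv : v ∈ weightSpace ρ A φ) (hv0 : v ≠ 0) : ∃ x ∈ weightSpace ρ A φ, B v x ≠ 0 := by
  obtain ⟨χ, x, hx, hvx⟩ := exists_weight_apply_ne_zero hA (f := B v)
    fun h => hv0 (hs v fun x => by rw [h, LinearMap.zero_apply])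
  exact ⟨x, by rwa [eq_dualWeight hρ hv hx hvx, hφ] at hx, hvx⟩

end DualWeights

section QuaternionPlanes

attribute [local instance] weightAction

variable {K V G : Type*} [Field K] [AddCommGroup V] [Module K V] [Group G]
  {B : LinearMap.BilinForm K V} {ρ : Representation K G V} {c : G → K} {A : Subgroup G}
  [A.Normal] {χ ψ φ : A → K} {u w u₀ w₀ u₁ w₁ u₂ w₂ v x y : V} {g i j t i₁ j₁ i₂ j₂ : G} {ι ω : K}

namespace IsQuaternionPair

theorem eq_apply_sub_apply_add_apply {I J : Module.End K V} (hB : B.IsAlt)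
    (h : IsQuaternionPair B ι I J u w) (v : V) : v = I v - I (I v) + I (I (I v)) := by
  obtain ⟨a, b, v₀, rfl, hu, hw⟩ := exists_eq_smul_add_smul_add hB h.diagonal.pairing_ne_zero v
  simp only [map_add, map_smul, h.diagonal.apply_left, h.diagonal.apply_right,
    h.diagonal.apply_of_orthogonal v₀ hu hw]
  linear_combination (norm := module)
    h.sq_eq_neg_one • ((a * (1 - ι)) • u) + h.sq_eq_neg_one • ((b * (1 + ι)) • w)

theorem pow_four_eq_one {I J : Module.End K V} (hB : B.IsAlt)
    (h : IsQuaternionPair B ι I J u w) : I ^ 4 = 1 := by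
  rw [show 4 = 2 * 2 from rfl, pow_mul, pow_two, pow_two]
  exact h.sq_diagonal.mul_self_eq_one hB

/-- If `i` moved the weight, the identity `v = Iv - I²v + I³v` would express a weight vector
through the other weight spaces. -/
theorem sq_apply_mem_weightSpace (hB : B.IsAlt) (h : IsQuaternionPair B ι (ρ i) (ρ j) u w)
    (hind : iSupIndep (weightSpace ρ A)) (hv : v ∈ weightSpace ρ A χ) :
    ρ i (ρ i v) ∈ weightSpace ρ A χ := by
  obtain rfl | hv0 := eq_or_ne v 0
  · simp only [map_zero, zero_mem]
  have hsmul := fun {ψ : A → K} {x : V} => apply_mem_weightSpace_smul (ρ := ρ) (χ := ψ) (v := x) i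
  by_cases hχ : i • i • χ = χ
  · exact hχ ▸ hsmul (hsmul hv)
  have hi4 : i • i • i • i • χ = χ := by
    simp only [smul_smul]
    refine smul_weight_eq_of_apply_eq hv hv0 ?_
    rw [← pow_two, ← pow_succ', ← pow_succ', map_pow, h.pow_four_eq_one hB, Module.End.one_apply]
  have hi : i • χ ≠ χ := fun hi => hχ (by rw [hi, hi])
  have hi3 : i • i • i • χ ≠ χ := fun hi3 => hi (by rwa [hi3] at hi4)
  have hle : ∀ ψ, ψ ≠ χ → weightSpace ρ A ψ ≤ ⨆ ψ, ⨆ _ : ψ ≠ χ, weightSpace ρ A ψ := fun ψ hψ =>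
    le_iSup₂_of_le ψ hψ le_rfl
  refine absurd (Submodule.disjoint_def.mp (hind χ) v hv ?_) hv0
  rw [h.eq_apply_sub_apply_add_apply hB v]
  exact add_mem (sub_mem (hle _ hi (hsmul hv)) (hle _ hχ (hsmul (hsmul hv))))
    (hle _ hi3 (hsmul (hsmul (hsmul hv))))

theorem smul_weight_eq_left (h : IsQuaternionPair B ι (ρ i) (ρ j) u w)
    (hu : u ∈ weightSpace ρ A χ) : i • χ = χ :=
  smul_weight_eq_of_apply_mem hu h.diagonal.left_ne_zero
    (h.diagonal.apply_left ▸ Submodule.smul_mem _ _ hu)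

theorem smul_weight_eq_right (h : IsQuaternionPair B ι (ρ i) (ρ j) u w)
    (hu : u ∈ weightSpace ρ A χ) (hw : w ∈ weightSpace ρ A χ) : j • χ = χ :=
  smul_weight_eq_of_apply_mem hu h.diagonal.left_ne_zero (h.apply_left ▸ hw)

theorem exists_add_of_mem_weightSpace (hB : B.IsAlt) (h2 : (2 : K) ≠ 0)
    (h : IsQuaternionPair B ι (ρ i) (ρ j) u w) (hind : iSupIndep (weightSpace ρ A))
    (hv : v ∈ weightSpace ρ A χ) :
    ∃ p ∈ Submodule.span K {u, w}, p ∈ weightSpace ρ A χ ∧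
      ∃ v₀ ∈ weightSpace ρ A χ, v = p + v₀ ∧ B u v₀ = 0 ∧ B w v₀ = 0 :=
  h.sq_diagonal.exists_add_of_mapsTo hB (fun h1 => h2 (by linear_combination -h1))
    (fun _ hx => h.sq_apply_mem_weightSpace hB hind hx) hv

theorem mem_of_mapsTo {I J : Module.End K V} (hB : B.IsAlt) (h2 : (2 : K) ≠ 0)
    (h : IsQuaternionPair B ι I J u w) {W : Submodule K V} (hI : ∀ x ∈ W, I x ∈ W)
    (hJ : ∀ x ∈ W, J x ∈ W) (hv : v ∈ W) (hne : B u v ≠ 0 ∨ B w v ≠ 0) : u ∈ W ∧ w ∈ W := by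
  have hι : -ι ≠ 1 := fun h1 => h2 (by linear_combination h.sq_eq_neg_one + (ι - 1) * h1)
  have key := h.diagonal.mem_of_mapsTo hB (h.ne_one h2) hι (h.ne_neg h2) hI hv
  rcases hne with hne | hne
  · have hw := key.2 hne
    exact ⟨by simpa [h.apply_right] using hJ w hw, hw⟩
  · have hu := key.1 hne
    exact ⟨hu, h.apply_left ▸ hJ u hu⟩

theorem mem_span_of_mem_weightSpace (hB : B.IsAlt) (h2 : (2 : K) ≠ 0)
    (h : IsQuaternionPair B ι (ρ i) (ρ j) u w) (hind : iSupIndep (weightSpace ρ A))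
    (hg : ∀ v, B u v = 0 → B w v = 0 → ρ g v = v) (hχ : g • χ ≠ χ) :
    weightSpace ρ A χ ≤ Submodule.span K {u, w} := by
  intro v hv
  obtain ⟨p, hp, -, v₀, hv₀, rfl, hu, hw⟩ := h.exists_add_of_mem_weightSpace hB h2 hind hv
  obtain rfl | h0 := eq_or_ne v₀ 0
  · rwa [add_zero]
  · exact absurd (smul_weight_eq_of_apply_eq hv₀ h0 (hg v₀ hu hw)) hχ

theorem span_eq_sup_of_smul_ne (hB : B.IsAlt) (h2 : (2 : K) ≠ 0)
    (hρ : ActsBySimilitudes B ρ c) (h : IsQuaternionPair B ι (ρ i) (ρ j) u w)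
    (hind : iSupIndep (weightSpace ρ A)) (hg : ∀ v, B u v = 0 → B w v = 0 → ρ g v = v)
    (hχ : g • χ ≠ χ) (hχ0 : weightSpace ρ A χ ≠ ⊥) :
    χ ≠ dualWeight c χ ∧
      Submodule.span K {u, w} = weightSpace ρ A χ ⊔ weightSpace ρ A (dualWeight c χ) := by
  obtain ⟨x, hx, hx0⟩ := (Submodule.ne_bot_iff _).mp hχ0
  have huw := h.diagonal.pairing_ne_zero
  have hle := h.mem_span_of_mem_weightSpace hB h2 hind hg hχ
  have hle' : weightSpace ρ A (g • χ) ≤ Submodule.span K {u, w} :=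
    h.mem_span_of_mem_weightSpace hB h2 hind hg fun he => hχ (MulAction.injective g he)
  have hy := apply_mem_weightSpace_smul g hx
  have hy0 : ρ g x ≠ 0 := (map_ne_zero_iff _ (representation_injective ρ g)).mpr hx0
  have hxy : B x (ρ g x) ≠ 0 := apply_ne_zero_of_linearIndependent hB huw (hle hx) (hle' hy)
    (linearIndependent_pair_of_mem_weightSpace hx hy hx0 hy0 hχ.symm)
  rw [← eq_dualWeight hρ hx hy hxy]
  refine ⟨hχ.symm, le_antisymm ?_ (sup_le hle hle')⟩
  rw [← span_pair_eq_of_mem hB huw hxy (hle hx) (hle' hy)]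
  exact Submodule.span_le.mpr
    (Set.pair_subset (Submodule.mem_sup_left hx) (Submodule.mem_sup_right hy))

theorem mem_weightSpace_or_span_eq_sup (hB : B.IsAlt) (h2 : (2 : K) ≠ 0)
    (hρ : ActsBySimilitudes B ρ c) (h : IsQuaternionPair B ι (ρ i) (ρ j) u w)
    (hsup : ⨆ χ, weightSpace ρ A χ = ⊤) (hind : iSupIndep (weightSpace ρ A)) :
    (∃ χ, u ∈ weightSpace ρ A χ ∧ w ∈ weightSpace ρ A χ) ∨
    ∃ χ, χ ≠ dualWeight c χ ∧
      Submodule.span K {u, w} = weightSpace ρ A χ ⊔ weightSpace ρ A (dualWeight c χ) := by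
  obtain ⟨χ, v, hv, huv⟩ := exists_weight_apply_ne_zero hsup (f := B u)
    fun h0 => h.diagonal.pairing_ne_zero (by rw [h0, LinearMap.zero_apply])
  have hχ0 : weightSpace ρ A χ ≠ ⊥ :=
    (Submodule.ne_bot_iff _).mpr ⟨v, hv, fun hv0 => huv (by rw [hv0, map_zero])⟩
  by_cases hi : i • χ = χ
  · by_cases hj : j • χ = χ
    · exact Or.inl ⟨χ, h.mem_of_mapsTo hB h2 (fun _ => apply_mem_weightSpace hi)
        (fun _ => apply_mem_weightSpace hj) hv (Or.inl huv)⟩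
    · exact Or.inr ⟨χ, h.span_eq_sup_of_smul_ne hB h2 hρ hind h.apply_of_orthogonal hj hχ0⟩
  · exact Or.inr
      ⟨χ, h.span_eq_sup_of_smul_ne hB h2 hρ hind h.diagonal.apply_of_orthogonal hi hχ0⟩

theorem mem_weightSpace_or_orthogonal (hB : B.IsAlt) (h2 : (2 : K) ≠ 0)
    (hρ : ActsBySimilitudes B ρ c) (h : IsQuaternionPair B ι (ρ i) (ρ j) u w)
    (hsup : ⨆ χ, weightSpace ρ A χ = ⊤) (hind : iSupIndep (weightSpace ρ A))
    (hφ : dualWeight c φ = φ) :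
    (u ∈ weightSpace ρ A φ ∧ w ∈ weightSpace ρ A φ) ∨
      ∀ v ∈ weightSpace ρ A φ, B u v = 0 ∧ B w v = 0 := by
  have hc := hρ.multiplier_ne_zero h.diagonal.pairing_ne_zero
  rcases h.mem_weightSpace_or_span_eq_sup hB h2 hρ hsup hind with ⟨χ, hu, hw⟩ | ⟨χ, hχ, hspan⟩
  · obtain rfl | hne := eq_or_ne φ χ
    · exact Or.inl ⟨hu, hw⟩
    · have hne' : φ ≠ dualWeight c χ := fun he =>
        hne (by rw [← hφ, he, dualWeight_dualWeight hc])
      exact Or.inr fun v hv =>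
        ⟨eq_zero_of_ne_dualWeight hρ hu hv hne', eq_zero_of_ne_dualWeight hρ hw hv hne'⟩
  · refine Or.inr fun v hv => ?_
    have hker : Submodule.span K {u, w} ≤ LinearMap.ker (B v) := by
      refine hspan ▸ sup_le (fun x hx => ?_) fun x hx => ?_
      · refine eq_zero_of_ne_dualWeight hρ hv hx ?_
        rw [hφ]
        rintro rfl
        exact hχ hφ.symm
      · refine eq_zero_of_ne_dualWeight hρ hv hx ?_
        rw [hφ]
        rintro rfl
        rw [dualWeight_dualWeight hc] at hφ
        exact hχ hφ
    exact ⟨hB.isRefl _ _ (hker (Submodule.subset_span (Set.mem_insert u _))),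
      hB.isRefl _ _ (hker (Submodule.subset_span (Set.mem_insert_of_mem u rfl)))⟩

end IsQuaternionPair

end QuaternionPlanes

section StructureTheorem

attribute [local instance] weightAction

variable {K V G κ : Type*} [Field K] [AddCommGroup V] [Module K V] [Group G]
  {B : LinearMap.BilinForm K V} {ρ : Representation K G V} {c : G → K} {A S : Subgroup G}
  {φ : A → K} {u w u₀ w₀ u₁ w₁ u₂ w₂ v : V} {i j t i₁ j₁ i₂ j₂ : G} {α β ι ω : K}

theorem separatingLeft_restrict_weightSpace (hs : B.SeparatingLeft) (hρ : ActsBySimilitudes B ρ c)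
    (hsup : ⨆ χ, weightSpace ρ A χ = ⊤) (hφ : dualWeight c φ = φ) :
    (B.restrict (weightSpace ρ A φ)).SeparatingLeft := by
  intro v hv
  by_contra hv0
  obtain ⟨x, hx, hvx⟩ := exists_mem_weightSpace_apply_ne_zero hs hρ hsup hφ v.2
    fun h0 => hv0 (Subtype.ext h0)
  exact hvx (hv ⟨x, hx⟩)

namespace IsPlaneDiagonal

/-- `T - 1` maps into the plane, where the Plücker relation for the images of `x`, `y`, `T x` and
`T y` reads `3 * B x y ^ 2 = 0`. -/
theorem apply_eq_zero_of_isometry {T : Module.End K V} (hB : B.IsAlt) (h3 : (3 : K) ≠ 0)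
    (h : IsPlaneDiagonal B T u w α β) (hT : ∀ x y, B (T x) (T y) = B x y) {W : Submodule K V}
    (h₁ : ∀ x ∈ W, ∀ y ∈ W, B x (T y) = 0) (h₂ : ∀ x ∈ W, ∀ y ∈ W, B x (T (T y)) = 0)
    {x y : V} (hx : x ∈ W) (hy : y ∈ W) : B x y = 0 := by
  have hmem := h.apply_sub_mem_span hB
  have key := plucker_of_mem_span_pair hB (hmem x) (hmem y) (hmem (T x)) (hmem (T y))
  have hTxy : B (T x) y = 0 := hB.isRefl _ _ (h₁ y hy x hx)
  simp only [map_sub, LinearMap.sub_apply, hT, hB.self_eq_zero, h₁ x hx x hx, h₁ x hx y hy,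
    h₁ y hy x hx, h₁ y hy y hy, h₂ x hx x hx, h₂ x hx y hy, h₂ y hy x hx, h₂ y hy y hy, hTxy,
    ← hB.neg_eq x y] at key
  have hsq : 3 * (B x y * B x y) = 0 := by linear_combination key
  exact mul_self_eq_zero.mp ((mul_eq_zero.mp hsq).resolve_left h3)

theorem smul_weight_eq [A.Normal] (hB : B.IsAlt) (h3 : (3 : K) ≠ 0) (hω : ω * ω + ω + 1 = 0)
    (hρ : ActsBySimilitudes B ρ c) (h : IsPlaneDiagonal B (ρ t) u w ω (ω * ω))
    (hu₀ : u₀ ∈ weightSpace ρ A φ) (hw₀ : w₀ ∈ weightSpace ρ A φ) (h₀ : B u₀ w₀ ≠ 0) :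
    t • φ = φ := by
  by_contra ht
  have hφ := dualWeight_eq_self hρ hu₀ hw₀ h₀
  have hu₀0 : u₀ ≠ 0 := fun h0 => h₀ (by rw [h0, map_zero, LinearMap.zero_apply])
  have ht3 : t • t • t • φ = φ := by
    simp only [smul_smul]
    refine smul_weight_eq_of_apply_eq hu₀ hu₀0 ?_
    rw [← pow_two, ← pow_succ', map_pow, h.pow_three_eq_one hB hω, Module.End.one_apply]
  have ht2 : t • t • φ ≠ φ := fun ht2 => ht (by rwa [ht2] at ht3)
  have hct : c t = 1 := by
    rw [← h.mul_eq_of_similitude (hρ t)]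
    linear_combination (ω - 1) * hω
  have hmove := fun {ψ : A → K} {x : V} => apply_mem_weightSpace_smul (ρ := ρ) (χ := ψ) (v := x) t
  exact h₀ (h.apply_eq_zero_of_isometry hB h3 (fun x y => by rw [hρ, hct, one_mul])
    (fun x hx y hy => eq_zero_of_ne_dualWeight hρ hx (hmove hy) (by rwa [hφ]))
    (fun x hx y hy => eq_zero_of_ne_dualWeight hρ hx (hmove (hmove hy)) (by rwa [hφ])) hu₀ hw₀)

theorem mem_weightSpace_or_apply_eq [A.Normal] (hB : B.IsAlt) (hs : B.SeparatingLeft)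
    (h3 : (3 : K) ≠ 0) (hω : ω * ω + ω + 1 = 0) (hρ : ActsBySimilitudes B ρ c)
    (hsup : ⨆ χ, weightSpace ρ A χ = ⊤) (h : IsPlaneDiagonal B (ρ t) u w ω (ω * ω))
    (hu₀ : u₀ ∈ weightSpace ρ A φ) (hw₀ : w₀ ∈ weightSpace ρ A φ) (h₀ : B u₀ w₀ ≠ 0) :
    (u ∈ weightSpace ρ A φ ∧ w ∈ weightSpace ρ A φ) ∨ ∀ v ∈ weightSpace ρ A φ, ρ t v = v := by
  have ht := h.smul_weight_eq hB h3 hω hρ hu₀ hw₀ h₀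
  have hω1 := ne_one_of_mul_self_add_self h3 hω
  have hωω := ne_mul_self_of_mul_self_add_self h3 hω
  have hω2 : ω * ω ≠ 1 := fun h1 => hω1 (by linear_combination (ω - 1) * hω - ω * h1)
  have hmem := fun {x} (hx : x ∈ weightSpace ρ A φ) =>
    h.mem_of_mapsTo hB hω1 hω2 hωω (fun _ => apply_mem_weightSpace ht) hx
  have hpair := fun {z} (hz : z ∈ weightSpace ρ A φ) (hz0 : z ≠ 0) =>
    exists_mem_weightSpace_apply_ne_zero hs hρ hsup (dualWeight_eq_self hρ hu₀ hw₀ h₀) hz hz0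
  by_cases hex : ∀ v ∈ weightSpace ρ A φ, B u v = 0 ∧ B w v = 0
  · exact Or.inr fun v hv => h.apply_of_orthogonal v (hex v hv).1 (hex v hv).2
  push Not at hex
  obtain ⟨v, hv, hvw⟩ := hex
  have huw := h.pairing_ne_zero
  by_cases hb : B u v = 0
  · have hu := (hmem hv).1 (hvw hb)
    obtain ⟨x, hx, hux⟩ := hpair hu h.left_ne_zero
    exact Or.inl ⟨hu, (hmem hx).2 hux⟩
  · have hw := (hmem hv).2 hb
    obtain ⟨x, hx, hwx⟩ := hpair hw fun h0 => huw (by rw [h0, map_zero])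
    exact Or.inl ⟨(hmem hx).1 hwx, hw⟩

theorem restrict {T : Module.End K V} {W : Submodule K V} {T' : Module.End K W}
    (h : IsPlaneDiagonal B T u w α β) (hT : ∀ v, (T' v : V) = T v) (hu : u ∈ W) (hw : w ∈ W) :
    IsPlaneDiagonal (B.restrict W) T' ⟨u, hu⟩ ⟨w, hw⟩ α β where
  pairing_ne_zero := h.pairing_ne_zero
  apply_left := Subtype.ext ((hT _).trans h.apply_left)
  apply_right := Subtype.ext ((hT _).trans h.apply_right)
  apply_of_orthogonal v huv hwv := Subtype.ext ((hT v).trans (h.apply_of_orthogonal v huv hwv))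

end IsPlaneDiagonal

theorem IsQuaternionPair.restrict {I J : Module.End K V} {W : Submodule K V}
    {I' J' : Module.End K W} (h : IsQuaternionPair B ι I J u w) (hI : ∀ v, (I' v : V) = I v)
    (hJ : ∀ v, (J' v : V) = J v) (hu : u ∈ W) (hw : w ∈ W) :
    IsQuaternionPair (B.restrict W) ι I' J' ⟨u, hu⟩ ⟨w, hw⟩ where
  sq_eq_neg_one := h.sq_eq_neg_one
  diagonal := h.diagonal.restrict hI hu hw
  apply_left := Subtype.ext ((hJ _).trans h.apply_left)
  apply_right := Subtype.ext ((hJ _).trans h.apply_right)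
  apply_of_orthogonal v huv hwv := Subtype.ext ((hJ v).trans (h.apply_of_orthogonal v huv hwv))

/-- The action of the stabilizer of the weight `φ` on the weight space of `φ`. -/
def weightRepresentation (ρ : Representation K G V) (A : Subgroup G) [A.Normal] (φ : A → K) :
    Representation K (MulAction.stabilizer G φ) (weightSpace ρ A φ) where
  toFun g := (ρ g).restrict fun _ => apply_mem_weightSpace g.2
  map_one' := by ext v; simp
  map_mul' g h := by ext v; simp

theorem IsPlaneDiagonal.weightRepresentation [A.Normal] (h : IsPlaneDiagonal B (ρ t) u w α β)
    (ht : t • φ = φ) (hu : u ∈ weightSpace ρ A φ) (hw : w ∈ weightSpace ρ A φ) :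
    IsPlaneDiagonal (B.restrict (weightSpace ρ A φ)) (weightRepresentation ρ A φ ⟨t, ht⟩)
      ⟨u, hu⟩ ⟨w, hw⟩ α β :=
  h.restrict (fun _ => rfl) hu hw

namespace IsQuaternionPair

theorem weightRepresentation [A.Normal] (h : IsQuaternionPair B ι (ρ i) (ρ j) u w)
    (hu : u ∈ weightSpace ρ A φ) (hw : w ∈ weightSpace ρ A φ) :
    IsQuaternionPair (B.restrict (weightSpace ρ A φ)) ι
      (weightRepresentation ρ A φ ⟨i, h.smul_weight_eq_left hu⟩)
      (weightRepresentation ρ A φ ⟨j, h.smul_weight_eq_right hu hw⟩) ⟨u, hu⟩ ⟨w, hw⟩ :=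
  h.restrict (fun _ => rfl) (fun _ => rfl) hu hw

theorem span_eq_or_pairsOrthogonal_of_span_eq_sup {χ χ' : A → K} (hc : ∀ g, c g ≠ 0)
    (hρ : ActsBySimilitudes B ρ c)
    (h₁ : Submodule.span K {u₁, w₁} = weightSpace ρ A χ ⊔ weightSpace ρ A (dualWeight c χ))
    (h₂ : Submodule.span K {u₂, w₂} = weightSpace ρ A χ' ⊔ weightSpace ρ A (dualWeight c χ')) :
    Submodule.span K {u₁, w₁} = Submodule.span K {u₂, w₂} ∨ PairsOrthogonal B u₁ w₁ u₂ w₂ := by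
  have hdual := dualWeight_dualWeight hc (A := A)
  by_cases hχ : χ' = χ
  · exact Or.inl (by rw [h₁, h₂, hχ])
  by_cases hχ' : χ' = dualWeight c χ
  · exact Or.inl (by rw [h₁, h₂, hχ', hdual, sup_comm])
  have hdχ : dualWeight c χ' ≠ χ := fun he => hχ' (by rw [← he, hdual])
  have hdχ' : dualWeight c χ' ≠ dualWeight c χ := fun he => hχ (by rw [← hdual χ', he, hdual])
  have horth : ∀ x ∈ Submodule.span K {u₁, w₁}, ∀ y ∈ Submodule.span K {u₂, w₂}, B x y = 0 := by
    rw [h₁, h₂]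
    intro x hx y hy
    obtain ⟨x₁, hx₁, x₂, hx₂, rfl⟩ := Submodule.mem_sup.mp hx
    obtain ⟨y₁, hy₁, y₂, hy₂, rfl⟩ := Submodule.mem_sup.mp hy
    rw [← hdual χ] at hχ hdχ
    simp only [map_add, LinearMap.add_apply, add_zero,
      eq_zero_of_ne_dualWeight hρ hx₁ hy₁ hχ', eq_zero_of_ne_dualWeight hρ hx₁ hy₂ hdχ',
      eq_zero_of_ne_dualWeight hρ hx₂ hy₁ hχ, eq_zero_of_ne_dualWeight hρ hx₂ hy₂ hdχ]
  have hleft : ∀ a b : V, a ∈ Submodule.span K {a, b} := fun a b => Submodule.subset_span (by simp)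
  have hright : ∀ a b : V, b ∈ Submodule.span K {a, b} := fun a b => Submodule.subset_span (by simp)
  exact Or.inr ⟨horth _ (hleft _ _) _ (hleft _ _), horth _ (hleft _ _) _ (hright _ _),
    horth _ (hright _ _) _ (hleft _ _), horth _ (hright _ _) _ (hright _ _)⟩

theorem span_eq_or_pairsOrthogonal_or_mem_weightSpace [A.Normal] (hB : B.IsAlt) (h2 : (2 : K) ≠ 0)
    (hρ : ActsBySimilitudes B ρ c) (hsup : ⨆ χ, weightSpace ρ A χ = ⊤)
    (hind : iSupIndep (weightSpace ρ A)) (h₁ : IsQuaternionPair B ι (ρ i₁) (ρ j₁) u₁ w₁)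
    (h₂ : IsQuaternionPair B ι (ρ i₂) (ρ j₂) u₂ w₂) :
    (Submodule.span K {u₁, w₁} = Submodule.span K {u₂, w₂} ∨ PairsOrthogonal B u₁ w₁ u₂ w₂) ∨
      ∃ φ, (u₁ ∈ weightSpace ρ A φ ∧ w₁ ∈ weightSpace ρ A φ) ∧
        u₂ ∈ weightSpace ρ A φ ∧ w₂ ∈ weightSpace ρ A φ := by
  have huw₁ := h₁.diagonal.pairing_ne_zero
  have huw₂ := h₂.diagonal.pairing_ne_zero
  rcases h₁.mem_weightSpace_or_span_eq_sup hB h2 hρ hsup hind with ⟨φ, hu, hw⟩ | ⟨χ, -, hχ⟩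
  · rcases h₂.mem_weightSpace_or_orthogonal hB h2 hρ hsup hind
      (dualWeight_eq_self hρ hu hw huw₁) with h | h
    · exact Or.inr ⟨φ, ⟨hu, hw⟩, h⟩
    · exact Or.inl (Or.inr (PairsOrthogonal.symm hB
        ⟨(h _ hu).1, (h _ hw).1, (h _ hu).2, (h _ hw).2⟩))
  rcases h₂.mem_weightSpace_or_span_eq_sup hB h2 hρ hsup hind with ⟨φ, hu, hw⟩ | ⟨χ', -, hχ'⟩
  · rcases h₁.mem_weightSpace_or_orthogonal hB h2 hρ hsup hind
      (dualWeight_eq_self hρ hu hw huw₂) with h | h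
    · exact Or.inr ⟨φ, h, hu, hw⟩
    · exact Or.inl (Or.inr ⟨(h _ hu).1, (h _ hw).1, (h _ hu).2, (h _ hw).2⟩)
  · exact Or.inl (span_eq_or_pairsOrthogonal_of_span_eq_sup (hρ.multiplier_ne_zero huw₁) hρ hχ hχ')

end IsQuaternionPair

/-- A family of pairwise orthogonal nondegenerate planes spanning `V`, each with a quaternion pair
of elements of `S` acting on it. The last field says that the planes span. -/
structure QuaternionFrame (B : LinearMap.BilinForm K V) (ρ : Representation K G V)
    (S : Subgroup G) (ι : K) (κ : Type*) where
  (i j : κ → G)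
  (u w : κ → V)
  i_mem : ∀ k, i k ∈ S
  j_mem : ∀ k, j k ∈ S
  isQuaternionPair : ∀ k, IsQuaternionPair B ι (ρ (i k)) (ρ (j k)) (u k) (w k)
  pairsOrthogonal : ∀ k l, k ≠ l → PairsOrthogonal B (u k) (w k) (u l) (w l)
  eq_zero_of_orthogonal : ∀ v, (∀ k, B (u k) v = 0 ∧ B (w k) v = 0) → v = 0

namespace QuaternionFrame

theorem mem_span_of_subsingleton [Subsingleton κ] (F : QuaternionFrame B ρ S ι κ) (hB : B.IsAlt)
    (k : κ) (v : V) : v ∈ Submodule.span K {F.u k, F.w k} := by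
  obtain ⟨a, b, v₀, rfl, hu, hw⟩ :=
    exists_eq_smul_add_smul_add hB (F.isQuaternionPair k).diagonal.pairing_ne_zero v
  rw [F.eq_zero_of_orthogonal v₀ fun l => Subsingleton.elim k l ▸ ⟨hu, hw⟩, add_zero]
  exact Submodule.mem_span_pair.mpr ⟨a, b, rfl⟩

theorem span_eq_of_subsingleton [Subsingleton κ] (F : QuaternionFrame B ρ S ι κ) (hB : B.IsAlt)
    (h₁ : B u₁ w₁ ≠ 0) (h₂ : B u₂ w₂ ≠ 0) :
    Submodule.span K {u₁, w₁} = Submodule.span K {u₂, w₂} := by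
  obtain ⟨k⟩ : Nonempty κ := by
    by_contra hκ
    rw [not_nonempty_iff] at hκ
    exact h₁ (by rw [F.eq_zero_of_orthogonal w₁ fun k => hκ.elim k, map_zero])
  have hk := (F.isQuaternionPair k).diagonal.pairing_ne_zero
  have hmem := F.mem_span_of_subsingleton hB k
  rw [span_pair_eq_of_mem hB hk h₁ (hmem _) (hmem _),
    span_pair_eq_of_mem hB hk h₂ (hmem _) (hmem _)]

/-- The planes of a frame lying in the weight space of a self-dual weight form a frame of it. -/
def restrict [A.Normal] (F : QuaternionFrame B ρ S ι κ) (hB : B.IsAlt) (h2 : (2 : K) ≠ 0)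
    (hρ : ActsBySimilitudes B ρ c) (hsup : ⨆ χ, weightSpace ρ A χ = ⊤)
    (hind : iSupIndep (weightSpace ρ A)) (hφ : dualWeight c φ = φ) :
    QuaternionFrame (B.restrict (weightSpace ρ A φ)) (weightRepresentation ρ A φ)
      (S.subgroupOf (MulAction.stabilizer G φ)) ι
      {k // F.u k ∈ weightSpace ρ A φ ∧ F.w k ∈ weightSpace ρ A φ} where
  i k := ⟨F.i k, (F.isQuaternionPair k).smul_weight_eq_left k.2.1⟩
  j k := ⟨F.j k, (F.isQuaternionPair k).smul_weight_eq_right k.2.1 k.2.2⟩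
  u k := ⟨F.u k, k.2.1⟩
  w k := ⟨F.w k, k.2.2⟩
  i_mem k := F.i_mem k
  j_mem k := F.j_mem k
  isQuaternionPair k := (F.isQuaternionPair k).weightRepresentation k.2.1 k.2.2
  pairsOrthogonal k l hkl :=
    let ho := F.pairsOrthogonal k l fun h => hkl (Subtype.ext h)
    ⟨ho.1, ho.2, ho.3, ho.4⟩
  eq_zero_of_orthogonal v hv := Subtype.ext (F.eq_zero_of_orthogonal v fun k => by
    rcases (F.isQuaternionPair k).mem_weightSpace_or_orthogonal hB h2 hρ hsup hind hφ with h | h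
    · exact hv ⟨k, h⟩
    · exact h v v.2)

theorem exists_normal_commute [Finite G] [FiniteDimensional K V] [Group.IsSolvable G] [Nontrivial V]
    [Nontrivial κ] (F : QuaternionFrame B ρ S ι κ) (hB : B.IsAlt) (hs : B.SeparatingLeft)
    (h2 : (2 : K) ≠ 0) (h3 : (3 : K) ≠ 0) (hω : ω * ω + ω + 1 = 0)
    (hρ : ActsBySimilitudes B ρ c) (hS : IsPGroup 2 S)
    (ht : IsPlaneDiagonal B (ρ t) u w ω (ω * ω)) :
    ∃ A : Subgroup G, A.Normal ∧ (∃ a ∈ A, a ∉ scalarSubgroup ρ) ∧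
      ∀ a ∈ A, ∀ b ∈ A, Commute (ρ a) (ρ b) := by
  obtain ⟨k, l, hkl⟩ := exists_pair_ne κ
  have hk := F.isQuaternionPair k
  have hl := F.isQuaternionPair l
  have ho := F.pairsOrthogonal k l hkl
  have hns : F.i k ∉ scalarSubgroup ρ := by
    rintro ⟨a, ha⟩
    have hu := hk.diagonal.apply_left
    have hw := hk.diagonal.apply_right
    rw [ha, LinearMap.smul_apply, Module.End.one_apply] at hu hw
    have hw0 : F.w k ≠ 0 := fun h0 => hk.diagonal.pairing_ne_zero (by rw [h0, map_zero])
    exact hk.ne_neg h2 ((smul_left_injective K hk.diagonal.left_ne_zero hu).symm.trans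
      (smul_left_injective K hw0 hw))
  refine (exists_normal_commute_or_isExtraspecial ⟨_, hns⟩).resolve_right ?_
  rintro ⟨A, r, hr, hA⟩
  rcases hr.eq_two_or_odd' with rfl | hodd
  · exact not_isExtraspecial_two hB hs h2 h3 hω hρ hS (F.i_mem k) (F.j_mem k) hk ho
      hl.diagonal.pairing_ne_zero ht hA
  · refine hA.not_odd_of_orthogonal hB h2 (e := F.i k * F.i k) (e' := F.i l * F.i l) ?_ ?_ ho hodd
    · simpa only [map_mul] using hk.sq_diagonal
    · simpa only [map_mul] using hl.sq_diagonal

/-- Induction on `dim V`: an abelian normal subgroup acting by non-scalars splits `V`, and only a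
pair of planes inside one weight space is not settled by comparing weights. -/
theorem span_eq_or_pairsOrthogonal [IsAlgClosed K] [Finite G] [FiniteDimensional K V]
    [Group.IsSolvable G] (F : QuaternionFrame B ρ S ι κ) (hB : B.IsAlt) (hs : B.SeparatingLeft)
    (h2 : (2 : K) ≠ 0) (h3 : (3 : K) ≠ 0) (hω : ω * ω + ω + 1 = 0) (hG : (Nat.card G : K) ≠ 0)
    (hρ : ActsBySimilitudes B ρ c) (hS : IsPGroup 2 S)
    (ht : ∀ v, (∀ t u w, IsPlaneDiagonal B (ρ t) u w ω (ω * ω) → ρ t v = v) → v = 0)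
    (h₁ : IsQuaternionPair B ι (ρ i₁) (ρ j₁) u₁ w₁)
    (h₂ : IsQuaternionPair B ι (ρ i₂) (ρ j₂) u₂ w₂) :
    Submodule.span K {u₁, w₁} = Submodule.span K {u₂, w₂} ∨ PairsOrthogonal B u₁ w₁ u₂ w₂ := by
  induction hn : Module.finrank K V using Nat.strong_induction_on generalizing V G κ with
  | _ n ih =>
  have huw₁ := h₁.diagonal.pairing_ne_zero
  rcases subsingleton_or_nontrivial κ with hκ | hκ
  · exact Or.inl (F.span_eq_of_subsingleton hB huw₁ h₂.diagonal.pairing_ne_zero)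
  have hu₁ := h₁.diagonal.left_ne_zero
  have : Nontrivial V := ⟨⟨u₁, 0, hu₁⟩⟩
  obtain ⟨t, u, w, htuw⟩ : ∃ t u w, IsPlaneDiagonal B (ρ t) u w ω (ω * ω) := by
    by_contra! h
    exact hu₁ (ht u₁ fun t u w htuw => absurd htuw (h t u w))
  obtain ⟨A, hA, ⟨a, ha, hns⟩, hcomm⟩ := F.exists_normal_commute hB hs h2 h3 hω hρ hS htuw
  have hsup := iSup_weightSpace_eq_top hG hcomm
  have hind := iSupIndep_weightSpace hG hcomm
  refine (h₁.span_eq_or_pairsOrthogonal_or_mem_weightSpace hB h2 hρ hsup hind h₂).elim id ?_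
  rintro ⟨φ, ⟨hu₁, hw₁⟩, hu₂, hw₂⟩
  have hφ := dualWeight_eq_self hρ hu₁ hw₁ huw₁
  have hlt : Module.finrank K (weightSpace ρ A φ) < n := by
    refine hn ▸ Submodule.finrank_lt fun htop => hns ⟨φ ⟨a, ha⟩, LinearMap.ext fun v => ?_⟩
    exact mem_weightSpace.mp (htop ▸ Submodule.mem_top) ⟨a, ha⟩
  have hs' := separatingLeft_restrict_weightSpace hs hρ hsup hφ
  have hG' : (Nat.card (MulAction.stabilizer G φ) : K) ≠ 0 := fun h0 => hG (zero_dvd_iff.mp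
    (h0 ▸ Nat.cast_dvd_cast (MulAction.stabilizer G φ).card_subgroup_dvd_card))
  have ht' : ∀ v, (∀ t u w, IsPlaneDiagonal (B.restrict (weightSpace ρ A φ))
      (weightRepresentation ρ A φ t) u w ω (ω * ω) → weightRepresentation ρ A φ t v = v) →
      v = 0 := fun v hv => Subtype.ext (ht v fun t u w h => by
    rcases h.mem_weightSpace_or_apply_eq hB hs h3 hω hρ hsup hu₁ hw₁ huw₁ with ⟨hu, hw⟩ | h'
    · have htφ := h.smul_weight_eq hB h3 hω hρ hu₁ hw₁ huw₁
      exact congrArg Subtype.val (hv _ _ _ (h.weightRepresentation htφ hu hw))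
    · exact h' v v.2)
  refine (ih _ hlt (F.restrict hB h2 hρ hsup hind hφ) (fun v => hB v) hs' hG'
    (fun g x y => hρ g x y) (hS.comap_of_injective _ Subtype.val_injective) ht'
    (h₁.weightRepresentation hu₁ hw₁) (h₂.weightRepresentation hu₂ hw₂) rfl).imp
    (fun hspan => ?_) fun ho => ⟨ho.1, ho.2, ho.3, ho.4⟩
  simpa only [Submodule.map_span, Set.image_pair, Submodule.subtype_apply] using
    congrArg (Submodule.map (weightSpace ρ A φ).subtype) hspan

end QuaternionFrame

end StructureTheorem

section SymplecticBases

/-- Symplectic bases up to a scale `δ`: the `a k` and the `b k` span totally isotropic subspaces,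
and `B (a k) (b l)` is `δ` for `k = l` and `0` otherwise. That they span the whole space is
expressed by the triviality of their common orthogonal. -/
structure IsSymplecticBasis {K V κ : Type*} [Field K] [AddCommGroup V] [Module K V] [DecidableEq κ]
    (B : LinearMap.BilinForm K V) (δ : K) (a b : κ → V) : Prop where
  scale_ne_zero : δ ≠ 0
  left_left : ∀ k l, B (a k) (a l) = 0
  right_right : ∀ k l, B (b k) (b l) = 0
  left_right : ∀ k l, B (a k) (b l) = if k = l then δ else 0
  eq_zero_of_orthogonal : ∀ v, (∀ k, B (a k) v = 0 ∧ B (b k) v = 0) → v = 0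

/-- The linear map that sends the symplectic basis `a, b` of scale `δ` to `x, y`. -/
def symplecticLift {K V W κ : Type*} [Field K] [AddCommGroup V] [Module K V] [AddCommGroup W]
    [Module K W] [Fintype κ] (B : LinearMap.BilinForm K V) (δ : K) (a b : κ → V) (x y : κ → W) :
    V →ₗ[K] W :=
  ∑ k, δ⁻¹ • ((B.flip (b k)).smulRight (x k) - (B.flip (a k)).smulRight (y k))

namespace IsSymplecticBasis

variable {K V V' W κ : Type*} [Field K] [AddCommGroup V] [Module K V] [AddCommGroup V']
  [Module K V'] [AddCommGroup W] [Module K W] [DecidableEq κ] {B : LinearMap.BilinForm K V}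
  {B' : LinearMap.BilinForm K V'} {δ : K} {a b : κ → V} {a' b' : κ → V'}

theorem right_left (hB : B.IsAlt) (h : IsSymplecticBasis B δ a b) (k l : κ) :
    B (b k) (a l) = if k = l then -δ else 0 := by
  rw [← hB.neg_eq, h.left_right]
  simp only [eq_comm (a := l), neg_ite, neg_zero]

theorem pairing_ne_zero (h : IsSymplecticBasis B δ a b) (k : κ) : B (a k) (b k) ≠ 0 := by
  rw [h.left_right, if_pos rfl]
  exact h.scale_ne_zero

theorem separatingLeft (hB : B.IsAlt) (h : IsSymplecticBasis B δ a b) : B.SeparatingLeft :=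
  fun v hv => h.eq_zero_of_orthogonal v fun k =>
    ⟨hB.isRefl _ _ (hv (a k)), hB.isRefl _ _ (hv (b k))⟩

theorem swap (hB : B.IsAlt) (h : IsSymplecticBasis B δ a b) : IsSymplecticBasis B (-δ) b a where
  scale_ne_zero := neg_ne_zero.2 h.scale_ne_zero
  left_left := h.right_right
  right_right := h.left_left
  left_right := h.right_left hB
  eq_zero_of_orthogonal v hv := h.eq_zero_of_orthogonal v fun k => (hv k).symm

theorem map (h : IsSymplecticBasis B δ a b) {T : V →ₗ[K] V'} {c : K} (hc : c ≠ 0)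
    (hT : ∀ x y, B' (T x) (T y) = c * B x y) (hsurj : Function.Surjective T) :
    IsSymplecticBasis B' (c * δ) (fun k => T (a k)) (fun k => T (b k)) where
  scale_ne_zero := mul_ne_zero hc h.scale_ne_zero
  left_left k l := by rw [hT, h.left_left, mul_zero]
  right_right k l := by rw [hT, h.right_right, mul_zero]
  left_right k l := by rw [hT, h.left_right, mul_ite, mul_zero]
  eq_zero_of_orthogonal v hv := by
    obtain ⟨x, rfl⟩ := hsurj v
    simp only [hT, mul_eq_zero, hc, false_or] at hv
    rw [h.eq_zero_of_orthogonal x hv, map_zero]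

theorem lift_left [Fintype κ] (h : IsSymplecticBasis B δ a b) (x y : κ → W) (k : κ) :
    symplecticLift B δ a b x y (a k) = x k := by
  simp [symplecticLift, h.left_left, h.left_right, ite_smul, h.scale_ne_zero]

theorem lift_right [Fintype κ] (hB : B.IsAlt) (h : IsSymplecticBasis B δ a b) (x y : κ → W)
    (k : κ) :
    symplecticLift B δ a b x y (b k) = y k := by
  simp [symplecticLift, h.right_right, h.right_left hB, ite_smul, h.scale_ne_zero]

theorem lift_self [Fintype κ] (hB : B.IsAlt) (h : IsSymplecticBasis B δ a b) :
    symplecticLift B δ a b a b = LinearMap.id := by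
  ext v
  refine (sub_eq_zero.1 <| h.eq_zero_of_orthogonal _ fun k => ?_).symm
  have hδ : ∀ x : K, δ⁻¹ * (x * δ) = x := fun x => by
    rw [mul_comm x, inv_mul_cancel_left₀ h.scale_ne_zero]
  constructor <;>
    simp [symplecticLift, h.left_left, h.left_right, h.right_right, h.right_left hB,
      ← hB.neg_eq v, hδ]

theorem ext_linearMap [Finite κ] (hB : B.IsAlt) (h : IsSymplecticBasis B δ a b) {f g : V →ₗ[K] W}
    (ha : ∀ k, f (a k) = g (a k)) (hb : ∀ k, f (b k) = g (b k)) : f = g := by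
  cases nonempty_fintype κ
  have key : ∀ e : V →ₗ[K] W, e = e ∘ₗ symplecticLift B δ a b a b := fun e => by
    rw [h.lift_self hB, LinearMap.comp_id]
  rw [key f, key g]
  ext v
  simp [symplecticLift, ha, hb]

theorem ext_bilinForm [Finite κ] (hB : B.IsAlt) (h : IsSymplecticBasis B δ a b)
    {C D : LinearMap.BilinForm K V}
    (haa : ∀ k l, C (a k) (a l) = D (a k) (a l)) (hab : ∀ k l, C (a k) (b l) = D (a k) (b l))
    (hba : ∀ k l, C (b k) (a l) = D (b k) (a l)) (hbb : ∀ k l, C (b k) (b l) = D (b k) (b l)) :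
    C = D :=
  h.ext_linearMap hB (fun k => h.ext_linearMap hB (haa k) (hab k))
    fun k => h.ext_linearMap hB (hba k) (hbb k)

variable [Fintype κ]

theorem lift_isometry (hB : B.IsAlt) (hB' : B'.IsAlt) (h : IsSymplecticBasis B δ a b)
    (h' : IsSymplecticBasis B' δ a' b') (x y : V) :
    B' (symplecticLift B δ a b a' b' x) (symplecticLift B δ a b a' b' y) = B x y := by
  set T := symplecticLift B δ a b a' b'
  have hTB : B'.compl₁₂ T T = B := by
    apply h.ext_bilinForm hB <;> intro k l <;>
      simp only [LinearMap.compl₁₂_apply, T, h.lift_left, h.lift_right hB, h.left_left,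
        h.left_right, h.right_right, h.right_left hB, h'.left_left, h'.left_right, h'.right_right,
        h'.right_left hB']
  rw [← LinearMap.compl₁₂_apply, hTB]

theorem finrank_le (hB : B.IsAlt) (h : IsSymplecticBasis B δ a b) :
    Module.finrank K V ≤ 2 * Fintype.card κ := by
  have hspan : Submodule.span K (Set.range (Sum.elim a b)) = ⊤ := by
    refine top_unique fun v _ => ?_
    rw [← LinearMap.id_apply (R := K) v, ← h.lift_self hB, symplecticLift, LinearMap.sum_apply]
    refine Submodule.sum_mem _ fun k _ => Submodule.smul_mem _ _ <| Submodule.sub_mem _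
      (Submodule.smul_mem _ _ <| Submodule.subset_span ⟨Sum.inl k, rfl⟩)
      (Submodule.smul_mem _ _ <| Submodule.subset_span ⟨Sum.inr k, rfl⟩)
  have hle := finrank_range_le_card (R := K) (Sum.elim a b)
  rwa [Set.finrank, hspan, finrank_top, Fintype.card_sum, ← two_mul] at hle

theorem linearChange (h : IsSymplecticBasis B δ a b) {P Q : Matrix κ κ K} (hPQ : P * Qᵀ = 1) :
    IsSymplecticBasis B δ (fun k => ∑ l, P k l • a l) (fun k => ∑ l, Q k l • b l) where
  scale_ne_zero := h.scale_ne_zero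
  left_left k l := by simp [h.left_left]
  right_right k l := by simp [h.right_right]
  left_right k l := by
    have hkl : ∑ j, P k j * Q l j = if k = l then 1 else 0 := by
      simpa only [mul_apply, transpose_apply, one_apply] using congrFun₂ hPQ k l
    calc B (∑ i, P k i • a i) (∑ j, Q l j • b j) = (∑ j, P k j * Q l j) * δ := by
          simp [h.left_right, Finset.sum_mul, mul_assoc, mul_left_comm]
      _ = if k = l then δ else 0 := by rw [hkl, ite_mul, one_mul, zero_mul]
  eq_zero_of_orthogonal v hv := by
    have cancel : ∀ {M N : Matrix κ κ K} {f : κ → V}, N * M = 1 →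
        (∀ k, B (∑ l, M k l • f l) v = 0) → ∀ k, B (f k) v = 0 := fun {M N f} hMN hf => by
      have hM : M *ᵥ (fun k => B (f k) v) = 0 := funext fun k => by
        simpa [mulVec, dotProduct] using hf k
      refine congrFun (?_ : (fun k => B (f k) v) = 0)
      rw [← one_mulVec (fun k => B (f k) v), ← hMN, ← mulVec_mulVec, hM, mulVec_zero]
    refine h.eq_zero_of_orthogonal v fun k =>
      ⟨cancel (mul_eq_one_comm.1 hPQ) (fun k => (hv k).1) k,
        cancel (N := Pᵀ) ?_ (fun k => (hv k).2) k⟩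
    rw [← transpose_transpose Q, ← transpose_mul, mul_eq_one_comm.1 hPQ, transpose_one]

theorem shear (h : IsSymplecticBasis B δ a b) (hB : B.IsAlt) {s : Matrix κ κ K} (hs : s.IsSymm) :
    IsSymplecticBasis B δ a (fun k => b k + ∑ l, s k l • a l) where
  scale_ne_zero := h.scale_ne_zero
  left_left := h.left_left
  right_right k l := by
    simp [h.left_left, h.left_right, h.right_right, h.right_left hB, hs.apply k l]
  left_right k l := by simp [h.left_left, h.left_right]
  eq_zero_of_orthogonal v hv := h.eq_zero_of_orthogonal v fun k =>
    ⟨(hv k).1, by simpa [fun k => (hv k).1] using (hv k).2⟩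

theorem cons {m : ℕ} (hB : B.IsAlt) {W : Submodule K V} {u w : V} {a b : Fin m → W}
    (hW : ∀ v, v ∈ W ↔ B u v = 0 ∧ B w v = 0) (huw : B u w = 1)
    (h : IsSymplecticBasis (B.restrict W) 1 a b) :
    IsSymplecticBasis B 1 (Fin.cons u fun k => (a k : V)) (Fin.cons w fun k => (b k : V)) := by
  have hu : ∀ v : W, B u v = 0 ∧ B v u = 0 := fun v =>
    ⟨((hW v).1 v.2).1, hB.isRefl _ _ ((hW v).1 v.2).1⟩
  have hw : ∀ v : W, B w v = 0 ∧ B v w = 0 := fun v =>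
    ⟨((hW v).1 v.2).2, hB.isRefl _ _ ((hW v).1 v.2).2⟩
  refine ⟨one_ne_zero, ?_, ?_, ?_, fun v hv => ?_⟩
  · simpa [Fin.forall_fin_succ, hB.self_eq_zero, hu] using h.left_left
  · simpa [Fin.forall_fin_succ, hB.self_eq_zero, hw] using h.right_right
  · simpa [Fin.forall_fin_succ, huw, hu, hw, Fin.succ_ne_zero, (Fin.succ_ne_zero _).symm]
      using h.left_right
  · have hv0 := hv 0
    simp only [Fin.cons_zero] at hv0
    exact congrArg Subtype.val <| h.eq_zero_of_orthogonal ⟨v, (hW v).2 hv0⟩ fun k => hv k.succ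

end IsSymplecticBasis

theorem separatingLeft_restrict_orthogonal {K V : Type*} [Field K] [AddCommGroup V] [Module K V]
    {B : LinearMap.BilinForm K V} (hB : B.IsAlt) (hs : B.SeparatingLeft) {W : Submodule K V}
    {u w : V} (huw : B u w ≠ 0) (hW : ∀ v, v ∈ W ↔ B u v = 0 ∧ B w v = 0) :
    (B.restrict W).SeparatingLeft := by
  refine fun v hv => Subtype.ext <| hs v fun y => ?_
  obtain ⟨p, q, y₀, rfl, hu, hw⟩ := exists_eq_smul_add_smul_add hB huw y
  obtain ⟨hvu, hvw⟩ := (hW v).1 v.2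
  simp [hB.isRefl _ _ hvu, hB.isRefl _ _ hvw, show B v y₀ = 0 from hv ⟨y₀, (hW y₀).2 ⟨hu, hw⟩⟩]

theorem exists_isSymplecticBasis {K V : Type*} [Field K] [AddCommGroup V] [Module K V]
    [FiniteDimensional K V] {B : LinearMap.BilinForm K V} (hB : B.IsAlt) (hs : B.SeparatingLeft) :
    ∃ (m : ℕ) (a b : Fin m → V), IsSymplecticBasis B 1 a b := by
  induction hn : Module.finrank K V using Nat.strong_induction_on generalizing V with
  | _ n ih =>
  rcases subsingleton_or_nontrivial V with _ | _
  · exact ⟨0, Fin.elim0, Fin.elim0, one_ne_zero, fun k => k.elim0, fun k => k.elim0,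
      fun k => k.elim0, fun v _ => Subsingleton.elim v 0⟩
  obtain ⟨u, hu⟩ := exists_ne (0 : V)
  obtain ⟨x, hx⟩ : ∃ x, B u x ≠ 0 := by
    by_contra! hux
    exact hu (hs u hux)
  have huw : B u ((B u x)⁻¹ • x) = 1 := by simp [hx]
  set w := (B u x)⁻¹ • x
  let W : Submodule K V := LinearMap.ker (B u) ⊓ LinearMap.ker (B w)
  have hW : ∀ v, v ∈ W ↔ B u v = 0 ∧ B w v = 0 := fun v => by simp [W]
  have hlt : Module.finrank K W < n := by
    refine hn ▸ Submodule.finrank_lt fun hT => one_ne_zero (α := K) ?_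
    rw [← huw, ((hW w).1 (hT ▸ Submodule.mem_top)).1]
  obtain ⟨m, a, b, h⟩ := ih _ hlt (V := W) (B := B.restrict W) (fun v => hB v)
    (separatingLeft_restrict_orthogonal hB hs (huw ▸ one_ne_zero) hW) rfl
  exact ⟨m + 1, _, _, h.cons hB hW huw⟩

end SymplecticBases

section BlockActions

/-- `T` acts on the plane of `a k, b k` by the rows of `N` and fixes all `a l, b l` with `l ≠ k`. -/
structure ActsOnBlock {K V κ : Type*} [Field K] [AddCommGroup V] [Module K V]
    (T : Module.End K V) (N : Matrix (Fin 2) (Fin 2) K) (a b : κ → V) (k : κ) : Prop where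
  apply_left : T (a k) = N 0 0 • a k + N 0 1 • b k
  apply_right : T (b k) = N 1 0 • a k + N 1 1 • b k
  apply_of_ne : ∀ l, l ≠ k → T (a l) = a l ∧ T (b l) = b l

/-- The endomorphism acting on the plane of `a k, b k` by the rows of `M k`, for all `k`. -/
def blockEnd {K V κ : Type*} [Field K] [AddCommGroup V] [Module K V] [Fintype κ]
    (B : LinearMap.BilinForm K V) (δ : K) (a b : κ → V) (M : κ → Matrix (Fin 2) (Fin 2) K) :
    Module.End K V :=
  symplecticLift B δ a b (fun k => M k 0 0 • a k + M k 0 1 • b k)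
    fun k => M k 1 0 • a k + M k 1 1 • b k

theorem ActsOnBlock.map {K V W κ : Type*} [Field K] [AddCommGroup V] [Module K V] [AddCommGroup W]
    [Module K W] {T : Module.End K V} {T' : Module.End K W} {N : Matrix (Fin 2) (Fin 2) K}
    {a b : κ → V} {k : κ} {f : V →ₗ[K] W} (hf : T' ∘ₗ f = f ∘ₗ T) (h : ActsOnBlock T N a b k) :
    ActsOnBlock T' N (fun l => f (a l)) (fun l => f (b l)) k := by
  have hf' : ∀ v, T' (f v) = f (T v) := LinearMap.congr_fun hf
  exact ⟨by simp [hf', h.apply_left], by simp [hf', h.apply_right],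
    fun l hl => by simp [hf', h.apply_of_ne l hl]⟩

namespace IsSymplecticBasis

variable {K V κ : Type*} [Field K] [AddCommGroup V] [Module K V] [DecidableEq κ]
  {B : LinearMap.BilinForm K V} {δ : K} {a b : κ → V}

theorem blockChange (h : IsSymplecticBasis B δ a b) (hB : B.IsAlt)
    {M : κ → Matrix (Fin 2) (Fin 2) K} (hM : ∀ k, (M k).det = 1) :
    IsSymplecticBasis B δ (fun k => M k 0 0 • a k + M k 0 1 • b k)
      (fun k => M k 1 0 • a k + M k 1 1 • b k) where
  scale_ne_zero := h.scale_ne_zero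
  left_left k l := by
    rcases eq_or_ne k l with rfl | hkl
    · exact hB _
    · simp [h.left_left, h.left_right, h.right_right, h.right_left hB, hkl]
  right_right k l := by
    rcases eq_or_ne k l with rfl | hkl
    · exact hB _
    · simp [h.left_left, h.left_right, h.right_right, h.right_left hB, hkl]
  left_right k l := by
    rcases eq_or_ne k l with rfl | hkl
    · have hdet := (det_fin_two (M k)).symm.trans (hM k)
      simp only [map_add, map_smul, LinearMap.add_apply, LinearMap.smul_apply, h.left_left,
        h.left_right, h.right_right, h.right_left hB, smul_eq_mul, if_true]
      linear_combination δ * hdet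
    · simp [h.left_left, h.left_right, h.right_right, h.right_left hB, hkl]
  eq_zero_of_orthogonal v hv := h.eq_zero_of_orthogonal v fun k => by
    have hdet := (det_fin_two (M k)).symm.trans (hM k)
    obtain ⟨h₀, h₁⟩ := hv k
    simp only [map_add, map_smul, LinearMap.add_apply, LinearMap.smul_apply, smul_eq_mul] at h₀ h₁
    exact ⟨by linear_combination -B (a k) v * hdet + M k 1 1 * h₀ - M k 0 1 * h₁,
      by linear_combination -B (b k) v * hdet + M k 0 0 * h₁ - M k 1 0 * h₀⟩

theorem exists_mem_isometryGroup [Finite κ] {n : ℕ} {B : LinearMap.BilinForm K (Fin n → K)}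
    {a b a' b' : κ → Fin n → K} (hB : B.IsAlt) (h : IsSymplecticBasis B δ a b)
    (h' : IsSymplecticBasis B δ a' b') :
    ∃ x ∈ isometryGroup fun u v => B u v,
      ∀ k, a k ᵥ* (x : Matrix (Fin n) (Fin n) K) = a' k ∧
        b k ᵥ* (x : Matrix (Fin n) (Fin n) K) = b' k := by
  cases nonempty_fintype κ
  have hcomp : ∀ {a b a' b' : κ → Fin n → K}, IsSymplecticBasis B δ a b →
      IsSymplecticBasis B δ a' b' →
      symplecticLift B δ a b a' b' ∘ₗ symplecticLift B δ a' b' a b = LinearMap.id :=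
    fun h h' => h'.ext_linearMap hB (fun k => by simp [h.lift_left, h'.lift_left])
      fun k => by simp [h.lift_right hB, h'.lift_right hB]
  let x : GL (Fin n) K :=
    ⟨LinearMap.toMatrixRight' (symplecticLift B δ a b a' b'),
      LinearMap.toMatrixRight' (symplecticLift B δ a' b' a b),
      by rw [← LinearMap.toMatrixRight'_comp, hcomp h' h, LinearMap.toMatrixRight'_id],
      by rw [← LinearMap.toMatrixRight'_comp, hcomp h h', LinearMap.toMatrixRight'_id]⟩
  have hx : ∀ v, v ᵥ* (x : Matrix (Fin n) (Fin n) K) = symplecticLift B δ a b a' b' v := fun v => by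
    rw [← toLinearMapRight'_apply]
    exact LinearMap.congr_fun (LinearEquiv.symm_apply_apply _ _) v
  refine ⟨x, fun u v => ?_, fun k => ⟨?_, ?_⟩⟩
  · rw [hx, hx]
    exact h.lift_isometry hB hB h' u v
  · rw [hx, h.lift_left]
  · rw [hx, h.lift_right hB]

variable [Fintype κ]

theorem blockEnd_left (h : IsSymplecticBasis B δ a b) (M : κ → Matrix (Fin 2) (Fin 2) K) (k : κ) :
    blockEnd B δ a b M (a k) = M k 0 0 • a k + M k 0 1 • b k :=
  h.lift_left _ _ k

theorem blockEnd_right (h : IsSymplecticBasis B δ a b) (hB : B.IsAlt)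
    (M : κ → Matrix (Fin 2) (Fin 2) K) (k : κ) :
    blockEnd B δ a b M (b k) = M k 1 0 • a k + M k 1 1 • b k :=
  h.lift_right hB _ _ k

theorem blockEnd_one (h : IsSymplecticBasis B δ a b) (hB : B.IsAlt) :
    blockEnd B δ a b 1 = LinearMap.id := by
  apply h.ext_linearMap hB <;> intro k <;> simp [h.blockEnd_left, h.blockEnd_right hB]

theorem blockEnd_mul (h : IsSymplecticBasis B δ a b) (hB : B.IsAlt)
    (M N : κ → Matrix (Fin 2) (Fin 2) K) :
    blockEnd B δ a b (M * N) = blockEnd B δ a b N ∘ₗ blockEnd B δ a b M := by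
  apply h.ext_linearMap hB <;> intro k <;>
    simp only [h.blockEnd_left, h.blockEnd_right hB, LinearMap.comp_apply, map_add, map_smul,
      Pi.mul_apply, mul_apply, Fin.sum_univ_two] <;>
    module

theorem actsOnBlock_blockEnd (h : IsSymplecticBasis B δ a b) (hB : B.IsAlt)
    (N : Matrix (Fin 2) (Fin 2) K) (k : κ) :
    ActsOnBlock (blockEnd B δ a b (Pi.mulSingle k N)) N a b k where
  apply_left := by rw [h.blockEnd_left, Pi.mulSingle_eq_same]
  apply_right := by rw [h.blockEnd_right hB, Pi.mulSingle_eq_same]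
  apply_of_ne l hl := by
    rw [h.blockEnd_left, h.blockEnd_right hB, Pi.mulSingle_eq_of_ne hl]
    simp

/-- Block diagonal matrices with respect to a symplectic basis, acting on row vectors. -/
def blockHom {n : ℕ} {B : LinearMap.BilinForm K (Fin n → K)} {a b : κ → Fin n → K}
    (h : IsSymplecticBasis B δ a b) (hB : B.IsAlt) :
    (κ → SpecialLinearGroup (Fin 2) K) →* GL (Fin n) K :=
  MonoidHom.toHomUnits
    { toFun := fun M => LinearMap.toMatrixRight' (blockEnd B δ a b fun k => M k)
      map_one' := by
        rw [← LinearMap.toMatrixRight'_id, ← h.blockEnd_one hB]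
        rfl
      map_mul' := fun M N => by
        rw [← LinearMap.toMatrixRight'_comp, ← h.blockEnd_mul hB]
        rfl }

theorem toLinearMapRight'_blockHom {n : ℕ} {B : LinearMap.BilinForm K (Fin n → K)}
    {a b : κ → Fin n → K} (h : IsSymplecticBasis B δ a b) (hB : B.IsAlt)
    (M : κ → SpecialLinearGroup (Fin 2) K) :
    toLinearMapRight' (h.blockHom hB M : Matrix (Fin n) (Fin n) K) =
      blockEnd B δ a b fun k => M k :=
  LinearEquiv.symm_apply_apply _ _

theorem blockHom_mem_isometryGroup {n : ℕ} {B : LinearMap.BilinForm K (Fin n → K)}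
    {a b : κ → Fin n → K} (h : IsSymplecticBasis B δ a b) (hB : B.IsAlt)
    (M : κ → SpecialLinearGroup (Fin 2) K) :
    h.blockHom hB M ∈ isometryGroup fun u v => B u v := fun u v => by
  rw [← toLinearMapRight'_apply, ← toLinearMapRight'_apply, h.toLinearMapRight'_blockHom hB]
  exact h.lift_isometry hB hB (h.blockChange hB fun k => (M k).2) u v

end IsSymplecticBasis

end BlockActions

section HallSubgroups

theorem isPGroup_pi {κ : Type*} [Finite κ] {G : κ → Type*} [∀ k, Group (G k)] {r : ℕ}
    (hG : ∀ k, IsPGroup r (G k)) : IsPGroup r (∀ k, G k) := by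
  cases nonempty_fintype κ
  intro g
  choose e he using fun k => hG k (g k)
  refine ⟨∑ k, e k, funext fun k => ?_⟩
  obtain ⟨d, hd⟩ := pow_dvd_pow r (Finset.single_le_sum (fun _ _ => Nat.zero_le _)
    (Finset.mem_univ k) : e k ≤ ∑ k, e k)
  rw [Pi.pow_apply, hd, pow_mul, he, one_pow, Pi.one_apply]

theorem exists_conjBy_le {Γ : Type*} [Group Γ] {r : ℕ} [Fact r.Prime] {P H L : Subgroup Γ}
    (hP : IsPGroup r P) (hPL : P ≤ L) (hr : ¬ r ∣ H.relIndex L) :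
    ∃ x ∈ L, conjBy P x ≤ H := by
  let _ : MulAction P (L ⧸ H.subgroupOf L) := MulAction.compHom _ (Subgroup.inclusion hPL)
  obtain ⟨y, hy⟩ := hP.nonempty_fixed_point_of_prime_not_dvd_card (L ⧸ H.subgroupOf L) hr
  obtain ⟨x, rfl⟩ := QuotientGroup.mk_surjective y
  refine ⟨x, x.2, ?_⟩
  rintro _ ⟨g, hg, rfl⟩
  have hfix : ((Subgroup.inclusion hPL ⟨g, hg⟩ * x : L) : L ⧸ H.subgroupOf L) = x := hy ⟨g, hg⟩
  simpa [Subgroup.mem_subgroupOf, mul_assoc] using QuotientGroup.eq.1 hfix.symm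

/-- The action of a matrix group on row vectors, `h` acting as multiplication by `h⁻¹` on the
right. -/
def rowRepresentation {n : ℕ} {F : Type*} [Field F] (H : Subgroup (GL (Fin n) F)) :
    Representation F H (Fin n → F) where
  toFun h := toLinearMapRight' ((h⁻¹ : H) : GL (Fin n) F).val
  map_one' := by simp [Module.End.one_eq_id]
  map_mul' g h := by
    rw [_root_.mul_inv_rev, Subgroup.coe_mul, Units.val_mul, toLinearMapRight'_mul]
    rfl

variable {n r : ℕ} {F κ : Type*} [Field F] {B : LinearMap.BilinForm F (Fin n → F)}
  {H : Subgroup (GL (Fin n) F)}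

theorem actsBySimilitudes_rowRepresentation (hH : H ≤ similitudeGroup fun u v => B u v) :
    ∃ c : H → F, ActsBySimilitudes B (rowRepresentation H) c := by
  choose c hc using fun h : H => hH (h⁻¹).2
  exact ⟨fun h => c h, fun h x y => hc h x y⟩

theorem exists_isSymplecticBasis_actsOnBlock [Finite κ] [DecidableEq κ] [Fact r.Prime]
    {δ : F} {a b : κ → Fin n → F} (hB : B.IsAlt) (h : IsSymplecticBasis B δ a b)
    {Q : Subgroup (SpecialLinearGroup (Fin 2) F)} (hQ : IsPGroup r Q)
    (hr : ¬ r ∣ H.relIndex (similitudeGroup fun u v => B u v)) :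
    ∃ (δ' : F) (a' b' : κ → Fin n → F) (S : Subgroup H), IsSymplecticBasis B δ' a' b' ∧
      IsPGroup r S ∧ ∀ N ∈ Q, ∀ k, ∃ g ∈ S, ActsOnBlock (rowRepresentation H g) N a' b' k := by
  cases nonempty_fintype κ
  let Φ : (κ → Q) →* GL (Fin n) F := (h.blockHom hB).comp (Q.subtype.compLeft κ)
  have hΦ : Φ.range ≤ similitudeGroup fun u v => B u v := by
    rintro _ ⟨M, rfl⟩
    exact ⟨1, fun u v => by
      rw [Units.val_one, one_mul]
      exact h.blockHom_mem_isometryGroup hB _ u v⟩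
  have hP : IsPGroup r Φ.range :=
    (isPGroup_pi fun _ => hQ).of_surjective Φ.rangeRestrict Φ.rangeRestrict_surjective
  obtain ⟨x, ⟨c, hc⟩, hx⟩ := exists_conjBy_le hP hΦ hr
  have hsurj : Function.Surjective (toLinearMapRight' (x : Matrix (Fin n) (Fin n) F)) := fun v =>
    ⟨v ᵥ* (x⁻¹ : GL (Fin n) F).val, by simp⟩
  refine ⟨_, _, _, (conjBy Φ.range x).subgroupOf H, h.map c.ne_zero hc hsurj,
    (hP.map _).comap_of_injective _ H.subtype_injective, fun N hN k => ?_⟩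
  let M : κ → Q := Pi.mulSingle k ⟨N, hN⟩
  have hM : (fun l => ((M l : SpecialLinearGroup (Fin 2) F) : Matrix (Fin 2) (Fin 2) F)) =
      Pi.mulSingle k (N : Matrix (Fin 2) (Fin 2) F) := by
    ext1 l
    rcases eq_or_ne l k with rfl | hl
    · simp [M]
    · simp [M, Pi.mulSingle_eq_of_ne hl]
  have hg : x⁻¹ * (Φ M)⁻¹ * x ∈ conjBy Φ.range x :=
    ⟨_, inv_mem ⟨M, rfl⟩, by simp⟩
  refine ⟨⟨_, hx hg⟩, hg, ActsOnBlock.map ?_ (h.actsOnBlock_blockEnd hB N k)⟩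
  rw [← hM, ← h.toLinearMapRight'_blockHom hB]
  change toLinearMapRight' _ ∘ₗ _ = _
  rw [← toLinearMapRight'_mul, ← toLinearMapRight'_mul]
  exact congrArg (fun y : GL (Fin n) F => toLinearMapRight' (y : Matrix (Fin n) (Fin n) F))
    (by group : x * (x⁻¹ * (Φ M)⁻¹ * x)⁻¹ = Φ M * x)

end HallSubgroups

section QuaternionMatrices

variable {F : Type*} [Field F]

/-- The matrix of order four generating, together with `quaternionJ`, a quaternion group of order
eight. -/
def quaternionI : SpecialLinearGroup (Fin 2) F := ⟨!![0, 1; -1, 0], by simp [det_fin_two]⟩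

/-- The second generator of a quaternion subgroup of `SL₂`. -/
def quaternionJ {α β : F} (h : α * α + β * β = -1) : SpecialLinearGroup (Fin 2) F :=
  ⟨!![α, β; β, -α], by rw [det_fin_two_of]; linear_combination -h⟩

/-- An element of order three of `SL₂`, acting without fixed vectors. -/
def cubicElement : SpecialLinearGroup (Fin 2) F := ⟨!![0, 1; -1, -1], by simp [det_fin_two]⟩

theorem quaternionI_mul_self : (quaternionI : SpecialLinearGroup (Fin 2) F) * quaternionI = -1 :=
  Subtype.ext <|
    show (!![0, 1; -1, 0] * !![0, 1; -1, 0] : Matrix (Fin 2) (Fin 2) F) = -1 by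
      simp [one_fin_two]

theorem quaternionJ_mul_self {α β : F} (h : α * α + β * β = -1) :
    quaternionJ h * quaternionJ h = -1 :=
  Subtype.ext <| show (!![α, β; β, -α] * !![α, β; β, -α] : Matrix (Fin 2) (Fin 2) F) = -1 by
    simp [one_fin_two, h, add_comm (β * β), mul_comm β α]

theorem quaternionJ_mul_quaternionI {α β : F} (h : α * α + β * β = -1) :
    quaternionJ h * quaternionI = -(quaternionI * quaternionJ h) :=
  Subtype.ext <| show (!![α, β; β, -α] * !![0, 1; -1, 0] : Matrix (Fin 2) (Fin 2) F) =
      -(!![0, 1; -1, 0] * !![α, β; β, -α]) by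
    simp

theorem cubicElement_pow_three : (cubicElement : SpecialLinearGroup (Fin 2) F) ^ 3 = 1 :=
  Subtype.ext <| show (!![0, 1; -1, -1] ^ 3 : Matrix (Fin 2) (Fin 2) F) = 1 by
    simp [pow_three, one_fin_two]

theorem isPGroup_zpowers {G : Type*} [Group G] {r n : ℕ} {g : G} (hg : g ^ r ^ n = 1) :
    IsPGroup r (Subgroup.zpowers g) := by
  rintro ⟨_, m, rfl⟩
  refine ⟨n, Subtype.ext ?_⟩
  change (g ^ m) ^ r ^ n = 1
  rw [← zpow_natCast, zpow_comm, zpow_natCast, hg, _root_.one_zpow]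

theorem isPGroup_quaternion {G : Type*} [Group G] [HasDistribNeg G] {i j : G} (hi : i * i = -1)
    (hj : j * j = -1) (hji : j * i = -(i * j)) :
    IsPGroup 2 (Subgroup.zpowers j ⊔ Subgroup.zpowers i : Subgroup G) := by
  have pow_four : ∀ {g : G}, g * g = -1 → g ^ 2 ^ 2 = 1 := fun {g} hg => by
    change g ^ (2 * 2) = 1
    rw [pow_mul, pow_two g, hg, neg_one_sq]
  have conj_i : j * i * j⁻¹ = i⁻¹ := by
    rw [hji, neg_mul, mul_inv_cancel_right, eq_comm, inv_eq_iff_mul_eq_one, mul_neg, hi, neg_neg]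
  refine (isPGroup_zpowers (pow_four hj)).to_sup_of_normal_right'
    (isPGroup_zpowers (pow_four hi)) ?_
  rw [Subgroup.zpowers_le, Subgroup.mem_normalizer_iff_map_conj_eq, MonoidHom.map_zpowers]
  exact (congrArg Subgroup.zpowers conj_i).trans Subgroup.zpowers_inv

theorem exists_quaternion_subgroup [Finite F] :
    ∃ (α β : F) (h : α * α + β * β = -1) (Q : Subgroup (SpecialLinearGroup (Fin 2) F)),
      IsPGroup 2 Q ∧ quaternionI ∈ Q ∧ quaternionJ h ∈ Q := by
  obtain ⟨p, _⟩ := CharP.exists F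
  have : NeZero p := ⟨CharP.char_ne_zero_of_finite F p⟩
  obtain ⟨a, b, hab⟩ := CharP.sq_add_sq F p (-1)
  have h : (a : F) * a + b * b = -1 := by simpa [pow_two] using hab
  exact ⟨a, b, h, _, isPGroup_quaternion quaternionI_mul_self (quaternionJ_mul_self h)
    (quaternionJ_mul_quaternionI h), Subgroup.mem_sup_right (Subgroup.mem_zpowers _),
    Subgroup.mem_sup_left (Subgroup.mem_zpowers _)⟩

end QuaternionMatrices

section PlanesFromBlocks

variable {K V κ : Type*} [Field K] [AddCommGroup V] [Module K V] [DecidableEq κ]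
  {B : LinearMap.BilinForm K V} {δ α β ι ω : K} {a b : κ → V} {k : κ} {I J T : Module.End K V}
  {u w x y v : V}

theorem apply_eq_zero_of_mem_span_pair (hB : B.IsAlt) (hxy : B x y ≠ 0) (huw : B u w ≠ 0)
    (hu : u ∈ Submodule.span K {x, y}) (hw : w ∈ Submodule.span K {x, y}) (huv : B u v = 0)
    (hwv : B w v = 0) : B x v = 0 ∧ B y v = 0 := by
  have hle : Submodule.span K {x, y} ≤ LinearMap.ker (B.flip v) := by
    rw [← span_pair_eq_of_mem hB hxy huw hu hw, Submodule.span_le]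
    exact Set.pair_subset huv hwv
  exact ⟨hle (Submodule.mem_span_of_mem (by simp)), hle (Submodule.mem_span_of_mem (by simp))⟩

namespace ActsOnBlock

theorem apply_of_orthogonal [Finite κ] {N : Matrix (Fin 2) (Fin 2) K}
    (h : ActsOnBlock T N a b k) (hB : B.IsAlt) (hab : IsSymplecticBasis B δ a b)
    (hav : B (a k) v = 0) (hbv : B (b k) v = 0) : T v = v := by
  cases nonempty_fintype κ
  rw [← LinearMap.id_apply (R := K) v, ← hab.lift_self hB]
  simp only [symplecticLift, LinearMap.sum_apply, LinearMap.smul_apply, LinearMap.sub_apply,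
    LinearMap.smulRight_apply, map_sum, map_smul, map_sub]
  refine Finset.sum_congr rfl fun l _ => ?_
  rcases eq_or_ne l k with rfl | hl
  · have hva : B.flip (a l) v = 0 := hB.isRefl _ _ hav
    have hvb : B.flip (b l) v = 0 := hB.isRefl _ _ hbv
    rw [hva, hvb]
    simp only [zero_smul]
  · rw [(h.apply_of_ne l hl).1, (h.apply_of_ne l hl).2]

theorem isPlaneDiagonal [Finite κ] {N : Matrix (Fin 2) (Fin 2) K} {μ ν : K}
    (h : ActsOnBlock T N a b k) (hB : B.IsAlt) (hab : IsSymplecticBasis B δ a b)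
    (hu : u ∈ Submodule.span K {a k, b k}) (hw : w ∈ Submodule.span K {a k, b k})
    (huw : B u w ≠ 0) (hTu : T u = μ • u) (hTw : T w = ν • w) :
    IsPlaneDiagonal B T u w μ ν where
  pairing_ne_zero := huw
  apply_left := hTu
  apply_right := hTw
  apply_of_orthogonal _ hv hv' :=
    have hk := apply_eq_zero_of_mem_span_pair hB (hab.pairing_ne_zero k) huw hu hw hv hv'
    h.apply_of_orthogonal hB hab hk.1 hk.2

theorem isPlaneDiagonal_cubicElement [Finite κ]
    (h : ActsOnBlock T (cubicElement : SpecialLinearGroup (Fin 2) K) a b k)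
    (hB : B.IsAlt) (hab : IsSymplecticBasis B δ a b) (h3 : (3 : K) ≠ 0)
    (hω : ω * ω + ω + 1 = 0) :
    IsPlaneDiagonal B T (a k - ω • b k) (a k - (ω * ω) • b k) ω (ω * ω) := by
  have hTa : T (a k) = b k := by simpa [cubicElement] using h.apply_left
  have hTb : T (b k) = -a k - b k := by simpa [cubicElement, sub_eq_add_neg] using h.apply_right
  have hmem : ∀ μ : K, a k - μ • b k ∈ Submodule.span K {a k, b k} := fun μ =>
    Submodule.mem_span_pair.2 ⟨1, -μ, by module⟩
  have heigen : ∀ μ : K, μ * μ + μ + 1 = 0 → T (a k - μ • b k) = μ • (a k - μ • b k) :=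
    fun μ hμ => by
      rw [map_sub, map_smul, hTa, hTb]
      linear_combination (norm := module) hμ • b k
  refine h.isPlaneDiagonal hB hab (hmem ω) (hmem (ω * ω)) ?_ (heigen ω hω)
    (heigen (ω * ω) (by linear_combination (ω * ω - ω + 1) * hω))
  have hpair : B (a k - ω • b k) (a k - (ω * ω) • b k) = (ω - ω * ω) * δ := by
    simp only [map_sub, map_smul, LinearMap.sub_apply, LinearMap.smul_apply, hab.left_left,
      hab.left_right, hab.right_right, hab.right_left hB, smul_eq_mul, if_true]
    ring
  rw [hpair]
  exact mul_ne_zero (sub_ne_zero.2 (ne_mul_self_of_mul_self_add_self h3 hω)) hab.scale_ne_zero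

theorem exists_isQuaternionPair [Finite κ] {hαβ : α * α + β * β = -1}
    (hI : ActsOnBlock I (quaternionI : SpecialLinearGroup (Fin 2) K) a b k)
    (hJ : ActsOnBlock J (quaternionJ hαβ) a b k)
    (hB : B.IsAlt) (hab : IsSymplecticBasis B δ a b) (h2 : (2 : K) ≠ 0) (hι : ι * ι = -1) :
    ∃ u ∈ Submodule.span K {a k, b k}, ∃ w ∈ Submodule.span K {a k, b k},
      IsQuaternionPair B ι I J u w := by
  have hIa : I (a k) = b k := by simpa [quaternionI] using hI.apply_left
  have hIb : I (b k) = -a k := by simpa [quaternionI] using hI.apply_right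
  have hJa : J (a k) = α • a k + β • b k := by simpa [quaternionJ] using hJ.apply_left
  have hJb : J (b k) = β • a k - α • b k := by
    simpa [quaternionJ, sub_eq_add_neg] using hJ.apply_right
  obtain ⟨u, hu_def⟩ : ∃ u, u = a k - ι • b k := ⟨_, rfl⟩
  obtain ⟨w, hw_def⟩ : ∃ w, w = (α - ι * β) • a k + (β + ι * α) • b k := ⟨_, rfl⟩
  have hu : u ∈ Submodule.span K {a k, b k} :=
    Submodule.mem_span_pair.2 ⟨1, -ι, by rw [hu_def]; module⟩
  have hw : w ∈ Submodule.span K {a k, b k} := Submodule.mem_span_pair.2 ⟨_, _, hw_def.symm⟩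
  have hpair : B u w = 2 * δ * (β + ι * α) := by
    rw [hu_def, hw_def]
    simp only [map_add, map_sub, map_smul, LinearMap.sub_apply, LinearMap.smul_apply,
      hab.left_left, hab.left_right, hab.right_right, hab.right_left hB, smul_eq_mul, if_true]
    linear_combination -δ * β * hι
  have hunit : (β + ι * α) * (β - ι * α) = -1 := by linear_combination hαβ - α * α * hι
  have huw : B u w ≠ 0 := hpair ▸ mul_ne_zero (mul_ne_zero h2 hab.scale_ne_zero)
    (left_ne_zero_of_mul (hunit.trans_ne (neg_ne_zero.2 one_ne_zero)))
  refine ⟨u, hu, w, hw, hι, hI.isPlaneDiagonal hB hab hu hw huw ?_ ?_, ?_, ?_, fun v hv hv' => ?_⟩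
  · rw [hu_def, map_sub, map_smul, hIa, hIb]
    linear_combination (norm := module) hι • b k
  · rw [hw_def, map_add, map_smul, map_smul, hIa, hIb]
    linear_combination (norm := module) (α * hι) • b k - (β * hι) • a k
  · rw [hu_def, hw_def, map_sub, map_smul, hJa, hJb]
    module
  · rw [hu_def, hw_def, map_add, map_smul, map_smul, hJa, hJb]
    linear_combination (norm := module) hαβ • a k - (ι * hαβ) • b k
  · have hk := apply_eq_zero_of_mem_span_pair hB (hab.pairing_ne_zero k) huw hu hw hv hv'
    exact hJ.apply_of_orthogonal hB hab hk.1 hk.2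

end ActsOnBlock

end PlanesFromBlocks

section BlockPermutations

variable {K V G κ : Type*} [Field K] [AddCommGroup V] [Module K V] [Group G]
  {B : LinearMap.BilinForm K V} {ρ : Representation K G V} {c : G → K} {S : Subgroup G}
  {δ δ' α β ι ω : K} {a b a' b' : κ → V} {T I J : Module.End K V} {i j : G} {u w v : V}

/-- `T` maps each of the planes of `a k, b k` into one of these planes. -/
def PermutesBlocks (T : Module.End K V) (a b : κ → V) : Prop :=
  ∀ l, ∃ k, T (a l) ∈ Submodule.span K {a k, b k} ∧ T (b l) ∈ Submodule.span K {a k, b k}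

namespace IsPlaneDiagonal

theorem conj (hρ : ActsBySimilitudes B ρ c) (h : IsPlaneDiagonal B (ρ i) u w α β) (g : G) :
    IsPlaneDiagonal B (ρ (g * i * g⁻¹)) (ρ g u) (ρ g w) α β where
  pairing_ne_zero := by
    rw [hρ]
    exact mul_ne_zero (hρ.multiplier_ne_zero h.pairing_ne_zero g) h.pairing_ne_zero
  apply_left := by simp [map_mul, h.apply_left]
  apply_right := by simp [map_mul, h.apply_right]
  apply_of_orthogonal v hu hw := by
    have hc := hρ.multiplier_ne_zero h.pairing_ne_zero g
    have hv : ρ i (ρ g⁻¹ v) = ρ g⁻¹ v := by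
      refine h.apply_of_orthogonal _ ((mul_eq_zero.1 ?_).resolve_left hc)
        ((mul_eq_zero.1 ?_).resolve_left hc) <;>
      rwa [← hρ, ρ.self_inv_apply]
    simp [map_mul, hv]

theorem apply_eq_zero_of_fixed (h : IsPlaneDiagonal B T u w α β) {d : K}
    (hT : ∀ x y, B (T x) (T y) = d * B x y) (hα : α ≠ d) (hβ : β ≠ d) (hv : T v = v) :
    B u v = 0 ∧ B w v = 0 := by
  have hu := hT u v
  have hw := hT w v
  rw [hv, h.apply_left, map_smul, LinearMap.smul_apply, smul_eq_mul] at hu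
  rw [hv, h.apply_right, map_smul, LinearMap.smul_apply, smul_eq_mul] at hw
  exact ⟨(mul_eq_mul_right_iff.1 hu).resolve_left hα, (mul_eq_mul_right_iff.1 hw).resolve_left hβ⟩

end IsPlaneDiagonal

theorem IsQuaternionPair.conj (hρ : ActsBySimilitudes B ρ c)
    (h : IsQuaternionPair B ι (ρ i) (ρ j) u w) (g : G) :
    IsQuaternionPair B ι (ρ (g * i * g⁻¹)) (ρ (g * j * g⁻¹)) (ρ g u) (ρ g w) where
  sq_eq_neg_one := h.sq_eq_neg_one
  diagonal := h.diagonal.conj hρ g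
  apply_left := by simp [map_mul, h.apply_left]
  apply_right := by simp [map_mul, h.apply_right]
  apply_of_orthogonal v hu hw := by
    have hc := hρ.multiplier_ne_zero h.diagonal.pairing_ne_zero g
    have hv : ρ j (ρ g⁻¹ v) = ρ g⁻¹ v := by
      refine h.apply_of_orthogonal _ ((mul_eq_zero.1 ?_).resolve_left hc)
        ((mul_eq_zero.1 ?_).resolve_left hc) <;>
      rwa [← hρ, ρ.self_inv_apply]
    simp [map_mul, hv]

variable [Finite κ] [DecidableEq κ]

theorem eq_zero_of_forall_cubic_fixed (hB : B.IsAlt) (hab : IsSymplecticBasis B δ a b)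
    (hρ : ActsBySimilitudes B ρ c) (h3 : (3 : K) ≠ 0) (hω : ω * ω + ω + 1 = 0)
    (ht : ∀ k, ∃ g, ActsOnBlock (ρ g) (cubicElement : SpecialLinearGroup (Fin 2) K) a b k)
    (hv : ∀ t u w, IsPlaneDiagonal B (ρ t) u w ω (ω * ω) → ρ t v = v) : v = 0 := by
  refine hab.eq_zero_of_orthogonal v fun k => ?_
  obtain ⟨g, hg⟩ := ht k
  have hdiag := hg.isPlaneDiagonal_cubicElement hB hab h3 hω
  have hc : c g = 1 := (hdiag.mul_eq_of_similitude (hρ g)).symm.trans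
    (by linear_combination (ω - 1) * hω)
  have hω1 := ne_one_of_mul_self_add_self h3 hω
  have hω2 : ω * ω ≠ 1 := ne_one_of_mul_self_add_self h3
    (by linear_combination (ω * ω - ω + 1) * hω)
  have hzero := hdiag.apply_eq_zero_of_fixed (hρ g) (hc ▸ hω1) (hc ▸ hω2) (hv _ _ _ hdiag)
  have hmem : ∀ μ : K, a k - μ • b k ∈ Submodule.span K {a k, b k} := fun μ =>
    Submodule.mem_span_pair.2 ⟨1, -μ, by module⟩
  exact apply_eq_zero_of_mem_span_pair hB (hab.pairing_ne_zero k) hdiag.pairing_ne_zero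
    (hmem _) (hmem _) hzero.1 hzero.2

theorem exists_quaternionFrame {hαβ : α * α + β * β = -1} (hB : B.IsAlt)
    (hab : IsSymplecticBasis B δ a b) (h2 : (2 : K) ≠ 0) (hι : ι * ι = -1)
    (hI : ∀ k, ∃ g ∈ S, ActsOnBlock (ρ g) (quaternionI : SpecialLinearGroup (Fin 2) K) a b k)
    (hJ : ∀ k, ∃ g ∈ S, ActsOnBlock (ρ g) (quaternionJ hαβ) a b k) :
    ∃ F : QuaternionFrame B ρ S ι κ,
      ∀ k, Submodule.span K {F.u k, F.w k} = Submodule.span K {a k, b k} := by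
  choose i hiS hi using hI
  choose j hjS hj using hJ
  choose u hu w hw h using fun k => (hi k).exists_isQuaternionPair (hj k) hB hab h2 hι
  have huw := fun k => (h k).diagonal.pairing_ne_zero
  have hspan := fun k => span_pair_eq_of_mem hB (hab.pairing_ne_zero k) (huw k) (hu k) (hw k)
  have horth : ∀ k l, k ≠ l → PairsOrthogonal B (u k) (w k) (u l) (w l) := fun k l hkl => by
    have hblocks : PairsOrthogonal B (a k) (b k) (a l) (b l) :=
      ⟨hab.left_left k l, by rw [hab.left_right, if_neg hkl],
        by rw [hab.right_left hB, if_neg hkl], hab.right_right k l⟩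
    have hzero : ∀ x ∈ Submodule.span K {a l, b l}, B (u k) x = 0 ∧ B (w k) x = 0 := fun x hx =>
      apply_eq_zero_of_mem_span_pair hB (huw k) (hab.pairing_ne_zero k)
        (hspan k ▸ Submodule.mem_span_of_mem (by simp))
        (hspan k ▸ Submodule.mem_span_of_mem (by simp))
        (hblocks.apply_eq_zero hx).1 (hblocks.apply_eq_zero hx).2
    exact ⟨(hzero _ (hu l)).1, (hzero _ (hw l)).1, (hzero _ (hu l)).2, (hzero _ (hw l)).2⟩
  refine ⟨⟨i, j, u, w, hiS, hjS, h, horth, fun v hv => hab.eq_zero_of_orthogonal v fun k => ?_⟩,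
    hspan⟩
  exact apply_eq_zero_of_mem_span_pair hB (hab.pairing_ne_zero k) (huw k) (hu k) (hw k)
    (hv k).1 (hv k).2

theorem permutesBlocks_of_isAlgClosed [IsAlgClosed K] [Finite G] [FiniteDimensional K V]
    [Group.IsSolvable G] {hαβ : α * α + β * β = -1} (hB : B.IsAlt)
    (hab : IsSymplecticBasis B δ a b) (hab' : IsSymplecticBasis B δ' a' b') (h2 : (2 : K) ≠ 0)
    (h3 : (3 : K) ≠ 0) (hG : (Nat.card G : K) ≠ 0) (hρ : ActsBySimilitudes B ρ c)
    (hS : IsPGroup 2 S)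
    (hI : ∀ k, ∃ g ∈ S, ActsOnBlock (ρ g) (quaternionI : SpecialLinearGroup (Fin 2) K) a b k)
    (hJ : ∀ k, ∃ g ∈ S, ActsOnBlock (ρ g) (quaternionJ hαβ) a b k)
    (ht : ∀ k, ∃ g, ActsOnBlock (ρ g) (cubicElement : SpecialLinearGroup (Fin 2) K) a' b' k)
    (g : G) : PermutesBlocks (ρ g) a b := by
  obtain ⟨ι, hι⟩ := IsAlgClosed.exists_eq_mul_self (-1 : K)
  obtain ⟨ω, hω⟩ : ∃ ω : K, ω * ω + ω + 1 = 0 := by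
    have : NeZero (3 : K) := ⟨h3⟩
    obtain ⟨ω, hω⟩ := HasEnoughRootsOfUnity.exists_primitiveRoot K 3
    have hsum := hω.geom_sum_eq_zero (by norm_num)
    simp only [Finset.sum_range_succ, Finset.sum_range_zero, pow_zero, pow_one] at hsum
    exact ⟨ω, by linear_combination hsum⟩
  obtain ⟨F, hF⟩ := exists_quaternionFrame hB hab h2 hι.symm hI hJ
  intro l
  have hconj := (F.isQuaternionPair l).conj hρ g
  obtain ⟨k, hk⟩ : ∃ k, ¬ PairsOrthogonal B (F.u k) (F.w k) (ρ g (F.u l)) (ρ g (F.w l)) := by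
    by_contra! h
    exact hconj.diagonal.left_ne_zero
      (F.eq_zero_of_orthogonal _ fun k => ⟨(h k).left_left, (h k).right_left⟩)
  have hspan := (F.span_eq_or_pairsOrthogonal hB (hab.separatingLeft hB) h2 h3 hω hG hρ hS
    (fun v => eq_zero_of_forall_cubic_fixed hB hab' hρ h3 hω ht)
    (F.isQuaternionPair k) hconj).resolve_right hk
  have hmap : (Submodule.span K {a l, b l}).map (ρ g) = Submodule.span K {a k, b k} := by
    rw [← hF l, ← hF k, hspan, Submodule.map_span, Set.image_pair]
  exact ⟨k, hmap ▸ Submodule.mem_map_of_mem (Submodule.mem_span_of_mem (by simp)),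
    hmap ▸ Submodule.mem_map_of_mem (Submodule.mem_span_of_mem (by simp))⟩

end BlockPermutations

section BaseChange

open TensorProduct

variable {F V G κ : Type*} (K : Type*) [Field F] [Field K] [Algebra F K] [AddCommGroup V]
  [Module F V] [Group G]

/-- The extension of scalars of a representation. -/
def baseChangeRepresentation (ρ : Representation F G V) : Representation K G (K ⊗[F] V) :=
  (Module.End.baseChangeHom F K V : Module.End F V →* Module.End K (K ⊗[F] V)).comp ρ

variable {K} {B : LinearMap.BilinForm F V} {ρ : Representation F G V} {c : G → F}
  {S : Subgroup G} {δ δ' α β : F} {a b a' b' : κ → V} {k : κ} {T : Module.End F V} {x : V}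

theorem isAlt_baseChange (hB : B.IsAlt) : (B.baseChange K).IsAlt := by
  have hskew : B.baseChange K + (B.baseChange K).flip = 0 := by
    ext v w
    change (B v w) • (1 * 1 : K) + (B w v) • (1 * 1 : K) = 0
    rw [← hB.neg_eq, neg_smul, neg_add_cancel]
  intro x
  induction x using TensorProduct.induction_on with
  | zero => exact map_zero _
  | tmul z v => rw [LinearMap.BilinForm.baseChange_tmul, hB v, zero_smul]
  | add x y hx hy =>
    rw [map_add, map_add, LinearMap.add_apply, LinearMap.add_apply, hx, hy, zero_add, add_zero]
    exact (add_comm _ _).trans (LinearMap.congr_fun₂ hskew x y)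

theorem ActsBySimilitudes.baseChange (hρ : ActsBySimilitudes B ρ c) :
    ActsBySimilitudes (B.baseChange K) (baseChangeRepresentation K ρ)
      fun g => algebraMap F K (c g) := by
  intro g x y
  induction x using TensorProduct.induction_on with
  | zero => simp
  | add x x' hx hx' => simp only [map_add, LinearMap.add_apply, mul_add, hx, hx']
  | tmul z v =>
    induction y using TensorProduct.induction_on with
    | zero => simp
    | add y y' hy hy' => simp only [map_add, mul_add, hy, hy']
    | tmul z' v' =>
      change B (ρ g v) (ρ g v') • (z * z') = algebraMap F K (c g) * (B v v' • (z * z'))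
      rw [hρ, mul_smul, Algebra.smul_def]

theorem ActsOnBlock.baseChange {N : Matrix (Fin 2) (Fin 2) F} (h : ActsOnBlock T N a b k) :
    ActsOnBlock (T.baseChange K) (N.map (algebraMap F K)) (fun l => 1 ⊗ₜ[F] a l)
      (fun l => 1 ⊗ₜ[F] b l) k where
  apply_left := by simp [h.apply_left, tmul_add]
  apply_right := by simp [h.apply_right, tmul_add]
  apply_of_ne l hl := by simp [h.apply_of_ne l hl]

variable [Finite κ] [DecidableEq κ]

namespace IsSymplecticBasis

theorem mem_span_pair_iff (hab : IsSymplecticBasis B δ a b) (hB : B.IsAlt) :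
    x ∈ Submodule.span F {a k, b k} ↔ ∀ l ≠ k, B (a l) x = 0 ∧ B (b l) x = 0 := by
  refine ⟨fun hx l hl => ?_, fun hx => ?_⟩
  · obtain ⟨s, t, rfl⟩ := Submodule.mem_span_pair.1 hx
    simp [hab.left_left, hab.left_right, hab.right_right, hab.right_left hB, hl]
  · cases nonempty_fintype κ
    rw [← LinearMap.id_apply (R := F) x, ← hab.lift_self hB, symplecticLift, LinearMap.sum_apply,
      Finset.sum_eq_single k (fun l _ hl => ?_) (fun hk => absurd (Finset.mem_univ k) hk)]
    · exact Submodule.smul_mem _ _ (Submodule.sub_mem _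
        (Submodule.smul_mem _ _ (Submodule.mem_span_of_mem (by simp)))
        (Submodule.smul_mem _ _ (Submodule.mem_span_of_mem (by simp))))
    · have hxa : B.flip (a l) x = 0 := hB.isRefl _ _ (hx l hl).1
      have hxb : B.flip (b l) x = 0 := hB.isRefl _ _ (hx l hl).2
      simp [hxa, hxb]

theorem baseChange (hab : IsSymplecticBasis B δ a b) (hB : B.IsAlt) :
    IsSymplecticBasis (B.baseChange K) (algebraMap F K δ) (fun k => 1 ⊗ₜ[F] a k)
      (fun k => 1 ⊗ₜ[F] b k) where
  scale_ne_zero := (map_ne_zero _).2 hab.scale_ne_zero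
  left_left k l := by simp [hab.left_left]
  right_right k l := by simp [hab.right_right]
  left_right k l := by
    rcases eq_or_ne k l with rfl | hkl
    · simp [hab.left_right, Algebra.algebraMap_eq_smul_one]
    · simp [hab.left_right, hkl]
  eq_zero_of_orthogonal v hv := by
    cases nonempty_fintype κ
    have hid : symplecticLift (B.baseChange K) (algebraMap F K δ) (fun k => 1 ⊗ₜ[F] a k)
        (fun k => 1 ⊗ₜ[F] b k) (fun k => 1 ⊗ₜ[F] a k) (fun k => 1 ⊗ₜ[F] b k) =
        LinearMap.id := by
      ext x
      change symplecticLift (B.baseChange K) (algebraMap F K δ) _ _ _ _ (1 ⊗ₜ[F] x) = 1 ⊗ₜ[F] x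
      conv_rhs => rw [← LinearMap.id_apply (R := F) x, ← hab.lift_self hB]
      simp only [symplecticLift, LinearMap.sum_apply, tmul_sum]
      refine Finset.sum_congr rfl fun k _ => ?_
      have hflip : ∀ y, (B.baseChange K).flip (1 ⊗ₜ[F] y) (1 ⊗ₜ[F] x) =
          algebraMap F K (B.flip y x) := fun y => by
        simp [Algebra.algebraMap_eq_smul_one]
      simp only [LinearMap.smul_apply, LinearMap.sub_apply, LinearMap.smulRight_apply, hflip,
        ← map_inv₀, algebraMap_smul, tmul_smul, tmul_sub]
    rw [← LinearMap.id_apply (R := K) v, ← hid, symplecticLift, LinearMap.sum_apply]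
    refine Finset.sum_eq_zero fun k _ => ?_
    have hva : (B.baseChange K).flip (1 ⊗ₜ[F] a k) v = 0 :=
      (isAlt_baseChange hB).isRefl _ _ (hv k).1
    have hvb : (B.baseChange K).flip (1 ⊗ₜ[F] b k) v = 0 :=
      (isAlt_baseChange hB).isRefl _ _ (hv k).2
    simp [hva, hvb]

end IsSymplecticBasis

theorem PermutesBlocks.of_baseChange (hB : B.IsAlt) (hab : IsSymplecticBasis B δ a b)
    (h : PermutesBlocks (T.baseChange K) (fun k => 1 ⊗ₜ[F] a k) (fun k => 1 ⊗ₜ[F] b k)) :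
    PermutesBlocks T a b := by
  have descend : ∀ {k x}, (1 : K) ⊗ₜ[F] x ∈ Submodule.span K {1 ⊗ₜ[F] a k, 1 ⊗ₜ[F] b k} →
      x ∈ Submodule.span F {a k, b k} := fun {k x} hx => by
    rw [(hab.baseChange hB).mem_span_pair_iff (isAlt_baseChange hB)] at hx
    rw [hab.mem_span_pair_iff hB]
    simpa using hx
  intro l
  obtain ⟨k, ha, hb⟩ := h l
  exact ⟨k, descend ha, descend hb⟩

theorem permutesBlocks [Finite G] [FiniteDimensional F V] [Group.IsSolvable G]
    {hαβ : α * α + β * β = -1} (hB : B.IsAlt) (hab : IsSymplecticBasis B δ a b)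
    (hab' : IsSymplecticBasis B δ' a' b') (h2 : (2 : F) ≠ 0) (h3 : (3 : F) ≠ 0)
    (hG : (Nat.card G : F) ≠ 0) (hρ : ActsBySimilitudes B ρ c) (hS : IsPGroup 2 S)
    (hI : ∀ k, ∃ g ∈ S, ActsOnBlock (ρ g) (quaternionI : SpecialLinearGroup (Fin 2) F) a b k)
    (hJ : ∀ k, ∃ g ∈ S, ActsOnBlock (ρ g) (quaternionJ hαβ) a b k)
    (ht : ∀ k, ∃ g, ActsOnBlock (ρ g) (cubicElement : SpecialLinearGroup (Fin 2) F) a' b' k)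
    (g : G) : PermutesBlocks (ρ g) a b := by
  let φ := algebraMap F (AlgebraicClosure F)
  have hφ : ∀ n : ℕ, (n : F) ≠ 0 → (n : AlgebraicClosure F) ≠ 0 := fun n hn => by
    rw [← map_natCast φ]
    exact (map_ne_zero φ).2 hn
  have hαβ' : φ α * φ α + φ β * φ β = -1 := by
    rw [← map_mul, ← map_mul, ← map_add, hαβ, map_neg, map_one]
  have hIφ : (quaternionI : SpecialLinearGroup (Fin 2) F).val.map φ =
      (quaternionI : SpecialLinearGroup (Fin 2) (AlgebraicClosure F)) := by
    ext r s
    fin_cases r <;> fin_cases s <;> simp [quaternionI]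
  have hJφ : (quaternionJ hαβ).val.map φ = quaternionJ hαβ' := by
    ext r s
    fin_cases r <;> fin_cases s <;> simp [quaternionJ]
  have htφ : (cubicElement : SpecialLinearGroup (Fin 2) F).val.map φ =
      (cubicElement : SpecialLinearGroup (Fin 2) (AlgebraicClosure F)) := by
    ext r s
    fin_cases r <;> fin_cases s <;> simp [cubicElement]
  exact (permutesBlocks_of_isAlgClosed (isAlt_baseChange hB) (hab.baseChange hB)
    (hab'.baseChange hB) (mod_cast hφ 2 (mod_cast h2)) (mod_cast hφ 3 (mod_cast h3)) (hφ _ hG)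
    hρ.baseChange hS
    (fun k => (hI k).imp fun _ h => ⟨h.1, hIφ ▸ h.2.baseChange⟩)
    (fun k => (hJ k).imp fun _ h => ⟨h.1, hJφ ▸ h.2.baseChange⟩)
    (fun k => (ht k).imp fun _ h => htφ ▸ h.baseChange) g).of_baseChange hB hab

end BaseChange

theorem PermutesBlocks.swap {F V κ : Type*} [Field F] [AddCommGroup V] [Module F V]
    {T : Module.End F V} {a b : κ → V} (h : PermutesBlocks T a b) : PermutesBlocks T b a := by
  intro l
  obtain ⟨k, ha, hb⟩ := h l
  exact ⟨k, Set.pair_comm (a k) (b k) ▸ hb, Set.pair_comm (a k) (b k) ▸ ha⟩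

section Shears

variable {F V κ : Type*} [Field F] [AddCommGroup V] [Module F V] [DecidableEq κ]
  {B : LinearMap.BilinForm F V} {δ δ' c : F} {a b b' : κ → V} {T : Module.End F V}

/-- Monomial maps: `T` permutes the lines of a symplectic basis `a, b`, by one and the same
self-map `σ` of the indices on both halves of the basis. -/
structure IsMonomialOn {F V κ : Type*} [Field F] [AddCommGroup V] [Module F V]
    (T : Module.End F V) (a b : κ → V) (σ : κ → κ) (α β : κ → F) : Prop where
  apply_left : ∀ k, T (a k) = α k • a (σ k)
  apply_right : ∀ k, T (b k) = β k • b (σ k)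

namespace IsSymplecticBasis

variable [Fintype κ]

theorem shear_sum (hab : IsSymplecticBasis B δ a b) (hB : B.IsAlt) :
    IsSymplecticBasis B δ a (fun k => b k + ∑ l, a l) := by
  simpa using hab.shear hB (s := of fun _ _ => 1) rfl

theorem eq_smul_of_mem_span_shear [Nontrivial κ] (hab : IsSymplecticBasis B δ a b) (hB : B.IsAlt)
    {v : V} {i j : κ} (hi : v ∈ Submodule.span F {a i, b i})
    (hj : v ∈ Submodule.span F {a j, b j + ∑ l, a l}) : ∃ x : F, v = x • a j := by
  obtain ⟨x, y, rfl⟩ := Submodule.mem_span_pair.1 hj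
  obtain ⟨l, hlj⟩ := exists_ne j
  have hpair : ∀ r ≠ i, (if r = j then y else 0) = 0 ∧ (if r = j then x else 0) + y = 0 := by
    intro r hr
    obtain ⟨hra, hrb⟩ := (hab.mem_span_pair_iff hB).1 hi r hr
    constructor <;> refine mul_right_cancel₀ hab.scale_ne_zero ?_
    · simpa [hab.left_left, hab.left_right] using hra
    · simp only [map_add, map_smul, map_sum, hab.right_left hB, hab.right_right, smul_eq_mul,
        Finset.sum_ite_eq, Finset.mem_univ, if_true] at hrb
      split_ifs at hrb ⊢ <;> linear_combination -hrb
  suffices hy : y = 0 from ⟨x, by rw [hy, zero_smul, add_zero]⟩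
  rcases eq_or_ne j i with rfl | hji
  · simpa [hlj] using (hpair l hlj).2
  · simpa using (hpair j hji).1

theorem exists_apply_left_eq_smul [Nontrivial κ] (hab : IsSymplecticBasis B δ a b) (hB : B.IsAlt)
    (h : PermutesBlocks T a b) (hs : PermutesBlocks T a fun k => b k + ∑ l, a l) :
    ∃ (σ : κ → κ) (α : κ → F), ∀ k, T (a k) = α k • a (σ k) := by
  have hline : ∀ k, ∃ j x, T (a k) = x • a j := fun k => by
    obtain ⟨i, hi, -⟩ := h k
    obtain ⟨j, hj, -⟩ := hs k
    exact ⟨j, hab.eq_smul_of_mem_span_shear hB hi hj⟩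
  choose σ α hα using hline
  exact ⟨σ, α, hα⟩

theorem exists_isMonomialOn [Nontrivial κ] (hab : IsSymplecticBasis B δ a b) (hB : B.IsAlt)
    (hc : c ≠ 0) (hT : ∀ x y, B (T x) (T y) = c * B x y) (h : PermutesBlocks T a b)
    (hs : PermutesBlocks T a fun k => b k + ∑ l, a l)
    (hs' : PermutesBlocks T (fun k => a k + ∑ l, b l) b) :
    ∃ (σ : κ → κ) (α β : κ → F), IsMonomialOn T a b σ α β := by
  obtain ⟨σ, α, hα⟩ := hab.exists_apply_left_eq_smul hB h hs
  obtain ⟨τ, β, hβ⟩ := (hab.swap hB).exists_apply_left_eq_smul hB h.swap hs'.swap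
  have hτ : τ = σ := funext fun k => by
    by_contra hne
    have h0 : B (T (a k)) (T (b k)) = 0 := by simp [hα, hβ, hab.left_right, Ne.symm hne]
    rw [hT] at h0
    exact mul_ne_zero hc (hab.pairing_ne_zero k) h0
  exact ⟨σ, α, β, hα, hτ ▸ hβ⟩

end IsSymplecticBasis

namespace IsMonomialOn

variable {σ : κ → κ} {α β : κ → F}

theorem ite_mul_eq (h : IsMonomialOn T a b σ α β) (hab : IsSymplecticBasis B δ a b)
    (hT : ∀ x y, B (T x) (T y) = c * B x y) (k l : κ) :
    (if σ k = σ l then α k * β l else 0) = if k = l then c else 0 := by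
  have hkl := hT (a k) (b l)
  simp only [h.apply_left, h.apply_right, map_smul, LinearMap.smul_apply, hab.left_right,
    smul_eq_mul, mul_ite, mul_zero] at hkl
  refine mul_right_cancel₀ hab.scale_ne_zero ?_
  rw [ite_mul, ite_mul, zero_mul, ← hkl, mul_left_comm, mul_assoc, mul_left_comm]

theorem mul_ne_zero (h : IsMonomialOn T a b σ α β) (hab : IsSymplecticBasis B δ a b)
    (hc : c ≠ 0) (hT : ∀ x y, B (T x) (T y) = c * B x y) (k : κ) : α k * β k ≠ 0 := by
  have hk := h.ite_mul_eq hab hT k k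
  rw [if_pos rfl, if_pos rfl] at hk
  rwa [hk]

theorem injective (h : IsMonomialOn T a b σ α β) (hab : IsSymplecticBasis B δ a b)
    (hc : c ≠ 0) (hT : ∀ x y, B (T x) (T y) = c * B x y) : Function.Injective σ := by
  intro k l hkl
  by_contra hne
  have h0 := h.ite_mul_eq hab hT k l
  rw [if_pos hkl, if_neg hne] at h0
  exact (_root_.mul_ne_zero (left_ne_zero_of_mul (h.mul_ne_zero hab hc hT k))
    (right_ne_zero_of_mul (h.mul_ne_zero hab hc hT l))) h0

variable [Fintype κ]

theorem left_eq_right (h : IsMonomialOn T a b σ α β) (hB : B.IsAlt)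
    (hab : IsSymplecticBasis B δ a b) (hc : c ≠ 0) (hT : ∀ x y, B (T x) (T y) = c * B x y)
    (hs : PermutesBlocks T a fun k => b k + ∑ l, a l) {k l : κ} (hlk : l ≠ k) : α l = β k := by
  have hσ := h.injective hab hc hT
  have hβ := right_ne_zero_of_mul (h.mul_ne_zero hab hc hT k)
  obtain ⟨j, -, hj⟩ := hs k
  obtain ⟨x, y, hxy⟩ := Submodule.mem_span_pair.1 hj
  simp only [map_add, map_sum, h.apply_left, h.apply_right] at hxy
  have hjk : j = σ k ∧ y = β k := by
    have hpair := congrArg (B (a (σ k))) hxy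
    simp only [map_add, map_sum, map_smul, hab.left_left, hab.left_right, smul_eq_mul, mul_zero,
      Finset.sum_const_zero, zero_add, add_zero, if_true] at hpair
    split_ifs at hpair with hjk
    · exact ⟨hjk.symm, mul_right_cancel₀ hab.scale_ne_zero hpair⟩
    · simp [hβ, hab.scale_ne_zero] at hpair
  obtain ⟨rfl, rfl⟩ := hjk
  have hpair := congrArg (B (b (σ l))) hxy
  simp [hab.right_left hB, hab.right_right, hσ.eq_iff, hlk, hab.scale_ne_zero] at hpair
  exact hpair.symm

end IsMonomialOn

theorem eq_id_and_forall_eq_of_flag {κ F : Type*} [Finite κ] [LinearOrder κ] [Zero F] {σ : κ → κ}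
    {α : κ → F} (hα : ∀ k, α k ≠ 0)
    (hflag : ∀ k, ∃ j x, ∀ l, (if l ≤ k then α l else 0) = if σ l ≤ j then x else 0)
    (hσ : Function.Injective σ) : σ = id ∧ ∀ i k, α i = α k := by
  choose j x hx using hflag
  have hle : ∀ {l k}, l ≤ k → σ l ≤ j k ∧ α l = x k := fun {l k} hlk => by
    have hl := hx k l
    rw [if_pos hlk] at hl
    split_ifs at hl with hj
    · exact ⟨hj, hl⟩
    · exact absurd hl (hα l)
  have hge : ∀ {l k}, σ l ≤ j k → l ≤ k := fun {l k} hlj => by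
    by_contra hlk
    have hl := hx k l
    rw [if_neg hlk, if_pos hlj, ← (hle le_rfl).2] at hl
    exact hα k hl.symm
  have hmono : StrictMono σ := Monotone.strictMono_of_injective
    (fun l k hlk => le_of_not_gt fun hkl => hkl.ne <| congrArg σ <|
      (hge (hkl.le.trans (hle le_rfl).1)).antisymm hlk) hσ
  exact ⟨funext fun k => hmono.apply_le.antisymm hmono.le_apply, fun i k =>
    (hle (le_max_left i k)).2.trans (hle (le_max_right i k)).2.symm⟩

section LinearOrder

variable {κ : Type*} [Fintype κ] [LinearOrder κ] {a b b' : κ → V} {σ : κ → κ} {α β : κ → F}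

theorem IsMonomialOn.exists_flag (h : IsMonomialOn T a b σ α β)
    (hB : B.IsAlt) (hab : IsSymplecticBasis B δ a b)
    (hab' : IsSymplecticBasis B δ' (fun k => ∑ l with l ≤ k, a l) b')
    (hσ : Function.Injective σ)
    (hP : PermutesBlocks T (fun k => ∑ l with l ≤ k, a l) b') (k : κ) :
    ∃ j x, ∀ l, (if l ≤ k then α l else 0) = if σ l ≤ j then x else 0 := by
  obtain ⟨j, hj, -⟩ := hP k
  obtain ⟨x, y, hxy⟩ := Submodule.mem_span_pair.1 hj
  have hy : y = 0 := by
    have hpair : B (∑ l with l ≤ j, a l) (T (∑ l with l ≤ k, a l)) = 0 := by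
      simp [h.apply_left, hab.left_left]
    rw [← hxy, map_add, map_smul, map_smul, hab'.left_left, hab'.left_right, if_pos rfl,
      smul_zero, zero_add, smul_eq_mul] at hpair
    exact (mul_eq_zero.1 hpair).resolve_right hab'.scale_ne_zero
  refine ⟨j, x, fun l => ?_⟩
  have hpair := congrArg (B (b (σ l))) hxy
  simp only [hy, zero_smul, add_zero, map_smul, map_sum, hab.right_left hB, h.apply_left,
    hσ.eq_iff, smul_eq_mul, mul_ite, mul_zero, Finset.sum_ite_eq, Finset.mem_filter,
    Finset.mem_univ, true_and] at hpair
  refine mul_right_cancel₀ hab.scale_ne_zero ?_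
  split_ifs at hpair ⊢ <;> linear_combination hpair

theorem exists_eq_smul_id_of_permutesBlocks [Nontrivial κ] (hB : B.IsAlt)
    (hab : IsSymplecticBasis B δ a b)
    (hab' : IsSymplecticBasis B δ' (fun k => ∑ l with l ≤ k, a l) b') (hc : c ≠ 0)
    (hT : ∀ x y, B (T x) (T y) = c * B x y) (h : PermutesBlocks T a b)
    (hs : PermutesBlocks T a fun k => b k + ∑ l, a l)
    (hs' : PermutesBlocks T (fun k => a k + ∑ l, b l) b)
    (hP : PermutesBlocks T (fun k => ∑ l with l ≤ k, a l) b') :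
    ∃ z : F, T = z • LinearMap.id := by
  obtain ⟨σ, α, β, hm⟩ := hab.exists_isMonomialOn hB hc hT h hs hs'
  have hσ := hm.injective hab hc hT
  have hα : ∀ k, α k ≠ 0 := fun k => left_ne_zero_of_mul (hm.mul_ne_zero hab hc hT k)
  obtain ⟨rfl, hconst⟩ := eq_id_and_forall_eq_of_flag hα (hm.exists_flag hB hab hab' hσ hP) hσ
  obtain ⟨i, -⟩ := exists_pair_ne κ
  refine ⟨α i, hab.ext_linearMap hB (fun k => ?_) fun k => ?_⟩
  · rw [hm.apply_left, hconst k i, id, LinearMap.smul_apply, LinearMap.id_apply]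
  · obtain ⟨l, hlk⟩ := exists_ne k
    rw [hm.apply_right, ← hm.left_eq_right hB hab hc hT hs hlk, hconst l i, id,
      LinearMap.smul_apply, LinearMap.id_apply]

end LinearOrder

end Shears

section Intersection

theorem IsSymplecticBasis.exists_partialSums {F V κ : Type*} [Field F] [AddCommGroup V] [Module F V]
    [Fintype κ] [LinearOrder κ] {B : LinearMap.BilinForm F V} {δ : F} {a b : κ → V}
    (hab : IsSymplecticBasis B δ a b) :
    ∃ b' : κ → V, IsSymplecticBasis B δ (fun k => ∑ l with l ≤ k, a l) b' := by
  let P : Matrix κ κ F := of fun k l => if l ≤ k then 1 else 0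
  have hdet : P.det = 1 := by
    have hlower : P.IsLowerTriangular := fun k l hkl => if_neg (not_le.2 hkl)
    simp [det_of_isLowerTriangular P hlower, P]
  have hP : P * (P⁻¹ᵀ)ᵀ = 1 := by
    rw [transpose_transpose, mul_nonsing_inv P (by simp [hdet])]
  exact ⟨_, by simpa [P, Finset.sum_filter] using hab.linearChange hP⟩

variable {n : ℕ} {F κ : Type*} [Field F] {B : LinearMap.BilinForm F (Fin n → F)}
  {H : Subgroup (GL (Fin n) F)} {a b a' b' : κ → Fin n → F} {x g : GL (Fin n) F}

theorem permutesBlocks_of_mem_conjBy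
    (hH : ∀ h ∈ H, PermutesBlocks (toLinearMapRight' (h : Matrix (Fin n) (Fin n) F)) a b)
    (hx : ∀ k, a k ᵥ* (x : Matrix (Fin n) (Fin n) F) = a' k ∧
      b k ᵥ* (x : Matrix (Fin n) (Fin n) F) = b' k) (hg : g ∈ conjBy H x) :
    PermutesBlocks (toLinearMapRight' (g : Matrix (Fin n) (Fin n) F)) a' b' := by
  obtain ⟨h, hh, rfl⟩ := hg
  let X := toLinearMapRight' (x : Matrix (Fin n) (Fin n) F)
  have hconj : ∀ v, toLinearMapRight' ((MulAut.conj x⁻¹).toMonoidHom h).val (X v) =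
      X (toLinearMapRight' h.val v) := fun v => by
    have hX : v ᵥ* x.val ᵥ* x⁻¹.val = v := by rw [vecMul_vecMul, Units.mul_inv, vecMul_one]
    change v ᵥ* x.val ᵥ* ((MulAut.conj x⁻¹).toMonoidHom h).val = v ᵥ* h.val ᵥ* x.val
    rw [MulEquiv.coe_toMonoidHom, MulAut.conj_apply, inv_inv, Units.val_mul, Units.val_mul,
      ← vecMul_vecMul, ← vecMul_vecMul, hX]
  have ha : ∀ k, X (a k) = a' k := fun k => (hx k).1
  have hb : ∀ k, X (b k) = b' k := fun k => (hx k).2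
  intro l
  obtain ⟨k, hak, hbk⟩ := hH h hh l
  refine ⟨k, ?_⟩
  rw [← ha, ← hb, ← ha, ← hb, hconj, hconj, ← Set.image_pair, ← Submodule.map_span]
  exact ⟨Submodule.mem_map_of_mem hak, Submodule.mem_map_of_mem hbk⟩

theorem natCast_ne_zero_of_actsOnBlock {G V : Type*} [Group G] [AddCommGroup V] [Module F V]
    [DecidableEq κ] {B : LinearMap.BilinForm F V} {ρ : Representation F G V} {δ : F}
    {a b : κ → V} {k : κ} {r : ℕ} [Fact r.Prime] {S : Subgroup G} {s : G}
    {N : Matrix (Fin 2) (Fin 2) F} (hG : (Nat.card G : F) ≠ 0) (hab : IsSymplecticBasis B δ a b)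
    (hS : IsPGroup r S) (hs : s ∈ S) (hN : ActsOnBlock (ρ s) N a b k) (hN0 : N 0 0 = 0) :
    (r : F) ≠ 0 := by
  have hs1 : s ≠ 1 := by
    rintro rfl
    have ha := congrArg (fun v => B v (b k)) hN.apply_left
    simp [hN0, hab.right_right, hab.pairing_ne_zero] at ha
  have hcard : Nat.card S ≠ 1 := fun h1 => hs1 <| by
    rwa [Subgroup.card_eq_one.1 h1, Subgroup.mem_bot] at hs
  obtain ⟨t, ht⟩ := (hS.card_eq_or_dvd.resolve_left hcard).trans S.card_subgroup_dvd_card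
  rw [ht, Nat.cast_mul] at hG
  exact left_ne_zero_of_mul hG

theorem exists_permutesBlocks [Finite F] [Group.IsSolvable H] (hn : 2 < n) (hB : B.IsAlt)
    (hs : B.SeparatingLeft) (hH : H ≤ similitudeGroup fun u v => B u v)
    (h2 : ¬ 2 ∣ H.relIndex (similitudeGroup fun u v => B u v))
    (h3 : ¬ 3 ∣ H.relIndex (similitudeGroup fun u v => B u v)) (hcard : (Nat.card H : F) ≠ 0) :
    ∃ (m : ℕ) (δ : F) (a b : Fin m → Fin n → F), 1 < m ∧ IsSymplecticBasis B δ a b ∧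
      ∀ h ∈ H, PermutesBlocks (toLinearMapRight' (h : Matrix (Fin n) (Fin n) F)) a b := by
  obtain ⟨m, a₀, b₀, h₀⟩ := exists_isSymplecticBasis hB hs
  have hm : 1 < m := by
    have := h₀.finrank_le hB
    rw [Module.finrank_fin_fun, Fintype.card_fin] at this
    lia
  obtain ⟨α, β, hαβ, Q, hQ, hI, hJ⟩ := exists_quaternion_subgroup (F := F)
  obtain ⟨δ, a, b, S, hab, hS, hSQ⟩ := exists_isSymplecticBasis_actsOnBlock hB h₀ hQ h2
  obtain ⟨δ', a', b', S', hab', hS', hS'Q⟩ := exists_isSymplecticBasis_actsOnBlock hB h₀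
    (isPGroup_zpowers (r := 3) (n := 1) (cubicElement_pow_three (F := F))) h3
  obtain ⟨c, hc⟩ := actsBySimilitudes_rowRepresentation hH
  have h2F : (2 : F) ≠ 0 := by
    obtain ⟨s, hs, hsI⟩ := hSQ _ hI ⟨0, by lia⟩
    exact mod_cast natCast_ne_zero_of_actsOnBlock hcard hab hS hs hsI (by simp [quaternionI])
  have h3F : (3 : F) ≠ 0 := by
    obtain ⟨s, hs, hst⟩ := hS'Q _ (Subgroup.mem_zpowers _) ⟨0, by lia⟩
    exact mod_cast natCast_ne_zero_of_actsOnBlock hcard hab' hS' hs hst (by simp [cubicElement])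
  refine ⟨m, δ, a, b, hm, hab, fun h hh => ?_⟩
  have hperm := permutesBlocks hB hab hab' h2F h3F hcard hc hS (hSQ _ hI) (hSQ _ hJ)
    (fun k => (hS'Q _ (Subgroup.mem_zpowers _) k).imp fun _ hg => hg.2) (⟨h, hh⟩⁻¹ : H)
  simpa [rowRepresentation] using hperm

end Intersection

theorem natCast_ne_zero_of_not_dvd {F : Type*} [Field F] [Fintype F] {p f n : ℕ} (hp : p.Prime)
    (hF : Fintype.card F = p ^ f) (hn : ¬ p ∣ n) : (n : F) ≠ 0 := by
  have : Fact p.Prime := ⟨hp⟩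
  have : CharP F p := charP_of_card_eq_prime_pow hF
  exact mt (CharP.cast_eq_zero_iff F p n).1 hn

theorem stmt11_general {n : ℕ} {F : Type*} [Field F] [Finite F]
    {B : LinearMap.BilinForm F (Fin n → F)} {H : Subgroup (GL (Fin n) F)} (hn : 2 < n)
    (hB : B.IsAlt) (hs : B.SeparatingLeft) (hsolv : Group.IsSolvable H)
    (hH : H ≤ similitudeGroup fun u v => B u v)
    (h2 : ¬ 2 ∣ H.relIndex (similitudeGroup fun u v => B u v))
    (h3 : ¬ 3 ∣ H.relIndex (similitudeGroup fun u v => B u v)) (hcard : (Nat.card H : F) ≠ 0) :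
    ∃ x ∈ isometryGroup fun u v => B u v, ∃ y ∈ isometryGroup fun u v => B u v,
      ∃ z ∈ isometryGroup fun u v => B u v,
        ∀ g ∈ H ⊓ conjBy H x ⊓ conjBy H y ⊓ conjBy H z,
          ∃ c : F, (g : Matrix (Fin n) (Fin n) F) = c • (1 : Matrix (Fin n) (Fin n) F) := by
  obtain ⟨m, δ, a, b, hm, hab, hperm⟩ := exists_permutesBlocks hn hB hs hH h2 h3 hcard
  have : Nontrivial (Fin m) := Fin.nontrivial_iff_two_le.2 hm
  obtain ⟨b', hab'⟩ := hab.exists_partialSums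
  obtain ⟨x, hx, hxab⟩ := hab.exists_mem_isometryGroup hB (hab.shear_sum hB)
  obtain ⟨y, hy, hyab⟩ := (hab.swap hB).exists_mem_isometryGroup hB ((hab.swap hB).shear_sum hB)
  obtain ⟨z, hz, hzab⟩ := hab.exists_mem_isometryGroup hB hab'
  refine ⟨x, hx, y, hy, z, hz, fun g hg => ?_⟩
  obtain ⟨⟨⟨hgH, hgx⟩, hgy⟩, hgz⟩ := hg
  obtain ⟨c, hc⟩ := hH hgH
  obtain ⟨d, hd⟩ := exists_eq_smul_id_of_permutesBlocks hB hab hab' c.ne_zero hc (hperm g hgH)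
    (permutesBlocks_of_mem_conjBy hperm hxab hgx)
    (permutesBlocks_of_mem_conjBy hperm (fun k => (hyab k).symm) hgy)
    (permutesBlocks_of_mem_conjBy hperm hzab hgz)
  exact ⟨d, ext_of_single_vecMul fun i => by
    simpa [vecMul_smul] using LinearMap.congr_fun hd (Pi.single i 1)⟩

theorem stmt11 (p f q m : ℕ) (hp : p.Prime) (hf : 1 ≤ f) (hq : q = p ^ f)
    (F : Type) [Field F] [Fintype F] (hcard : Fintype.card F = q)
    (hm : 4 ≤ 2 * m)
    (B : LinearMap.BilinForm F (Fin (2 * m) → F))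
    (halt : ∀ v : Fin (2 * m) → F, B v v = 0) (hnd : B.SeparatingLeft)
    (hnonsolv : ¬ IsSolvable ↥(similitudeGroup (fun u v => B u v)))
    (π : Set ℕ) (hπ : ∀ r ∈ π, r.Prime) (h2pi : 2 ∈ π) (h3pi : 3 ∈ π) (hppi : p ∉ π)
    (H : Subgroup (GL (Fin (2 * m)) F))
    (hH : IsHallSubgroupIn π (similitudeGroup (fun u v => B u v)) H)
    (hsolv : IsSolvable ↥H)
    :
    ∃ x y z : GL (Fin (2 * m)) F,
      x ∈ (H : Set (GL (Fin (2 * m)) F)) * (isometryGroup (fun u v => B u v) : Set (GL (Fin (2 * m)) F)) ∧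
      y ∈ (H : Set (GL (Fin (2 * m)) F)) * (isometryGroup (fun u v => B u v) : Set (GL (Fin (2 * m)) F)) ∧
      z ∈ (H : Set (GL (Fin (2 * m)) F)) * (isometryGroup (fun u v => B u v) : Set (GL (Fin (2 * m)) F)) ∧
    ∀ g ∈ H ⊓ conjBy H x ⊓ conjBy H y ⊓ conjBy H z,
      ∃ c : F, (g : Matrix (Fin (2 * m)) (Fin (2 * m)) F) = c • (1 : Matrix (Fin (2 * m)) (Fin (2 * m)) F) := by
  obtain ⟨hHK, hHπ, hindex⟩ := hH
  have hpH : ¬ p ∣ Nat.card H := fun h => hppi (hHπ p hp h)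
  obtain ⟨x, hx, y, hy, z, hz, hxyz⟩ := stmt11_general (by lia) halt hnd hsolv hHK
    (hindex 2 h2pi) (hindex 3 h3pi) (natCast_ne_zero_of_not_dvd hp (hcard.trans hq) hpH)
  exact ⟨x, y, z, ⟨1, one_mem H, x, hx, one_mul x⟩, ⟨1, one_mem H, y, hy, one_mul y⟩,
    ⟨1, one_mem H, z, hz, one_mul z⟩, hxyz⟩
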